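/- (Divergence case of the S-arithmetic Khintchine–Groshev theorem with congruence conditions) Assume d = m + n ≥ 2. Let ψ = (ψ_p)_{p∈S} be a collection of approximating functions, fix N ∈ ℕ_S and a pair (v_m, v_n) ∈ ℤ_S^m × ℤ_S^n. If ∫_{ℚ_S^n} ∏_{p∈S} ψ_p(‖y‖_p^n) dy = ∞, then for almost every A = (A_p)_{p∈S} ∈ Mat_{m,n}(ℚ_S) (with respect to Haar measure) there are infinitely many pairs (p⃗, q⃗) ∈ ℤ_S^m × ℤ_S^n with (p⃗, q⃗) ≡ (v_m, v_n) mod N satisfying ‖A_p q⃗ + p⃗‖_p^m ≤ ψ_p(‖q⃗‖_p^n) for all p ∈ S. -/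

import Mathlib

open MeasureTheory Matrix

noncomputable section

/-- `z` belongs to the ring of `S`-integers `ℤ_S = ℤ[1/P]`,
where `P` is the product of the finite primes in `S`. -/
def IsZS (P : ℕ) (z : ℚ) : Prop := ∃ (a : ℤ) (k : ℕ), z = (a : ℚ) / (P : ℚ) ^ k

/-- A collection of approximating functions `ψ = (ψ_p)_{p ∈ S}`:
each `ψ_p : ℝ_{>0} → ℝ_{>0}` is non-increasing and `≡ 1` on `(0,1]`
(we extend by `1` on `t ≤ 1`); moreover for each finite place `p`,
`ψ_p` is constant on `{p^{kn}, …, p^{kn+n-1}}` for every `k ∈ ℤ` and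
takes values in `p^{mℤ}` on `p^ℤ`. -/
structure ApproxFamily (m n s : ℕ) (p : Fin s → ℕ) : Type where
  psiR : ℝ → ℝ
  psiP : Fin s → ℝ → ℝ
  posR : ∀ t, 0 < psiR t
  antiR : ∀ ⦃t₁ t₂ : ℝ⦄, 0 < t₁ → t₁ ≤ t₂ → psiR t₂ ≤ psiR t₁
  oneR : ∀ ⦃t : ℝ⦄, t ≤ 1 → psiR t = 1
  posP : ∀ i t, 0 < psiP i t
  antiP : ∀ i ⦃t₁ t₂ : ℝ⦄, 0 < t₁ → t₁ ≤ t₂ → psiP i t₂ ≤ psiP i t₁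
  oneP : ∀ i ⦃t : ℝ⦄, t ≤ 1 → psiP i t = 1
  constP : ∀ i (k : ℤ) (j : ℕ), j < n →
    psiP i ((p i : ℝ) ^ (k * n + j : ℤ)) = psiP i ((p i : ℝ) ^ (k * n : ℤ))
  valsP : ∀ i (k : ℤ), ∃ l : ℤ, psiP i ((p i : ℝ) ^ k) = (p i : ℝ) ^ (m * l : ℤ)

/-- The real components of the diagonal embedding of a rational vector. -/
def ratR {k : ℕ} (q : Fin k → ℚ) : Fin k → ℝ := fun j => (q j : ℝ)

/-- The `p i`-adic components of the diagonal embedding of a rational vector. -/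
def ratP {s : ℕ} (p : Fin s → ℕ) [∀ i, Fact (p i).Prime] {k : ℕ} (i : Fin s)
    (q : Fin k → ℚ) : Fin k → ℚ_[p i] := fun j => (q j : ℚ_[p i])

/-- The region `E_f(T) ⊆ ℚ_S^m × ℚ_S^n` cut out by `‖x‖_p^m ≤ f_p(‖y‖_p^n)` and
`‖y‖_p^n ≤ T_p` for all `p ∈ S` (product coordinates). -/
def Eprod (m n : ℕ) {s : ℕ} (p : Fin s → ℕ) [∀ i, Fact (p i).Prime]
    (fR : ℝ → ℝ) (fP : Fin s → ℝ → ℝ) (TR : ℝ) (TP : Fin s → ℝ) :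
    Set (((Fin m → ℝ) × ∀ i, Fin m → ℚ_[p i]) × ((Fin n → ℝ) × ∀ i, Fin n → ℚ_[p i])) :=
  {xy | ‖xy.1.1‖ ^ m ≤ fR (‖xy.2.1‖ ^ n) ∧ ‖xy.2.1‖ ^ n ≤ TR ∧
      ∀ i, ‖xy.1.2 i‖ ^ m ≤ fP i (‖xy.2.2 i‖ ^ n) ∧ ‖xy.2.2 i‖ ^ n ≤ TP i}

/-- The region `E_f(T) ⊆ ℚ_S^{m+n}`, where the first `m` coordinates play the role of
`x` and the last `n` coordinates the role of `y`. -/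
def Efull (m n : ℕ) {s : ℕ} (p : Fin s → ℕ) [∀ i, Fact (p i).Prime]
    (fR : ℝ → ℝ) (fP : Fin s → ℝ → ℝ) (TR : ℝ) (TP : Fin s → ℝ) :
    Set ((Fin (m + n) → ℝ) × ∀ i, Fin (m + n) → ℚ_[p i]) :=
  {v | ‖fun a : Fin m => v.1 (Fin.castAdd n a)‖ ^ m
        ≤ fR (‖fun b : Fin n => v.1 (Fin.natAdd m b)‖ ^ n) ∧
      ‖fun b : Fin n => v.1 (Fin.natAdd m b)‖ ^ n ≤ TR ∧
      ∀ i, ‖fun a : Fin m => v.2 i (Fin.castAdd n a)‖ ^ m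
            ≤ fP i (‖fun b : Fin n => v.2 i (Fin.natAdd m b)‖ ^ n) ∧
          ‖fun b : Fin n => v.2 i (Fin.natAdd m b)‖ ^ n ≤ TP i}

/-- The operator norm of a real matrix acting on sup-normed spaces. -/
def opNorm {k l : ℕ} (M : Matrix (Fin k) (Fin l) ℝ) : ℝ :=
  ‖LinearMap.toContinuousLinearMap M.mulVecLin‖

/-- An element of the group `𝐇 = ∏_{p ∈ S} H_p` of block lower-triangular matrices,
given by its blocks at each place. -/
structure HElem (m n : ℕ) (s : ℕ) (p : Fin s → ℕ) [∀ i, Fact (p i).Prime] : Type where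
  aR : Matrix (Fin m) (Fin m) ℝ
  bR : Matrix (Fin n) (Fin m) ℝ
  cR : Matrix (Fin n) (Fin n) ℝ
  aP : ∀ i, Matrix (Fin m) (Fin m) ℚ_[p i]
  bP : ∀ i, Matrix (Fin n) (Fin m) ℚ_[p i]
  cP : ∀ i, Matrix (Fin n) (Fin n) ℚ_[p i]

/-- The action of an element of `𝐇` on `ℚ_S^m × ℚ_S^n`:
`h·(x, y) = (α x, β x + γ y)` at each place. -/
def HElem.act {m n s : ℕ} {p : Fin s → ℕ} [∀ i, Fact (p i).Prime] (h : HElem m n s p)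
    (xy : ((Fin m → ℝ) × ∀ i, Fin m → ℚ_[p i]) × ((Fin n → ℝ) × ∀ i, Fin n → ℚ_[p i])) :
    ((Fin m → ℝ) × ∀ i, Fin m → ℚ_[p i]) × ((Fin n → ℝ) × ∀ i, Fin n → ℚ_[p i]) :=
  ((h.aR.mulVec xy.1.1, fun i => (h.aP i).mulVec (xy.1.2 i)),
   (h.bR.mulVec xy.1.1 + h.cR.mulVec xy.2.1,
    fun i => (h.bP i).mulVec (xy.1.2 i) + (h.cP i).mulVec (xy.2.2 i)))

/-- Membership in `H̃_{∞,ε}`: operator norm bounds on the blocks. -/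
def inHtilde (m n : ℕ) (ε : ℝ) (α : Matrix (Fin m) (Fin m) ℝ) (β : Matrix (Fin n) (Fin m) ℝ)
    (γ : Matrix (Fin n) (Fin n) ℝ) : Prop :=
  opNorm α ^ m ≤ 1 + ε ∧ opNorm γ ^ n ≤ 1 + ε / 2 ∧ opNorm β ≤ ε / (4 * n)

/-- `h ∈ (H̃_{∞,ε} ∩ H̃_{∞,ε}⁻¹) × ∏_{p ∈ S_f} H_p(ℤ_p)`. -/
def HElem.isAdmissible {m n s : ℕ} {p : Fin s → ℕ} [∀ i, Fact (p i).Prime]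
    (h : HElem m n s p) (ε : ℝ) : Prop :=
  IsUnit h.aR.det ∧ IsUnit h.cR.det ∧
  inHtilde m n ε h.aR h.bR h.cR ∧
  inHtilde m n ε h.aR⁻¹ (-(h.cR⁻¹ * h.bR * h.aR⁻¹)) h.cR⁻¹ ∧
  ∀ i, ((∀ a b, ‖h.aP i a b‖ ≤ 1) ∧ ‖(h.aP i).det‖ = 1) ∧
      ((∀ a b, ‖h.cP i a b‖ ≤ 1) ∧ ‖(h.cP i).det‖ = 1) ∧
      (∀ a b, ‖h.bP i a b‖ ≤ 1)

end

/-! If the integral of the product over all places diverges, the integral of `ψ_p` diverges at some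
place `p`. Solutions of the inequality at `p` whose forms `A q + P` and vectors `q` are bounded by
`1` at every other place satisfy the inequalities there for free, since `ψ = 1` on `(-∞, 1]`. If
`A` is integral at all finite places other than `p`, it suffices at those places that `P` and `q`
are integral; the general `A` reduces to this one, because `Mat(ℤ_S)` is dense in
`∏_{p ∈ S_f} Mat(ℚ_p)` and replacing `A` by `A - B` with `B` in `Mat(ℤ_S)` only shears the pairs
`(P, q)`. So pairs in `ℤ^{m+n}` are used when `p = ∞`, and pairs in `ℤ[1/p]^{m+n}` with bounded real
forms when `p` is finite.

At the single place, the zeros of the forms `A q + P` are ubiquitous: off a set of small measure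
the lattice of renormalized forms has no short vector, hence by counting it is generated by vectors
of bounded length, so that every translate of it, and every congruence class, has a vector near any
given point. Along a column of `A` the zeros become balls of the fibre, and quasi-independence of
their unions gives a limsup set of measure bounded below in every fibre. A set of positive measure
that misses this limsup set and is almost invariant under small translations would contradict this
bound. -/

section QuasiIndependence

open Set Filter Topology

variable {α : Type*} [MeasurableSpace α] {μ : Measure α}

theorem sum_measureReal_le_measureReal_biUnion_add_sum_inter {ι : Type*} [LinearOrder ι]
    {E : ι → Set α} (hE : ∀ k, MeasurableSet (E k)) (hfin : ∀ k, μ (E k) ≠ ⊤) (F : Finset ι) :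
    ∑ k ∈ F, μ.real (E k) ≤
      μ.real (⋃ k ∈ F, E k) + ∑ l ∈ F, ∑ k ∈ F with k < l, μ.real (E k ∩ E l) := by
  induction F using Finset.induction_on_max with
  | empty => simp
  | insert a s ha ih =>
    have has : a ∉ s := fun h => lt_irrefl _ (ha a h)
    have union_add_inter := measureReal_union_add_inter (μ := μ) (s := E a)
      (s.measurableSet_biUnion fun k _ => hE k) (hfin a)
      (measure_biUnion_lt_top s.finite_toSet fun k _ => (hfin k).lt_top).ne
    have inter_le : μ.real (E a ∩ ⋃ k ∈ s, E k) ≤ ∑ k ∈ s, μ.real (E k ∩ E a) := by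
      rw [inter_iUnion₂]
      simp only [inter_comm (E a)]
      exact measureReal_biUnion_finset_le _ _
    have filter_lt_max : {k ∈ insert a s | k < a} = s := by
      rw [Finset.filter_insert, if_neg (lt_irrefl a), Finset.filter_true_of_mem ha]
    have overlap_eq : ∑ l ∈ s, ∑ k ∈ insert a s with k < l, μ.real (E k ∩ E l) =
        ∑ l ∈ s, ∑ k ∈ s with k < l, μ.real (E k ∩ E l) := Finset.sum_congr rfl fun l hl => by
      rw [Finset.filter_insert, if_neg (ha l hl).not_gt]
    rw [Finset.sum_insert has, Finset.sum_insert has, Finset.set_biUnion_insert, filter_lt_max,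
      overlap_eq]
    linarith

theorem exists_finset_sum_between {u : ℕ → ℝ} {s : ℝ} (hu : ∀ k, 0 ≤ u k) (hus : ∀ k, u k ≤ s)
    (hdiv : ¬ Summable u) (n : ℕ) :
    ∃ F : Finset ℕ, (∀ k ∈ F, n ≤ k) ∧ s ≤ ∑ k ∈ F, u k ∧ ∑ k ∈ F, u k ≤ 2 * s := by
  have htop : Tendsto (fun N => ∑ k ∈ Finset.range N, u (k + n)) atTop atTop :=
    (not_summable_iff_tendsto_nat_atTop_of_nonneg fun k => hu (k + n)).1
      (by rwa [summable_nat_add_iff])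
  have hex : ∃ N, s ≤ ∑ k ∈ Finset.range (N + 1), u (k + n) :=
    ((tendsto_add_atTop_iff_nat 1).2 htop |>.eventually_ge_atTop s).exists
  classical
  let N := Nat.find hex
  have upper : ∑ k ∈ Finset.range N, u (k + n) ≤ s := by
    rcases hN : Nat.find hex with _ | M
    · simpa [N, hN] using (hu 0).trans (hus 0)
    · have := Nat.find_min hex (m := M) (by omega)
      simpa [N, hN] using (not_le.1 this).le
  refine ⟨(Finset.range (N + 1)).map (addRightEmbedding n), ?_, ?_, ?_⟩
  · simp
  · simpa using Nat.find_spec hex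
  · have := hus (N + n)
    simp only [Finset.sum_map, addRightEmbedding_apply, Finset.sum_range_succ] at upper ⊢
    linarith

theorem sum_filter_lt_pow_sub_le {θ : ℝ} (hθ0 : 0 ≤ θ) (hθ1 : θ < 1) (F : Finset ℕ) (l : ℕ) :
    ∑ k ∈ F with k < l, θ ^ (l - k) ≤ θ / (1 - θ) := by
  calc ∑ k ∈ F with k < l, θ ^ (l - k) ≤ ∑ k ∈ Finset.range l, θ ^ (l - k) := by
        refine Finset.sum_le_sum_of_subset_of_nonneg (fun k hk => ?_) fun _ _ _ => by positivity
        simpa using (Finset.mem_filter.1 hk).2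
    _ = ∑ k ∈ Finset.range l, θ ^ (k + 1) := by
        rw [← Finset.sum_range_reflect]
        refine Finset.sum_congr rfl fun k hk => ?_
        rw [Finset.mem_range] at hk
        congr 1
        omega
    _ = θ * ∑ k ∈ Finset.range l, θ ^ k := by
        rw [Finset.mul_sum]
        exact Finset.sum_congr rfl fun k _ => pow_succ' θ k
    _ ≤ θ * (1 - θ)⁻¹ := by
        gcongr
        rw [← tsum_geometric_of_lt_one hθ0 hθ1]
        exact (summable_geometric_of_lt_one hθ0 hθ1).sum_le_tsum _ fun _ _ => by positivity

theorem le_measure_limsup {E : ℕ → Set α} {B : Set α} {v : ENNReal} (hB : μ B ≠ ⊤)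
    (hE : ∀ k, MeasurableSet (E k)) (hEB : ∀ k, E k ⊆ B)
    (hv : ∀ n, v ≤ μ (⋃ k ≥ n, E k)) : v ≤ μ (limsup E atTop) := by
  have hanti : Antitone fun n => ⋃ k ≥ n, E k := fun i j hij =>
    biUnion_mono (fun k hk => hij.trans hk) fun _ _ => subset_rfl
  rw [limsup_eq_iInf_iSup_of_nat]
  exact ge_of_tendsto' (tendsto_measure_iInter_atTop
    (fun n => (MeasurableSet.iUnion fun k => MeasurableSet.iUnion fun _ =>
      hE k).nullMeasurableSet) hanti
    ⟨0, measure_ne_top_of_subset (iUnion₂_subset fun k _ => hEB k) hB⟩) hv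

theorem half_mul_sum_le_measureReal_biUnion {E : ℕ → Set α} {u : ℕ → ℝ} {F : Finset ℕ}
    {a b s θ : ℝ} (hE : ∀ k, MeasurableSet (E k)) (hfin : ∀ k, μ (E k) ≠ ⊤)
    (hθ0 : 0 ≤ θ) (hθ1 : θ < 1) (hb : 0 ≤ b) (hbs : b * (2 * s + θ / (1 - θ)) ≤ a / 2)
    (hu : ∀ k, 0 ≤ u k) (hF : ∑ k ∈ F, u k ≤ 2 * s)
    (hlow : ∀ k, a * u k ≤ μ.real (E k))
    (hinter : ∀ k l, k < l → μ.real (E k ∩ E l) ≤ b * u l * (u k + θ ^ (l - k))) :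
    a / 2 * ∑ k ∈ F, u k ≤ μ.real (⋃ k ∈ F, E k) := by
  have overlap_le : ∀ l, ∑ k ∈ F with k < l, μ.real (E k ∩ E l) ≤ a / 2 * u l := fun l => by
    have hul := hu l
    calc ∑ k ∈ F with k < l, μ.real (E k ∩ E l)
        ≤ ∑ k ∈ F with k < l, b * u l * (u k + θ ^ (l - k)) :=
          Finset.sum_le_sum fun k hk => hinter k l (Finset.mem_filter.1 hk).2
      _ = b * u l * (∑ k ∈ F with k < l, u k + ∑ k ∈ F with k < l, θ ^ (l - k)) := by
          rw [← Finset.mul_sum, Finset.sum_add_distrib]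
      _ ≤ b * u l * (2 * s + θ / (1 - θ)) := by
          gcongr
          · exact (Finset.sum_le_sum_of_subset_of_nonneg (Finset.filter_subset _ _)
              fun k _ _ => hu k).trans hF
          · exact sum_filter_lt_pow_sub_le hθ0 hθ1 F l
      _ = b * (2 * s + θ / (1 - θ)) * u l := by ring
      _ ≤ a / 2 * u l := by gcongr
  have bonferroni := sum_measureReal_le_measureReal_biUnion_add_sum_inter hE hfin F
  have sum_low : a * ∑ k ∈ F, u k ≤ ∑ k ∈ F, μ.real (E k) := by
    rw [Finset.mul_sum]
    exact Finset.sum_le_sum fun k _ => hlow k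
  have sum_overlap := Finset.sum_le_sum fun l (_ : l ∈ F) => overlap_le l
  rw [← Finset.mul_sum] at sum_overlap
  linarith

theorem ofReal_le_measure_limsup_of_quasiIndependent {E : ℕ → Set α} {B : Set α} {u : ℕ → ℝ}
    {a b s θ : ℝ} (hB : μ B ≠ ⊤) (hE : ∀ k, MeasurableSet (E k)) (hEB : ∀ k, E k ⊆ B)
    (hθ0 : 0 ≤ θ) (hθ1 : θ < 1) (ha : 0 ≤ a) (hb : 0 ≤ b)
    (hbs : b * (2 * s + θ / (1 - θ)) ≤ a / 2)
    (hu : ∀ k, 0 ≤ u k) (hus : ∀ k, u k ≤ s) (hdiv : ¬ Summable u)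
    (hlow : ∀ k, a * u k ≤ μ.real (E k))
    (hinter : ∀ k l, k < l → μ.real (E k ∩ E l) ≤ b * u l * (u k + θ ^ (l - k))) :
    ENNReal.ofReal (a / 2 * s) ≤ μ (limsup E atTop) := by
  refine le_measure_limsup hB hE hEB fun n => ?_
  obtain ⟨F, hFn, hsF, hFs⟩ := exists_finset_sum_between hu hus hdiv n
  refine ENNReal.ofReal_le_of_le_toReal ?_
  calc a / 2 * s ≤ a / 2 * ∑ k ∈ F, u k := by gcongr
    _ ≤ μ.real (⋃ k ∈ F, E k) := half_mul_sum_le_measureReal_biUnion hE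
        (fun k => measure_ne_top_of_subset (hEB k) hB) hθ0 hθ1 hb hbs hu hFs hlow hinter
    _ ≤ μ.real (⋃ k ≥ n, E k) := measureReal_mono (biUnion_mono hFn fun _ _ => subset_rfl)
        (measure_ne_top_of_subset (iUnion₂_subset fun k _ => hEB k) hB)

end QuasiIndependence

section AhlforsRegular

open Metric Set Filter Topology

theorem exists_separated_finset_of_card_le {X : Type*} [PseudoMetricSpace X] {Z : Set X} {ε : ℝ}
    {N : ℕ} (hε : 0 ≤ ε)
    (hN : ∀ Y : Finset X, ↑Y ⊆ Z → (Y : Set X).Pairwise (fun y z => ε < dist y z) → Y.card ≤ N) :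
    ∃ Y : Finset X, ↑Y ⊆ Z ∧ (Y : Set X).Pairwise (fun y z => ε < dist y z) ∧
      ∀ z ∈ Z, ∃ y ∈ Y, dist z y ≤ ε := by
  classical
  let IsSep (Y : Finset X) : Prop := ↑Y ⊆ Z ∧ (Y : Set X).Pairwise fun y z => ε < dist y z
  obtain ⟨Y, ⟨hYZ, hY⟩, hmax⟩ : ∃ Y, Maximal IsSep Y := by
    by_contra! hno
    have hcard : ∀ j, ∃ Y, IsSep Y ∧ j ≤ Y.card := fun j => by
      induction j with
      | zero => exact ⟨∅, by simp [IsSep]⟩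
      | succ j ih =>
        obtain ⟨Y, hY, hj⟩ := ih
        obtain ⟨Y', hY', hlt⟩ := exists_gt_of_not_maximal hY (hno Y)
        exact ⟨Y', hlt, Nat.succ_le_of_lt <| hj.trans_lt (Finset.card_lt_card hY')⟩
    obtain ⟨Y, ⟨hYZ, hY⟩, hlt⟩ := hcard (N + 1)
    exact (hN Y hYZ hY).not_gt hlt
  refine ⟨Y, hYZ, hY, fun z hz => ?_⟩
  by_contra! hfar
  have hins : z ∈ Y := hmax (y := insert z Y) ⟨by
      rw [Finset.coe_insert]
      exact insert_subset hz hYZ, by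
      rw [Finset.coe_insert]
      refine hY.insert fun y hy _ => ⟨hfar y hy, ?_⟩
      rw [dist_comm]
      exact hfar y hy⟩ (Finset.subset_insert z Y) (Finset.mem_insert_self z Y)
  exact (hfar z hins).not_ge (by rwa [dist_self])

variable {X : Type*} [PseudoMetricSpace X] [MeasurableSpace X]

/-- A measure is Ahlfors regular of dimension `m` if the measure of every ball of radius `r > 0` is
comparable to `r ^ m`. The constants are recorded because the measure bounds below depend on them;
there is no restriction on large radii. -/
structure IsAhlforsRegular (μ : Measure X) (m : ℕ) (c C : ℝ) : Prop where
  c_pos : 0 < c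
  C_pos : 0 < C
  ne_top : ∀ x r, μ (closedBall x r) ≠ ⊤
  lower : ∀ x r, 0 < r → c * r ^ m ≤ μ.real (closedBall x r)
  upper : ∀ x r, 0 < r → μ.real (closedBall x r) ≤ C * r ^ m

namespace IsAhlforsRegular

variable {μ : Measure X} {m : ℕ} {c C : ℝ}

theorem biUnion_closedBall_ne_top (h : IsAhlforsRegular μ m c C) (Y : Finset X) (ρ : ℝ) :
    μ (⋃ y ∈ Y, closedBall y ρ) ≠ ⊤ :=
  (measure_biUnion_lt_top Y.finite_toSet fun y _ => (h.ne_top y ρ).lt_top).ne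

theorem measureReal_biUnion_closedBall_le (h : IsAhlforsRegular μ m c C) (Y : Finset X) {ρ : ℝ}
    (hρ : 0 < ρ) : μ.real (⋃ y ∈ Y, closedBall y ρ) ≤ Y.card * (C * ρ ^ m) := by
  refine (measureReal_biUnion_finset_le _ _).trans ?_
  rw [← nsmul_eq_mul]
  exact Finset.sum_le_card_nsmul _ _ _ fun y _ => h.upper y ρ hρ

variable [BorelSpace X]

theorem card_mul_le_measureReal_biUnion_closedBall (h : IsAhlforsRegular μ m c C) {Y : Finset X}
    {ρ r : ℝ} (hr : 0 < r) (hrρ : r ≤ ρ)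
    (hsep : (Y : Set X).Pairwise fun y z => 2 * ρ < dist y z) :
    Y.card * (c * r ^ m) ≤ μ.real (⋃ y ∈ Y, closedBall y r) := by
  rw [measureReal_biUnion_finset
    (fun y hy z hz hyz => closedBall_disjoint_closedBall (by linarith [hsep hy hz hyz]))
    (fun y _ => measurableSet_closedBall) fun y _ => h.ne_top _ _, ← nsmul_eq_mul]
  exact Finset.card_nsmul_le_sum _ _ _ fun y _ => h.lower y r hr

theorem card_mul_le_of_separated (h : IsAhlforsRegular μ m c C) {Y : Finset X} {ρ R : ℝ} {x : X}
    (hρ : 0 < ρ) (hR : 0 ≤ R) (hsep : (Y : Set X).Pairwise fun y z => 2 * ρ < dist y z)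
    (hY : ↑Y ⊆ closedBall x R) : Y.card * (c * ρ ^ m) ≤ C * (R + ρ) ^ m := by
  calc Y.card * (c * ρ ^ m) ≤ μ.real (⋃ y ∈ Y, closedBall y ρ) :=
        h.card_mul_le_measureReal_biUnion_closedBall hρ le_rfl hsep
    _ ≤ μ.real (closedBall x (R + ρ)) := by
      refine measureReal_mono (iUnion₂_subset fun y hy => ?_) (h.ne_top _ _)
      exact closedBall_subset_closedBall' (by linarith [mem_closedBall.1 (hY hy)])
    _ ≤ C * (R + ρ) ^ m := h.upper _ _ (by linarith)

theorem exists_separated_finset (h : IsAhlforsRegular μ m c C) {Z : Set X} {ρ R : ℝ} {x : X}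
    (hρ : 0 < ρ) (hR : 0 ≤ R) (hZ : Z ⊆ closedBall x R) :
    ∃ Y : Finset X, ↑Y ⊆ Z ∧ (Y : Set X).Pairwise (fun y z => 2 * ρ < dist y z) ∧
      ∀ z ∈ Z, ∃ y ∈ Y, dist z y ≤ 2 * ρ := by
  have hcρ : 0 < c * ρ ^ m := mul_pos h.c_pos (pow_pos hρ m)
  refine exists_separated_finset_of_card_le (N := ⌈C * (R + ρ) ^ m / (c * ρ ^ m)⌉₊)
    (by positivity) fun Y hYZ hsep => ?_
  have hcard := h.card_mul_le_of_separated hρ hR hsep (hYZ.trans hZ)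
  rw [← le_div_iff₀ hcρ] at hcard
  exact_mod_cast hcard.trans (Nat.le_ceil _)

theorem exists_separated_finset_of_half_covered (h : IsAhlforsRegular μ m c C) {Z : Set X}
    {ρ r : ℝ} {x : X} (hρ : 0 < ρ) (hr : 0 < r)
    (hZ : μ.real (closedBall x r \ ⋃ z ∈ Z, closedBall z ρ) ≤ μ.real (closedBall x r) / 2) :
    ∃ Y : Finset X, ↑Y ⊆ Z ∩ closedBall x (r + ρ) ∧
      (Y : Set X).Pairwise (fun y z => 2 * ρ < dist y z) ∧
      c * r ^ m / 2 ≤ Y.card * (C * (3 * ρ) ^ m) := by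
  obtain ⟨Y, hYZ, hsep, hcover⟩ := h.exists_separated_finset (x := x) (R := r + ρ) hρ
    (by positivity) (inter_subset_right (s := Z))
  refine ⟨Y, hYZ, hsep, ?_⟩
  have ball_subset : closedBall x r ⊆
      (closedBall x r \ ⋃ z ∈ Z, closedBall z ρ) ∪ ⋃ y ∈ Y, closedBall y (3 * ρ) := by
    intro u hu
    by_cases huZ : u ∈ ⋃ z ∈ Z, closedBall z ρ
    · obtain ⟨z, hz, huz⟩ := mem_iUnion₂.1 huZ
      rw [mem_closedBall] at hu huz
      have hzx : z ∈ closedBall x (r + ρ) := by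
        rw [mem_closedBall]
        linarith [dist_triangle_left z x u]
      obtain ⟨y, hy, hzy⟩ := hcover z ⟨hz, hzx⟩
      refine Or.inr (mem_biUnion hy ?_)
      rw [mem_closedBall]
      linarith [dist_triangle u z y]
    · exact Or.inl ⟨hu, huZ⟩
  have ball_le := (measureReal_mono ball_subset (measure_union_ne_top
    (measure_ne_top_of_subset sdiff_subset (h.ne_top x _))
    (h.biUnion_closedBall_ne_top Y (3 * ρ)))).trans (measureReal_union_le _ _)
  have cover_le := h.measureReal_biUnion_closedBall_le Y (ρ := 3 * ρ) (by positivity)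
  linarith [h.lower x r hr]

theorem add_two_mul_pow_le {x y : ℝ} (hx : 0 ≤ x) (hy : 0 ≤ y) (m : ℕ) :
    (x + 2 * y) ^ m ≤ 4 ^ m * (x ^ m + y ^ m) := by
  rcases le_total x (2 * y) with h | h
  · calc (x + 2 * y) ^ m ≤ (4 * y) ^ m := by gcongr; linarith
      _ = 4 ^ m * y ^ m := mul_pow _ _ _
      _ ≤ 4 ^ m * (x ^ m + y ^ m) := by gcongr; exact le_add_of_nonneg_left (pow_nonneg hx m)
  · calc (x + 2 * y) ^ m ≤ (4 * x) ^ m := by gcongr; linarith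
      _ = 4 ^ m * x ^ m := mul_pow _ _ _
      _ ≤ 4 ^ m * (x ^ m + y ^ m) := by gcongr; exact le_add_of_nonneg_right (pow_nonneg hy m)

theorem measureReal_biUnion_inter_closedBall_le (h : IsAhlforsRegular μ m c C) {Y : Finset X}
    {ρ r r' : ℝ} (hr : 0 < r) (hr' : 0 < r') (hrρ : r ≤ ρ)
    (hsep : (Y : Set X).Pairwise fun y z => 2 * ρ < dist y z) (y : X) :
    μ.real ((⋃ z ∈ Y, closedBall z r) ∩ closedBall y r') ≤
      C ^ 2 * 4 ^ m / c * ((r' / ρ) ^ m + 1) * r ^ m := by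
  classical
  have hρ : 0 < ρ := hr.trans_le hrρ
  have hc := h.c_pos
  have hC := h.C_pos
  let Y' := Y.filter fun z => dist z y ≤ r' + r
  have hY' : ((Y'.card : ℕ) : ℝ) ≤ C * (4 ^ m * (r' ^ m + ρ ^ m)) / (c * ρ ^ m) := by
    rw [le_div_iff₀ (by positivity)]
    refine (h.card_mul_le_of_separated (x := y) (R := r' + r) hρ (by positivity)
      (hsep.mono (Finset.filter_subset _ Y)) fun z hz => (Finset.mem_filter.1 hz).2).trans ?_
    gcongr
    refine le_trans ?_ (add_two_mul_pow_le hr'.le hρ.le m)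
    exact pow_le_pow_left₀ (by positivity) (by linarith) m
  calc μ.real ((⋃ z ∈ Y, closedBall z r) ∩ closedBall y r')
      ≤ μ.real (⋃ z ∈ Y', closedBall z r) := by
        refine measureReal_mono ?_ (h.biUnion_closedBall_ne_top Y' r)
        rintro u ⟨huY, huy⟩
        obtain ⟨z, hz, huz⟩ := mem_iUnion₂.1 huY
        rw [mem_closedBall] at huy huz
        exact mem_biUnion (x := z)
          (Finset.mem_filter.2 ⟨hz, by linarith [dist_triangle_left z y u]⟩) huz
    _ ≤ Y'.card * (C * r ^ m) := h.measureReal_biUnion_closedBall_le Y' hr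
    _ ≤ C * (4 ^ m * (r' ^ m + ρ ^ m)) / (c * ρ ^ m) * (C * r ^ m) := by gcongr
    _ = C ^ 2 * 4 ^ m / c * ((r' / ρ) ^ m + 1) * r ^ m := by
        rw [div_pow]
        field_simp

theorem measureReal_biUnion_closedBall_inter_le (h : IsAhlforsRegular μ m c C) {Y₁ Y₂ : Finset X}
    {ρ₁ ρ₂ r₁ r₂ r : ℝ} (hρ₁ : 0 < ρ₁) (hr₁ : 0 < r₁) (hr₂ : 0 < r₂) (h₂ : r₂ ≤ ρ₂)
    (hcard : Y₁.card * (c * ρ₁ ^ m) ≤ C * r ^ m)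
    (hsep : (Y₂ : Set X).Pairwise fun y z => 2 * ρ₂ < dist y z) :
    μ.real ((⋃ y ∈ Y₁, closedBall y r₁) ∩ ⋃ z ∈ Y₂, closedBall z r₂) ≤
      C ^ 3 * 4 ^ m / c ^ 2 * r ^ m * (r₂ / ρ₂) ^ m * ((r₁ / ρ₁) ^ m + (ρ₂ / ρ₁) ^ m) := by
  have hρ₂ : 0 < ρ₂ := hr₂.trans_le h₂
  have hc := h.c_pos
  have hC := h.C_pos
  calc μ.real ((⋃ y ∈ Y₁, closedBall y r₁) ∩ ⋃ z ∈ Y₂, closedBall z r₂)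
      ≤ Y₁.card * (C ^ 2 * 4 ^ m / c * ((r₁ / ρ₂) ^ m + 1) * r₂ ^ m) := by
        rw [inter_comm, inter_iUnion₂, ← nsmul_eq_mul]
        exact (measureReal_biUnion_finset_le _ _).trans <| Finset.sum_le_card_nsmul _ _ _
          fun y _ => h.measureReal_biUnion_inter_closedBall_le hr₂ hr₁ h₂ hsep y
    _ ≤ C * r ^ m / (c * ρ₁ ^ m) * (C ^ 2 * 4 ^ m / c * ((r₁ / ρ₂) ^ m + 1) * r₂ ^ m) := by
        gcongr
        rwa [le_div_iff₀ (by positivity)]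
    _ = C ^ 3 * 4 ^ m / c ^ 2 * r ^ m * (r₂ / ρ₂) ^ m * ((r₁ / ρ₁) ^ m + (ρ₂ / ρ₁) ^ m) := by
        simp only [div_pow]
        field_simp

end IsAhlforsRegular

end AhlforsRegular

section LimsupOfBalls

open Metric Set Filter Topology

theorem le_mul_pow_sub_of_succ_le_mul {ρ : ℕ → ℝ} {θ : ℝ} (hθ : 0 ≤ θ)
    (h : ∀ k, ρ (k + 1) ≤ ρ k * θ) {k l : ℕ} (hkl : k ≤ l) : ρ l ≤ ρ k * θ ^ (l - k) := by
  induction l, hkl using Nat.le_induction with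
  | base => simp
  | succ l hkl ih =>
    calc ρ (l + 1) ≤ ρ k * θ ^ (l - k) * θ := (h l).trans (by gcongr)
      _ = ρ k * θ ^ (l + 1 - k) := by rw [Nat.succ_sub hkl, pow_succ, mul_assoc]

theorem tendsto_zero_of_succ_le_mul {ρ : ℕ → ℝ} {θ : ℝ} (hρ : ∀ k, 0 ≤ ρ k) (hθ0 : 0 ≤ θ)
    (hθ1 : θ < 1) (h : ∀ k, ρ (k + 1) ≤ ρ k * θ) : Tendsto ρ atTop (𝓝 0) := by
  refine squeeze_zero hρ (fun k => le_mul_pow_sub_of_succ_le_mul hθ0 h k.zero_le) ?_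
  simpa using (tendsto_pow_atTop_nhds_zero_of_lt_one hθ0 hθ1).const_mul (ρ 0)

theorem not_summable_indicator_inter_of_eventually {f : ℕ → ℝ} {J K : Set ℕ}
    (hf : ¬ Summable (J.indicator f)) (hK : ∀ᶠ k in atTop, k ∈ K) :
    ¬ Summable ((J ∩ K).indicator f) := fun hsum => hf <| hsum.congr_cofinite <| by
  rw [Nat.cofinite_eq_atTop]
  filter_upwards [hK] with k hk
  by_cases hkJ : k ∈ J
  · rw [indicator_of_mem (mem_inter hkJ hk), indicator_of_mem hkJ]
  · rw [indicator_of_notMem fun h => hkJ h.1, indicator_of_notMem hkJ]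

theorem not_summable_indicator_min_div {δ ρ : ℕ → ℝ} {J : Set ℕ} {m : ℕ} {s : ℝ}
    (hδ : ∀ k, 0 < δ k) (hρ : ∀ k, 0 < ρ k) (hs0 : 0 < s) (hs1 : s ≤ 1)
    (hdiv : ¬ Summable (J.indicator fun k => (min (δ k / ρ k) 1) ^ m)) :
    ¬ Summable (J.indicator fun k => (min (δ k) (s * ρ k) / ρ k) ^ m) := fun hsum => by
  have min_pos : ∀ k, 0 < min (δ k / ρ k) 1 := fun k => lt_min (div_pos (hδ k) (hρ k)) one_pos
  have mul_min_le : ∀ k, s * min (δ k / ρ k) 1 ≤ min (δ k) (s * ρ k) / ρ k := fun k => by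
    rw [le_div_iff₀ (hρ k), mul_assoc]
    refine le_min ?_ ?_
    · calc s * (min (δ k / ρ k) 1 * ρ k) ≤ 1 * (δ k / ρ k * ρ k) := by
            have := hρ k
            have := min_pos k
            gcongr
            exact min_le_left _ _
        _ = δ k := by rw [one_mul, div_mul_cancel₀ _ (hρ k).ne']
    · have := hρ k
      gcongr
      exact mul_le_of_le_one_left this.le (min_le_right _ _)
  refine hdiv ((summable_mul_left_iff (pow_pos hs0 m).ne').1 (hsum.of_nonneg_of_le
    (fun k => ?_) fun k => ?_))
  · exact mul_nonneg (pow_pos hs0 m).le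
      (indicator_nonneg (fun k _ => (pow_pos (min_pos k) m).le) k)
  · by_cases hk : k ∈ J
    · rw [indicator_of_mem hk, indicator_of_mem hk, ← mul_pow]
      exact pow_le_pow_left₀ (mul_pos hs0 (min_pos k)).le (mul_min_le k) m
    · simp [indicator_of_notMem hk]

theorem exists_scale_parameters {a b : ℝ} (ha : 0 < a) (hb : 0 < b) :
    ∃ s > 0, s ≤ 1 ∧ ∃ θ₀ > 0, ∀ θ, 0 ≤ θ → θ ≤ θ₀ →
      θ < 1 ∧ b * (2 * s + θ / (1 - θ)) ≤ a / 2 := by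
  have hab : 0 < a / (8 * b) := by positivity
  refine ⟨min (a / (8 * b)) 1, by positivity, min_le_right _ _, min (a / (8 * b)) (1 / 2),
    by positivity, fun θ _ hθ => ?_⟩
  have hθ_half : θ ≤ 1 / 2 := hθ.trans (min_le_right _ _)
  refine ⟨by linarith, ?_⟩
  have hθ_div : θ / (1 - θ) ≤ 2 * (a / (8 * b)) := by
    rw [div_le_iff₀ (by linarith)]
    nlinarith [hθ.trans (min_le_left _ _)]
  calc b * (2 * min (a / (8 * b)) 1 + θ / (1 - θ))
      ≤ b * (2 * (a / (8 * b)) + 2 * (a / (8 * b))) := by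
        gcongr
        exact min_le_left _ _
    _ = a / 2 := by field_simp; norm_num

namespace IsAhlforsRegular

variable {X : Type*} [PseudoMetricSpace X] [MeasurableSpace X] [BorelSpace X]
  {μ : Measure X} {m : ℕ} {c C : ℝ}

theorem mul_le_measureReal_biUnion_closedBall (h : IsAhlforsRegular μ m c C) {Y : Finset X}
    {ρ δ r : ℝ} (hδ : 0 < δ) (hδρ : δ ≤ ρ)
    (hsep : (Y : Set X).Pairwise fun y z => 2 * ρ < dist y z)
    (hcard : c * (r / 2) ^ m / 2 ≤ Y.card * (C * (3 * ρ) ^ m)) :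
    c ^ 2 / (2 * 6 ^ m * C) * r ^ m * (δ / ρ) ^ m ≤ μ.real (⋃ y ∈ Y, closedBall y δ) := by
  have hρ : 0 < ρ := hδ.trans_le hδρ
  have hc := h.c_pos
  have hC := h.C_pos
  calc c ^ 2 / (2 * 6 ^ m * C) * r ^ m * (δ / ρ) ^ m
      = c * (r / 2) ^ m / 2 / (C * (3 * ρ) ^ m) * (c * δ ^ m) := by
        have h6 : (6 : ℝ) ^ m = 2 ^ m * 3 ^ m := by rw [← mul_pow]; norm_num
        simp only [div_pow, mul_pow, h6]
        field_simp
    _ ≤ Y.card * (c * δ ^ m) := by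
        gcongr
        rwa [div_le_iff₀ (by positivity)]
    _ ≤ μ.real (⋃ y ∈ Y, closedBall y δ) :=
        h.card_mul_le_measureReal_biUnion_closedBall hδ hδρ hsep

theorem ofReal_le_measure_limsup_biUnion_closedBall (h : IsAhlforsRegular μ m c C) (hm : m ≠ 0)
    {Y : ℕ → Finset X} {ρ δ : ℕ → ℝ} {J : Set ℕ} {x : X} {r s θ : ℝ} (hr : 0 < r)
    (hθ0 : 0 ≤ θ) (hθ1 : θ < 1)
    (hs : C ^ 3 * 4 ^ m / c ^ 2 * (2 * s + θ / (1 - θ)) ≤ c ^ 2 / (2 * 6 ^ m * C) / 2)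
    (hδ : ∀ k, 0 < δ k) (hδρ : ∀ k, δ k ≤ ρ k) (hδs : ∀ k, (δ k / ρ k) ^ m ≤ s)
    (hρ : ∀ k, ρ (k + 1) ≤ ρ k * θ) (hYr : ∀ k, ⋃ y ∈ Y k, closedBall y (δ k) ⊆ closedBall x r)
    (hsep : ∀ k, (Y k : Set X).Pairwise fun y z => 2 * ρ k < dist y z)
    (hcard_le : ∀ k, (Y k).card * (c * ρ k ^ m) ≤ C * r ^ m)
    (hcard_ge : ∀ k ∈ J, c * (r / 2) ^ m / 2 ≤ (Y k).card * (C * (3 * ρ k) ^ m))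
    (hYJ : ∀ k ∉ J, Y k = ∅) (hdiv : ¬ Summable (J.indicator fun k => (δ k / ρ k) ^ m)) :
    ENNReal.ofReal (c ^ 2 / (2 * 6 ^ m * C) * r ^ m / 2 * s) ≤
      μ (limsup (fun k => ⋃ y ∈ Y k, closedBall y (δ k)) atTop) := by
  have hc := h.c_pos
  have hC := h.C_pos
  have hρ0 : ∀ k, 0 < ρ k := fun k => (hδ k).trans_le (hδρ k)
  have hv : ∀ k, 0 ≤ (δ k / ρ k) ^ m := fun k => pow_nonneg (div_pos (hδ k) (hρ0 k)).le m
  have hu : ∀ k, 0 ≤ J.indicator (fun k => (δ k / ρ k) ^ m) k := fun k =>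
    indicator_nonneg (fun k _ => hv k) k
  refine ofReal_le_measure_limsup_of_quasiIndependent (h.ne_top x r)
    (b := C ^ 3 * 4 ^ m / c ^ 2 * r ^ m) (u := J.indicator fun k => (δ k / ρ k) ^ m)
    (fun k => Finset.measurableSet_biUnion _ fun y _ => measurableSet_closedBall) hYr hθ0 hθ1
    (by positivity) (by positivity) (by nlinarith [pow_pos hr m]) hu
    (fun k => indicator_apply_le' (fun _ => hδs k) fun _ => (hv k).trans (hδs k)) hdiv
    (fun k => ?_) fun k l hkl => ?_
  · by_cases hk : k ∈ J
    · rw [indicator_of_mem hk]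
      exact h.mul_le_measureReal_biUnion_closedBall (hδ k) (hδρ k) (hsep k) (hcard_ge k hk)
    · simp [indicator_of_notMem hk]
  · by_cases hkl' : k ∈ J ∧ l ∈ J
    · rw [indicator_of_mem hkl'.1, indicator_of_mem hkl'.2]
      refine (h.measureReal_biUnion_closedBall_inter_le (hρ0 k) (hδ k) (hδ l) (hδρ l) (hcard_le k)
        (hsep l)).trans ?_
      have ratio_le : ρ l / ρ k ≤ θ ^ (l - k) := by
        rw [div_le_iff₀' (hρ0 k)]
        exact le_mul_pow_sub_of_succ_le_mul hθ0 hρ hkl.le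
      have := hv l
      gcongr
      exact (pow_le_of_le_one (div_pos (hρ0 l) (hρ0 k)).le
        (ratio_le.trans (pow_le_one₀ hθ0 hθ1.le)) hm).trans ratio_le
    · have hempty : (⋃ y ∈ Y k, closedBall y (δ k)) ∩ ⋃ z ∈ Y l, closedBall z (δ l) = ∅ := by
        rcases not_and_or.1 hkl' with hk | hl
        · simp [hYJ k hk]
        · simp [hYJ l hl]
      rw [hempty, measureReal_empty]
      have := hu k
      have := hu l
      positivity

/-- The hypotheses on `Z k` are those of a locally ubiquitous system in the sense of Beresnevich,
Dickinson and Velani: the `ρ k`-balls around `Z k` cover half of the ball at all scales in `J`. -/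
theorem ofReal_le_measure_frequently_dist_le_of_le (h : IsAhlforsRegular μ m c C) (hm : m ≠ 0)
    {Z : ℕ → Set X} {ρ δ : ℕ → ℝ} {J : Set ℕ} {x : X} {r s θ : ℝ} (hr : 0 < r)
    (hθ0 : 0 ≤ θ) (hθ1 : θ < 1)
    (hs : C ^ 3 * 4 ^ m / c ^ 2 * (2 * s + θ / (1 - θ)) ≤ c ^ 2 / (2 * 6 ^ m * C) / 2)
    (hδ : ∀ k, 0 < δ k) (hδρ : ∀ k, δ k ≤ ρ k) (hδs : ∀ k, (δ k / ρ k) ^ m ≤ s)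
    (hρ : ∀ k, ρ (k + 1) ≤ ρ k * θ) (hρr : ∀ k ∈ J, 4 * ρ k ≤ r)
    (hcov : ∀ k ∈ J, μ.real (closedBall x (r / 2) \ ⋃ z ∈ Z k, closedBall z (ρ k)) ≤
      μ.real (closedBall x (r / 2)) / 2)
    (hdiv : ¬ Summable (J.indicator fun k => (δ k / ρ k) ^ m)) :
    ENNReal.ofReal (c ^ 2 / (2 * 6 ^ m * C) * r ^ m / 2 * s) ≤
      μ {y ∈ closedBall x r | ∃ᶠ k in atTop, k ∈ J ∧ ∃ z ∈ Z k, dist y z ≤ δ k} := by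
  have hC := h.C_pos
  have hρ0 : ∀ k, 0 < ρ k := fun k => (hδ k).trans_le (hδρ k)
  have hex : ∀ k, ∃ Y : Finset X, (Y : Set X).Pairwise (fun y z => 2 * ρ k < dist y z) ∧
      (k ∈ J → ↑Y ⊆ Z k ∩ closedBall x (r / 2 + ρ k) ∧
        c * (r / 2) ^ m / 2 ≤ Y.card * (C * (3 * ρ k) ^ m)) ∧ (k ∉ J → Y = ∅) := fun k => by
    by_cases hk : k ∈ J
    · obtain ⟨Y, hYZ, hsep, hcard⟩ := h.exists_separated_finset_of_half_covered (hρ0 k)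
        (half_pos hr) (hcov k hk)
      exact ⟨Y, hsep, fun _ => ⟨hYZ, hcard⟩, absurd hk⟩
    · exact ⟨∅, by simp, fun h => absurd h hk, fun _ => rfl⟩
  choose Y hsep hYJ hY_empty using hex
  have mem_J : ∀ {k y}, y ∈ Y k → k ∈ J := fun {k y} hy => by
    by_contra hk
    simp [hY_empty k hk] at hy
  have hYr : ∀ k, ⋃ y ∈ Y k, closedBall y (δ k) ⊆ closedBall x r := fun k =>
    iUnion₂_subset fun y hy => closedBall_subset_closedBall' <| by
      have := mem_closedBall.1 ((hYJ k (mem_J hy)).1 hy).2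
      linarith [hδρ k, hρr k (mem_J hy)]
  have hcard_le : ∀ k, (Y k).card * (c * ρ k ^ m) ≤ C * r ^ m := fun k => by
    by_cases hk : k ∈ J
    · have := hρ0 k
      refine (h.card_mul_le_of_separated (R := r / 2 + ρ k) (hρ0 k) (by positivity) (hsep k)
        fun y hy => ((hYJ k hk).1 hy).2).trans ?_
      gcongr
      linarith [hρr k hk]
    · simp only [hY_empty k hk, Finset.card_empty, Nat.cast_zero, zero_mul]
      positivity
  refine (h.ofReal_le_measure_limsup_biUnion_closedBall hm hr hθ0 hθ1 hs hδ hδρ hδs hρ hYr hsep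
    hcard_le (fun k hk => (hYJ k hk).2) hY_empty hdiv).trans (measure_mono fun y hy => ?_)
  rw [mem_limsup_iff_frequently_mem] at hy
  obtain ⟨k, hk⟩ := hy.exists
  refine ⟨hYr k hk, hy.mono fun k hk => ?_⟩
  obtain ⟨z, hz, hyz⟩ := mem_iUnion₂.1 hk
  exact ⟨mem_J hz, z, ((hYJ k (mem_J hz)).1 hz).1, hyz⟩

theorem exists_ofReal_le_measure_frequently_dist_le (h : IsAhlforsRegular μ m c C) (hm : m ≠ 0) :
    ∃ κ > 0, ∃ θ₀ > 0, ∀ θ, 0 ≤ θ → θ ≤ θ₀ → ∀ (x : X) (r : ℝ), 0 < r →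
      ∀ (J : Set ℕ) (Z : ℕ → Set X) (ρ δ : ℕ → ℝ), (∀ k, 0 < ρ k) → (∀ k, 0 < δ k) →
      (∀ k, ρ (k + 1) ≤ ρ k * θ) →
      (∀ k ∈ J, μ.real (closedBall x (r / 2) \ ⋃ z ∈ Z k, closedBall z (ρ k)) ≤
        μ.real (closedBall x (r / 2)) / 2) →
      ¬ Summable (J.indicator fun k => (min (δ k / ρ k) 1) ^ m) →
      ENNReal.ofReal (κ * r ^ m) ≤
        μ {y ∈ closedBall x r | ∃ᶠ k in atTop, k ∈ J ∧ ∃ z ∈ Z k, dist y z ≤ δ k} := by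
  have hc := h.c_pos
  have hC := h.C_pos
  obtain ⟨s, hs0, hs1, θ₀, hθ₀, hsθ⟩ := exists_scale_parameters
    (a := c ^ 2 / (2 * 6 ^ m * C)) (b := C ^ 3 * 4 ^ m / c ^ 2) (by positivity) (by positivity)
  refine ⟨c ^ 2 / (2 * 6 ^ m * C) / 2 * s, by positivity, θ₀, hθ₀,
    fun θ hθ0 hθ x r hr J Z ρ δ hρ hδ hρθ hcov hdiv => ?_⟩
  obtain ⟨hθ1, hs⟩ := hsθ θ hθ0 hθ
  have hδ' : ∀ k, 0 < min (δ k) (s * ρ k) := fun k => lt_min (hδ k) (mul_pos hs0 (hρ k))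
  have hratio : ∀ k, min (δ k) (s * ρ k) / ρ k ≤ s := fun k => by
    rw [div_le_iff₀ (hρ k)]
    exact min_le_right _ _
  have hρ_small : ∀ᶠ k in atTop, k ∈ {k | 4 * ρ k ≤ r} := by
    have := (tendsto_zero_of_succ_le_mul (fun k => (hρ k).le) hθ0 hθ1 hρθ).const_mul 4
    rw [mul_zero] at this
    exact this.eventually_le_const hr
  have hmeasure := h.ofReal_le_measure_frequently_dist_le_of_le hm hr hθ0 hθ1 hs hδ'
    (fun k => (div_le_one (hρ k)).1 ((hratio k).trans hs1))
    (fun k => (pow_le_pow_left₀ (div_pos (hδ' k) (hρ k)).le (hratio k) m).trans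
      (pow_le_of_le_one hs0.le hs1 hm)) hρθ (fun k hk => hk.2) (fun k hk => hcov k hk.1)
    (not_summable_indicator_inter_of_eventually
      (not_summable_indicator_min_div hδ hρ hs0 hs1 hdiv) hρ_small)
  refine le_trans (le_of_eq (by ring_nf)) <| hmeasure.trans <|
    measure_mono fun y hy => ⟨hy.1, hy.2.mono fun k hk => ?_⟩
  obtain ⟨z, hz, hyz⟩ := hk.2
  exact ⟨hk.1.1, z, hz, hyz.trans (min_le_left _ _)⟩

end IsAhlforsRegular

end LimsupOfBalls

section FibrewiseMeasure

open Metric Set Filter Topology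

theorem measure_tsum_indicator_compl_ne_top_le {α : Type*} [MeasurableSpace α] (μ : Measure α)
    [IsFiniteMeasure μ] {M : ℕ → Set α} (hM : ∀ k, MeasurableSet (M k)) {ε : ENNReal}
    (hε : ∀ k, μ (M k) ≤ ε) {w : ℕ → ENNReal} (hw : ∑' k, w k = ⊤) :
    μ {A | ∑' k, (M k)ᶜ.indicator (fun _ => w k) A ≠ ⊤} ≤ ε := by
  have hmeas : ∀ k, Measurable ((M k)ᶜ.indicator fun _ => w k) := fun k =>
    measurable_const.indicator (hM k).compl
  let F : ℕ → Set α := fun j => {A | ∑' k, (M k)ᶜ.indicator (fun _ => w k) A ≤ j}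
  have hF_mono : Monotone F := fun i j hij A hA =>
    le_trans (mem_ofPred.1 hA) (by exact_mod_cast hij)
  have hF : ∀ j, μ (F j) ≤ ε := by
    intro j
    by_contra! hlt
    have hlow : ⊤ ≤ ∫⁻ A in F j, ∑' k, (M k)ᶜ.indicator (fun _ => w k) A ∂μ := by
      calc ⊤ = (∑' k, w k) * (μ (F j) - ε) := by rw [hw, ENNReal.top_mul (tsub_pos_of_lt hlt).ne']
        _ = ∑' k, w k * (μ (F j) - ε) := ENNReal.tsum_mul_right.symm
        _ ≤ ∑' k, w k * μ.restrict (F j) (M k)ᶜ := by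
            refine ENNReal.tsum_le_tsum fun k => mul_le_mul_right ?_ _
            rw [Measure.restrict_apply (hM k).compl, inter_comm, ← sdiff_eq]
            exact (tsub_le_tsub_left (hε k) _).trans le_measure_sdiff
        _ = ∫⁻ A in F j, ∑' k, (M k)ᶜ.indicator (fun _ => w k) A ∂μ := by
            rw [lintegral_tsum fun k => (hmeas k).aemeasurable]
            exact tsum_congr fun k => (lintegral_indicator_const (hM k).compl _).symm
    have hup : ∫⁻ A in F j, ∑' k, (M k)ᶜ.indicator (fun _ => w k) A ∂μ ≤ j * μ (F j) :=
      (setLIntegral_mono measurable_const fun A hA => hA).trans_eq (setLIntegral_const _ _)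
    exact (hlow.trans hup).not_gt
      (ENNReal.mul_lt_top (ENNReal.natCast_lt_top j) (measure_lt_top μ _))
  calc μ {A | ∑' k, (M k)ᶜ.indicator (fun _ => w k) A ≠ ⊤} ≤ μ (⋃ j, F j) :=
        measure_mono fun A hA => mem_iUnion.2 <|
          (ENNReal.exists_nat_gt hA).imp fun _ hj => hj.le
    _ ≤ ε := hF_mono.measure_iUnion.trans_le (iSup_le hF)

theorem measure_summable_indicator_compl_le {α : Type*} [MeasurableSpace α] (μ : Measure α)
    [IsFiniteMeasure μ] {M : ℕ → Set α} (hM : ∀ k, MeasurableSet (M k)) {ε : ENNReal}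
    (hε : ∀ᶠ k in atTop, μ (M k) ≤ ε) {w : ℕ → ℝ} (hw : ∀ k, 0 ≤ w k) (hdiv : ¬ Summable w) :
    μ {A | Summable fun k => (M k)ᶜ.indicator (fun _ => w k) A} ≤ ε := by
  obtain ⟨k₀, hk₀⟩ := eventually_atTop.1 hε
  lift w to ℕ → NNReal using hw
  have htop : ∑' k, (w (k + k₀) : ENNReal) = ⊤ := by
    by_contra h
    refine hdiv ?_
    rw [NNReal.summable_coe, ← NNReal.summable_nat_add_iff k₀]
    exact ENNReal.tsum_coe_ne_top_iff_summable.1 h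
  refine (measure_mono fun A hA => ?_).trans
    (measure_tsum_indicator_compl_ne_top_le μ (fun k => hM (k + k₀)) (fun k => hk₀ _ (by omega))
      htop)
  have hA' : Summable fun k => (M (k + k₀))ᶜ.indicator (fun _ => w (k + k₀)) A := by
    rw [← NNReal.summable_coe]
    refine ((summable_nat_add_iff k₀).2 (mem_ofPred.1 hA)).congr fun k => ?_
    by_cases h : A ∈ M (k + k₀) <;> simp [h]
  refine ne_of_eq_of_ne (tsum_congr fun k => ?_) (ENNReal.tsum_coe_ne_top_iff_summable.2 hA')
  by_cases h : A ∈ M (k + k₀) <;> simp [h]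

theorem exists_radius_measure_setOf_add_mem_le {G X : Type*} [NormedAddCommGroup G]
    [ProperSpace G] [MeasurableSpace G] [BorelSpace G] [SeminormedAddCommGroup X] (ν : Measure G)
    [ν.IsAddHaarMeasure] {g : X → G} (hg : Continuous g) (hg0 : g 0 = 0) {E S : Set G}
    (hE : MeasurableSet E) (hES : Disjoint E S) (hEfin : ν E ≠ ⊤) {η : ENNReal} (hη : 0 < η) :
    ∃ r₀ > 0, ∀ x, ‖x‖ ≤ r₀ → ν {A ∈ E | A + g x ∈ S} ≤ η := by
  let f : X → C(G, G) := fun x => ⟨fun A => A + g x, by fun_prop⟩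
  have hf : Continuous f := ContinuousMap.continuous_of_continuous_uncurry f
    (by change Continuous fun z : X × G => z.2 + g z.1; fun_prop)
  have hlim := tendsto_measure_symmDiff_preimage_nhds_zero (μ := ν) (ν := ν) (f := f)
    (l := 𝓝 0) (g := f 0) (s := E) hf.continuousAt
    (Eventually.of_forall fun x => measurePreserving_add_right ν (g x))
    (measurePreserving_add_right ν (g 0)) hE.nullMeasurableSet hEfin
  obtain ⟨r₀, hr₀, hball⟩ :=
    nhds_basis_closedBall.eventually_iff.1 (hlim.eventually_le_const hη)
  refine ⟨r₀, hr₀, fun x hx => (measure_mono ?_).trans (hball (mem_closedBall_zero_iff.2 hx))⟩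
  rintro A ⟨hAE, hAS⟩
  refine Or.inr ⟨?_, fun h => disjoint_left.1 hES h hAS⟩
  change A + g 0 ∈ E
  rwa [hg0, add_zero]

variable {G X : Type*} [MeasurableSpace G] [MeasurableSpace X]

theorem measurableSet_setOf_add_mem [Add G] [MeasurableAdd₂ G] {g : X → G} (hg : Measurable g)
    {S : Set G} (hS : MeasurableSet S) : MeasurableSet {z : G × X | z.1 + g z.2 ∈ S} :=
  (measurable_fst.add (hg.comp measurable_snd)) hS

theorem lintegral_measure_setOf_add_mem_comm [Add G] [MeasurableAdd₂ G] (ν : Measure G)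
    (lam : Measure X) [SFinite ν] [SFinite lam] {g : X → G} (hg : Measurable g) {S : Set G}
    (hS : MeasurableSet S) :
    ∫⁻ A, lam {x | A + g x ∈ S} ∂ν = ∫⁻ x, ν {A | A + g x ∈ S} ∂lam := by
  have hU := measurableSet_setOf_add_mem hg hS
  exact (Measure.prod_apply hU).symm.trans (Measure.prod_apply_symm hU)

theorem lintegral_measure_setOf_add_mem [AddGroup G] [MeasurableAdd₂ G] (ν : Measure G)
    (lam : Measure X) [SFinite ν] [SFinite lam] [ν.IsAddRightInvariant] {g : X → G}
    (hg : Measurable g) {S : Set G} (hS : MeasurableSet S) :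
    ∫⁻ A, lam {x | A + g x ∈ S} ∂ν = ν S * lam univ := by
  rw [lintegral_measure_setOf_add_mem_comm ν lam hg hS, ← lintegral_const]
  exact lintegral_congr fun x => measure_preimage_add_right ν (g x) S

theorem measure_mul_measure_univ_le [AddGroup G] [MeasurableAdd₂ G] (ν : Measure G)
    (lam : Measure X) [SFinite ν] [SFinite lam] [ν.IsAddRightInvariant] {g : X → G}
    (hg : Measurable g) {B S : Set G} (hB : MeasurableSet B) (hS : MeasurableSet S) {t : ENNReal}
    (ht : ∀ A ∈ B, lam {x | A + g x ∈ S} ≤ t) (h0 : ∀ A ∉ B, lam {x | A + g x ∈ S} = 0) :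
    ν S * lam univ ≤ t * ν B := by
  rw [← lintegral_measure_setOf_add_mem ν lam hg hS, ← lintegral_indicator_const hB]
  refine lintegral_mono fun A => ?_
  by_cases hA : A ∈ B
  · rw [indicator_of_mem hA]
    exact ht A hA
  · rw [indicator_of_notMem hA, h0 A hA]

/-- The points `A` whose fibre `A + g x`, `x : X`, spends at least half of its `lam`-measure
in `S`. -/
def halfFibreSet [Add G] (lam : Measure X) (g : X → G) (S : Set G) : Set G :=
  {A | lam univ / 2 ≤ lam {x | A + g x ∈ S}}

theorem measurableSet_halfFibreSet [Add G] [MeasurableAdd₂ G] (lam : Measure X) [SFinite lam]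
    {g : X → G} (hg : Measurable g) {S : Set G} (hS : MeasurableSet S) :
    MeasurableSet (halfFibreSet lam g S) :=
  measurableSet_le measurable_const
    (measurable_measure_prodMk_left (measurableSet_setOf_add_mem hg hS))

theorem measure_halfFibreSet_le [AddGroup G] [MeasurableAdd₂ G] (ν : Measure G)
    (lam : Measure X) [SFinite ν] [IsFiniteMeasure lam] [NeZero lam] [ν.IsAddRightInvariant]
    {g : X → G} (hg : Measurable g) {S : Set G} (hS : MeasurableSet S) :
    ν (halfFibreSet lam g S) ≤ 2 * ν S := by
  have hpos : lam univ / 2 ≠ 0 := by simp [NeZero.ne lam]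
  have hfin : lam univ / 2 ≠ ⊤ := ENNReal.div_ne_top (measure_ne_top _ _) two_ne_zero
  refine (meas_ge_le_lintegral_div (measurable_measure_prodMk_left
    (measurableSet_setOf_add_mem hg hS)).aemeasurable hpos hfin).trans ?_
  refine ENNReal.div_le_of_le_mul ((lintegral_measure_setOf_add_mem ν lam hg hS).trans_le ?_)
  rw [mul_comm 2, mul_assoc, ENNReal.mul_div_cancel two_ne_zero ENNReal.ofNat_ne_top]

theorem measure_restrict_summable_halfFibreSet_le [AddGroup G] [MeasurableAdd₂ G] {ν : Measure G}
    [SFinite ν] [ν.IsAddRightInvariant] {lam : Measure X} [IsFiniteMeasure lam] [NeZero lam]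
    {g : X → G} (hg : Measurable g) {E : Set G} (hE : ν E ≠ ⊤) {Bad : ℕ → Set G}
    (hBad : ∀ k, MeasurableSet (Bad k)) {ε : ENNReal} (hε : ∀ᶠ k in atTop, ν (Bad k) ≤ ε)
    {w : ℕ → ℝ} (hw : ∀ k, 0 ≤ w k) (hdiv : ¬ Summable w) :
    ν.restrict E {A | Summable fun k => (halfFibreSet lam g (Bad k))ᶜ.indicator
      (fun _ => w k) A} ≤ 2 * ε := by
  have : IsFiniteMeasure (ν.restrict E) := ⟨by simpa using hE.lt_top⟩
  refine measure_summable_indicator_compl_le _ (fun k => measurableSet_halfFibreSet lam hg (hBad k))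
    (hε.mono fun k hk => ?_) hw hdiv
  exact (Measure.restrict_apply_le _ _).trans <|
    (measure_halfFibreSet_le ν lam hg (hBad k)).trans (mul_le_mul_right hk 2)

end FibrewiseMeasure

section FibrewiseUbiquity

open Metric Set Filter Topology

variable {G X : Type*} [NormedAddCommGroup G] [MeasurableSpace G]
  [NormedAddCommGroup X]

theorem exists_radius_mul_measure_le_mul_measure_closedBall [ProperSpace G] [BorelSpace G]
    [ProperSpace X] [MeasurableSpace X] [BorelSpace X] (ν : Measure G) [ν.IsAddHaarMeasure]
    (lam : Measure X) [IsLocallyFiniteMeasure lam] {g : X → G} (hg : Continuous g) (hg0 : g 0 = 0)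
    {E S : Set G} (hE : MeasurableSet E) (hS : MeasurableSet S) (hES : Disjoint E S)
    (hEfin : ν E ≠ ⊤) {η : ENNReal} (hη : 0 < η) :
    ∃ r₀ > 0, ∀ r ≤ r₀, ∀ t,
      t * ν {A ∈ E | t ≤ lam.restrict (closedBall 0 r) {x | A + g x ∈ S}} ≤
        η * lam (closedBall 0 r) := by
  obtain ⟨r₀, hr₀, hr₀E⟩ := exists_radius_measure_setOf_add_mem_le ν hg hg0 hE hES hEfin hη
  refine ⟨r₀, hr₀, fun r hr t => ?_⟩
  have hmeas : Measurable fun A => lam.restrict (closedBall 0 r) {x | A + g x ∈ S} :=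
    measurable_measure_prodMk_left (measurableSet_setOf_add_mem hg.measurable hS)
  have htranslate : ∀ x, MeasurableSet {A | A + g x ∈ S} := fun x =>
    measurable_add_const (g x) hS
  calc t * ν {A ∈ E | t ≤ lam.restrict (closedBall 0 r) {x | A + g x ∈ S}}
      = t * ν.restrict E {A | t ≤ lam.restrict (closedBall 0 r) {x | A + g x ∈ S}} := by
        rw [Measure.restrict_apply (measurableSet_le measurable_const hmeas), inter_comm]
        rfl
    _ ≤ ∫⁻ A, lam.restrict (closedBall 0 r) {x | A + g x ∈ S} ∂ν.restrict E :=
        mul_meas_ge_le_lintegral hmeas t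
    _ = ∫⁻ x in closedBall 0 r, ν.restrict E {A | A + g x ∈ S} ∂lam :=
        lintegral_measure_setOf_add_mem_comm _ _ hg.measurable hS
    _ ≤ ∫⁻ _ in closedBall 0 r, η ∂lam := by
        refine setLIntegral_mono measurable_const fun x hx => ?_
        rw [Measure.restrict_apply (htranslate x), inter_comm]
        exact hr₀E x ((mem_closedBall_zero_iff.1 hx).trans hr)
    _ = η * lam (closedBall 0 r) := setLIntegral_const _ _

theorem IsAhlforsRegular.exists_radius_measure_le_ofReal [ProperSpace G] [BorelSpace G]
    [ProperSpace X] [MeasurableSpace X] [BorelSpace X] {ν : Measure G} [ν.IsAddHaarMeasure]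
    {lam : Measure X} [IsLocallyFiniteMeasure lam] {m : ℕ} {c C : ℝ}
    (h : IsAhlforsRegular lam m c C) {g : X → G} (hg : Continuous g) (hg0 : g 0 = 0)
    {E S : Set G} (hE : MeasurableSet E) (hS : MeasurableSet S) (hES : Disjoint E S)
    (hEfin : ν E ≠ ⊤) {ε κ : ℝ} (hε : 0 < ε) (hκ : 0 < κ) :
    ∃ r₀ > 0, ∀ r, 0 < r → r ≤ r₀ →
      ν {A ∈ E | ENNReal.ofReal (κ * r ^ m) ≤
        lam.restrict (closedBall 0 r) {x | A + g x ∈ S}} ≤ ENNReal.ofReal (ε * (C / κ)) := by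
  obtain ⟨r₀, hr₀, hr₀E⟩ := exists_radius_mul_measure_le_mul_measure_closedBall ν lam hg hg0 hE hS
    hES hEfin (ENNReal.ofReal_pos.2 hε)
  refine ⟨r₀, hr₀, fun r hr hrr₀ => ?_⟩
  have hκr : 0 < κ * r ^ m := by positivity
  refine (ENNReal.mul_le_mul_iff_right (ENNReal.ofReal_pos.2 hκr).ne'
    ENNReal.ofReal_ne_top).1 ((hr₀E r hrr₀ _).trans ?_)
  rw [← ofReal_measureReal (h.ne_top _ _), ← ENNReal.ofReal_mul hε.le,
    ← ENNReal.ofReal_mul hκr.le]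
  refine ENNReal.ofReal_le_ofReal ((mul_le_mul_of_nonneg_left (h.upper 0 r hr) hε.le).trans_eq ?_)
  field_simp

/-- Target sets `Z A k` in the fibre `A + g x`, `x : X`, over each point `A` of `E`: at scale `k`
they are `ρ k`-dense in the unit ball of the fibre off the exceptional set `Bad k`, and a point of
the fibre that comes `δ k`-close to them for infinitely many `k` lies in `S`. -/
structure IsFibrewiseUbiquitous (g : X → G) (E S : Set G) (Bad : ℕ → Set G) (Z : G → ℕ → Set X)
    (ρ δ : ℕ → ℝ) : Prop where
  ρ_pos : ∀ k, 0 < ρ k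
  δ_pos : ∀ k, 0 < δ k
  measurableSet_bad : ∀ k, MeasurableSet (Bad k)
  exists_dist_le : ∀ A ∈ E, ∀ x ∈ closedBall 0 1, ∀ k, A + g x ∉ Bad k →
    ∃ z ∈ Z A k, dist x z ≤ ρ k
  add_mem : ∀ A ∈ E, ∀ x, (∃ᶠ k in atTop, ∃ z ∈ Z A k, dist x z ≤ δ k) → A + g x ∈ S

namespace IsFibrewiseUbiquitous

variable {g : X → G} {E S : Set G} {Bad : ℕ → Set G} {Z : G → ℕ → Set X} {ρ δ : ℕ → ℝ}

theorem mono {E' : Set G} (hU : IsFibrewiseUbiquitous g E S Bad Z ρ δ) (hE : E' ⊆ E) :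
    IsFibrewiseUbiquitous g E' S Bad Z ρ δ where
  __ := hU
  exists_dist_le A hA := hU.exists_dist_le A (hE hA)
  add_mem A hA := hU.add_mem A (hE hA)

theorem measureReal_closedBall_sdiff_le (hU : IsFibrewiseUbiquitous g E S Bad Z ρ δ)
    [ProperSpace X] [MeasurableSpace X] {lam : Measure X} [IsFiniteMeasureOnCompacts lam] {A : G}
    (hA : A ∈ E) {r : ℝ} (hr : r ≤ 1) {k : ℕ}
    (hk : lam.restrict (closedBall 0 r) {x | A + g x ∈ Bad k} ≤
      lam.restrict (closedBall 0 r) univ / 2) :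
    lam.real (closedBall 0 r \ ⋃ z ∈ Z A k, closedBall z (ρ k)) ≤
      lam.real (closedBall 0 r) / 2 := by
  have hsub : closedBall 0 r \ ⋃ z ∈ Z A k, closedBall z (ρ k) ⊆
      {x | A + g x ∈ Bad k} ∩ closedBall 0 r := by
    rintro x ⟨hx, hxZ⟩
    refine ⟨by_contra fun hbad => hxZ ?_, hx⟩
    obtain ⟨z, hz, hxz⟩ := hU.exists_dist_le A hA x (closedBall_subset_closedBall hr hx) k hbad
    exact mem_iUnion₂.2 ⟨z, hz, hxz⟩
  rw [Measure.restrict_apply_univ] at hk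
  refine (ENNReal.toReal_mono (ENNReal.div_ne_top measure_closedBall_lt_top.ne two_ne_zero)
    ((measure_mono hsub).trans ((Measure.le_restrict_apply _ _).trans hk))).trans_eq ?_
  rw [ENNReal.toReal_div, ENNReal.toReal_ofNat, measureReal_def]

end IsFibrewiseUbiquitous

theorem IsAhlforsRegular.exists_measure_le_of_isFibrewiseUbiquitous [ProperSpace G]
    [BorelSpace G] [ProperSpace X] [MeasurableSpace X] [BorelSpace X] {ν : Measure G}
    [ν.IsAddHaarMeasure] {lam : Measure X} [lam.IsAddHaarMeasure] {m : ℕ} {c C : ℝ}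
    (h : IsAhlforsRegular lam m c C) (hm : m ≠ 0) :
    ∃ D > 0, ∃ θ₀ > 0, ∀ θ, 0 ≤ θ → θ ≤ θ₀ → ∀ {g : X → G}, Continuous g → g 0 = 0 →
      ∀ {E S : Set G}, MeasurableSet E → MeasurableSet S → Disjoint E S → ν E ≠ ⊤ →
      ∀ {Bad : ℕ → Set G} {Z : G → ℕ → Set X} {ρ δ : ℕ → ℝ},
      IsFibrewiseUbiquitous g E S Bad Z ρ δ → (∀ k, ρ (k + 1) ≤ ρ k * θ) →
      ¬ Summable (fun k => (min (δ k / ρ k) 1) ^ m) →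
      ∀ ε > 0, (∀ᶠ k in atTop, ν (Bad k) ≤ ENNReal.ofReal ε) → ν E ≤ ENNReal.ofReal (ε * D) := by
  have hC := h.C_pos
  obtain ⟨κ, hκ, θ₀, hθ₀, hlimsup⟩ := h.exists_ofReal_le_measure_frequently_dist_le hm
  refine ⟨2 + C / κ, by positivity, θ₀, hθ₀, fun θ hθ0 hθ g hg hg0 E S hE hS hES hEfin Bad Z ρ δ
    hU hρθ hdiv ε hε hBad => ?_⟩
  obtain ⟨r₀, hr₀, hr₀E⟩ := h.exists_radius_measure_le_ofReal (ν := ν) hg hg0 hE hS hES hEfin hε hκ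
  let r := min r₀ 1
  have hr : 0 < r := lt_min hr₀ one_pos
  let lam' := lam.restrict (closedBall 0 (r / 2))
  have : NeZero lam' := ⟨Measure.measure_univ_pos.1 <| by
    rw [Measure.restrict_apply_univ]; exact measure_closedBall_pos lam 0 (half_pos hr)⟩
  have : IsFiniteMeasure lam' := ⟨by
    rw [Measure.restrict_apply_univ]; exact measure_closedBall_lt_top⟩
  let W : Set G := {A | Summable fun k => (halfFibreSet lam' g (Bad k))ᶜ.indicator
    (fun _ => (min (δ k / ρ k) 1) ^ m) A}
  let T := {A ∈ E | ENNReal.ofReal (κ * r ^ m) ≤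
    lam.restrict (closedBall 0 r) {x | A + g x ∈ S}}
  have hW : ν.restrict E W ≤ 2 * ENNReal.ofReal ε :=
    measure_restrict_summable_halfFibreSet_le hg.measurable hEfin hU.measurableSet_bad hBad
      (fun k => pow_nonneg (le_min (div_pos (hU.δ_pos k) (hU.ρ_pos k)).le zero_le_one) m) hdiv
  have hcover : E \ W ⊆ T := fun A ⟨hA, hns⟩ => by
    refine ⟨hA, (hlimsup θ hθ0 hθ 0 r hr {k | A ∉ halfFibreSet lam' g (Bad k)} (Z A) ρ δ hU.ρ_pos
      hU.δ_pos hρθ (fun k hk => hU.measureReal_closedBall_sdiff_le hA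
        (by linarith [min_le_right r₀ 1]) (not_le.1 (mem_ofPred.1 hk)).le) hns).trans
      ((measure_mono fun x hx => ?_).trans (Measure.le_restrict_apply _ _))⟩
    exact ⟨hU.add_mem A hA x (hx.2.mono fun k hk => hk.2), hx.1⟩
  calc ν E ≤ ν (W ∩ E) + ν (E \ W) := by
        rw [inter_comm]; exact measure_le_inter_add_sdiff _ _ _
    _ ≤ ENNReal.ofReal (2 * ε) + ENNReal.ofReal (ε * (C / κ)) := by
        refine add_le_add ((Measure.le_restrict_apply _ _).trans (hW.trans_eq ?_))
          ((measure_mono hcover).trans (hr₀E r hr (min_le_left _ _)))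
        rw [ENNReal.ofReal_mul zero_le_two, ENNReal.ofReal_ofNat]
    _ = ENNReal.ofReal (ε * (2 + C / κ)) := by
        rw [← ENNReal.ofReal_add (by positivity) (by positivity)]
        ring_nf

end FibrewiseUbiquity

section AffineForm

open Metric Set

variable {K : Type*} [NormedField K] {m n : ℕ}

theorem exists_norm_apply_eq_norm {ι E : Type*} [Fintype ι] [NormedAddCommGroup E] {q : ι → E}
    (hq : q ≠ 0) : ∃ b, ‖q b‖ = ‖q‖ := by
  have : Nonempty ι := by
    by_contra! hι
    exact hq (Subsingleton.elim _ _)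
  obtain ⟨b, hb⟩ := Finite.exists_max fun b => ‖q b‖
  exact ⟨b, le_antisymm (norm_le_pi_norm q b)
    ((pi_norm_le_iff_of_nonneg (norm_nonneg _)).2 hb)⟩

/-- The system of affine forms `A q + P`, as a linear map in the pair `(P, q)`. -/
def affForm (A : Fin m → Fin n → K) : (Fin m → K) × (Fin n → K) →ₗ[K] (Fin m → K) :=
  Matrix.mulVecLin A ∘ₗ LinearMap.snd K _ _ + LinearMap.fst K _ _

theorem affForm_apply (A : Fin m → Fin n → K) (v : (Fin m → K) × (Fin n → K)) (a : Fin m) :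
    affForm A v a = (∑ b, A a b * v.2 b) + v.1 a := rfl

/-- The matrix whose column `b` is `x`, and whose other columns vanish. -/
def columnEmb (b : Fin n) (x : Fin m → K) : Fin m → Fin n → K := fun a => Pi.single b (x a)

theorem columnEmb_zero (b : Fin n) : columnEmb b (0 : Fin m → K) = 0 :=
  funext fun _ => Pi.single_zero b

theorem affForm_add_columnEmb (A : Fin m → Fin n → K) (b : Fin n) (x : Fin m → K)
    (v : (Fin m → K) × (Fin n → K)) : affForm (A + columnEmb b x) v = affForm A v + v.2 b • x := by
  funext a
  have hsingle : ∑ c, (Pi.single b (x a) : Fin n → K) c * v.2 c = v.2 b * x a := by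
    rw [← mul_comm (x a)]
    exact single_dotProduct v.2 (x a) b
  simp only [affForm_apply, columnEmb, Pi.add_apply, add_mul, Finset.sum_add_distrib,
    Pi.smul_apply, smul_eq_mul, hsingle]
  ring

theorem norm_columnEmb_le (b : Fin n) (x : Fin m → K) : ‖columnEmb b x‖ ≤ ‖x‖ := by
  refine (pi_norm_le_iff_of_nonneg (norm_nonneg _)).2 fun a => ?_
  rw [columnEmb, Pi.norm_single (G := fun _ => K)]
  exact norm_le_pi_norm x a

theorem continuous_columnEmb (b : Fin n) : Continuous (columnEmb b : (Fin m → K) → _) :=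
  continuous_pi fun a => (continuous_single b).comp (continuous_apply a)

theorem continuous_affForm (v : (Fin m → K) × (Fin n → K)) :
    Continuous fun A : Fin m → Fin n → K => affForm A v := by
  refine continuous_pi fun a => ?_
  simp only [affForm_apply]
  fun_prop

theorem measurableSet_norm_affForm_le [MeasurableSpace K] [BorelSpace K]
    [SecondCountableTopology K] (v : (Fin m → K) × (Fin n → K)) (ρ : ℝ) :
    MeasurableSet {A : Fin m → Fin n → K | ‖affForm A v‖ ≤ ρ} :=
  (isClosed_le (continuous_affForm v).norm continuous_const).measurableSet

theorem norm_affForm_add_columnEmb_le_iff {A : Fin m → Fin n → K} {b : Fin n} {x : Fin m → K}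
    {v : (Fin m → K) × (Fin n → K)} (hv : v.2 b ≠ 0) {ρ : ℝ} :
    ‖affForm (A + columnEmb b x) v‖ ≤ ρ ↔ dist x (-((v.2 b)⁻¹ • affForm A v)) ≤ ρ / ‖v.2 b‖ := by
  rw [affForm_add_columnEmb, dist_eq_norm, sub_neg_eq_add, le_div_iff₀ (norm_pos_iff.2 hv),
    mul_comm, ← norm_smul, smul_add, smul_inv_smul₀ hv, add_comm]

theorem norm_le_norm_affForm_add (A : Fin m → Fin n → K) (v : (Fin m → K) × (Fin n → K)) :
    ‖v.1‖ ≤ ‖affForm A v‖ + n * ‖A‖ * ‖v.2‖ := by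
  refine (pi_norm_le_iff_of_nonneg (by positivity)).2 fun a => ?_
  have hsum : ‖∑ b, A a b * v.2 b‖ ≤ n * ‖A‖ * ‖v.2‖ := by
    refine (norm_sum_le_of_le (f := fun b => A a b * v.2 b) (n := fun _ => ‖A‖ * ‖v.2‖) _
      fun b _ => ?_).trans_eq ?_
    · rw [norm_mul]
      gcongr
      · exact (norm_le_pi_norm (A a) b).trans (norm_le_pi_norm A a)
      · exact norm_le_pi_norm v.2 b
    · rw [Finset.sum_const, Finset.card_univ, Fintype.card_fin, nsmul_eq_mul, mul_assoc]
  calc ‖v.1 a‖ = ‖affForm A v a - ∑ b, A a b * v.2 b‖ := by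
        rw [affForm_apply, add_sub_cancel_left]
    _ ≤ ‖affForm A v a‖ + ‖∑ b, A a b * v.2 b‖ := norm_sub_le _ _
    _ ≤ ‖affForm A v‖ + n * ‖A‖ * ‖v.2‖ := add_le_add (norm_le_pi_norm _ a) hsum

theorem exists_measure_norm_affForm_le [ProperSpace K] [MeasurableSpace K] [BorelSpace K]
    (ν : Measure (Fin m → Fin n → K)) [ν.IsAddHaarMeasure]
    {lam : Measure (Fin m → K)} [SFinite lam] {c C : ℝ} (h : IsAhlforsRegular lam m c C)
    {R : ℝ} (hR : 0 ≤ R) :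
    ∃ D > 0, ∀ v : (Fin m → K) × (Fin n → K), v.2 ≠ 0 → ∀ ρ > 0,
      ν (closedBall 0 R ∩ {A | ‖affForm A v‖ ≤ ρ}) ≤ ENNReal.ofReal (D * (ρ / ‖v.2‖) ^ m) := by
  have hc := h.c_pos
  have hC := h.C_pos
  have hfin : ν (closedBall 0 (R + 1)) ≠ ⊤ := measure_closedBall_lt_top.ne
  have hpos : 0 < ν.real (closedBall 0 (R + 1)) :=
    ENNReal.toReal_pos (measure_closedBall_pos ν 0 (by positivity)).ne' hfin
  refine ⟨C * ν.real (closedBall 0 (R + 1)) / c, by positivity, fun v hv ρ hρ => ?_⟩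
  obtain ⟨b, hb⟩ := exists_norm_apply_eq_norm hv
  have hv0 : 0 < ‖v.2‖ := norm_pos_iff.2 hv
  have hvb : v.2 b ≠ 0 := norm_pos_iff.1 (hb ▸ hv0)
  have hfubini := measure_mul_measure_univ_le ν (lam.restrict (closedBall 0 1))
    (continuous_columnEmb b).measurable (B := closedBall 0 (R + 1))
    (S := closedBall 0 R ∩ {A | ‖affForm A v‖ ≤ ρ}) measurableSet_closedBall
    (measurableSet_closedBall.inter (measurableSet_norm_affForm_le v ρ))
    (t := ENNReal.ofReal (C * (ρ / ‖v.2‖) ^ m)) ?_ ?_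
  · have hlow : ENNReal.ofReal c ≤ lam.restrict (closedBall 0 1) univ := by
      rw [Measure.restrict_apply_univ, ← ofReal_measureReal (h.ne_top _ _)]
      exact ENNReal.ofReal_le_ofReal (by simpa using h.lower 0 1 one_pos)
    refine (ENNReal.mul_le_mul_iff_left (ENNReal.ofReal_pos.2 hc).ne' ENNReal.ofReal_ne_top).1
      ((mul_le_mul_right hlow _).trans (hfubini.trans_eq ?_))
    rw [← ofReal_measureReal hfin, ← ENNReal.ofReal_mul (by positivity),
      ← ENNReal.ofReal_mul (by positivity)]
    congr 1
    field_simp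
  · intro A _
    refine (Measure.restrict_apply_le _ _).trans ((measure_mono fun x hx => mem_closedBall.2
      ((norm_affForm_add_columnEmb_le_iff hvb).1 hx.2)).trans ?_)
    rw [← ofReal_measureReal (h.ne_top _ _), hb]
    exact ENNReal.ofReal_le_ofReal (h.upper _ _ (by positivity))
  · intro A hA
    rw [Measure.restrict_apply' measurableSet_closedBall]
    refine measure_mono_null (t := ∅) (fun x hx => hA ?_) measure_empty
    have hxA := mem_closedBall_zero_iff.1 hx.1.1
    have hx1 := mem_closedBall_zero_iff.1 hx.2
    rw [mem_closedBall_zero_iff, ← add_sub_cancel_right A (columnEmb b x)]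
    exact (norm_sub_le _ _).trans (add_le_add hxA ((norm_columnEmb_le b x).trans hx1))

end AffineForm

section AffineUbiquity

open Metric Set Filter Topology

theorem measurableSet_setOf_infinite {α I : Type*} [MeasurableSpace α] [Countable I]
    {B : I → Set α} (hB : ∀ i, MeasurableSet (B i)) :
    MeasurableSet {A | {i | A ∈ B i}.Infinite} := by
  have : {A | {i | A ∈ B i}.Infinite} = ⋂ F : Finset I, ⋃ i, ⋃ (_ : i ∉ F), B i := by
    ext A
    simp only [mem_ofPred_eq, mem_iInter, mem_iUnion, exists_prop]
    constructor
    · intro h F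
      obtain ⟨i, hi, hiF⟩ := h.exists_notMem_finset F
      exact ⟨i, hiF, hi⟩
    · intro h hfin
      obtain ⟨i, hi, hiA⟩ := h hfin.toFinset
      exact hi (hfin.mem_toFinset.2 hiA)
  rw [this]
  exact MeasurableSet.iInter fun F => MeasurableSet.iUnion fun i =>
    MeasurableSet.iUnion fun _ => hB i

theorem not_summable_min_one {u : ℕ → ℝ} (hu : ¬ Summable u) :
    ¬ Summable fun k => min (u k) 1 := by
  refine fun h => hu (h.congr_cofinite ?_)
  rw [Nat.cofinite_eq_atTop]
  filter_upwards [h.tendsto_atTop_zero.eventually_lt_const one_pos] with k hk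
  exact min_eq_left ((min_lt_iff.1 hk).resolve_right (lt_irrefl _)).le

theorem min_one_pow {a : ℝ} (ha : 0 ≤ a) (m : ℕ) : min a 1 ^ m = min (a ^ m) 1 := by
  rcases le_total a 1 with h | h
  · rw [min_eq_left h, min_eq_left (pow_le_one₀ ha h)]
  · rw [min_eq_right h, min_eq_right (one_le_pow₀ h), one_pow]

variable {K : Type*} [NormedField K] {m n : ℕ} {I : Type*}

/-- The matrices `A` for which no `v i` solves `‖A q + P‖ ≤ L T ^ (-n / m)` with `‖q‖ ≤ T` and
`b₀`-th coordinate of `q` at least `T / L`. -/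
def badMatrices (v : I → (Fin m → K) × (Fin n → K)) (b₀ : Fin n) (L T : ℝ) :
    Set (Fin m → Fin n → K) :=
  {A | ¬ ∃ i, ‖affForm A (v i)‖ ≤ L / (T ^ n) ^ (m : ℝ)⁻¹ ∧ T / L ≤ ‖(v i).2 b₀‖ ∧ ‖(v i).2‖ ≤ T}

/-- The translations of column `b₀` of `A` that annihilate the affine form of some `v i` with
`‖q‖ ≤ T` and `b₀`-th coordinate of `q` at least `T / L`. -/
def columnZeros (v : I → (Fin m → K) × (Fin n → K)) (b₀ : Fin n) (L T : ℝ)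
    (A : Fin m → Fin n → K) : Set (Fin m → K) :=
  (fun i => -(((v i).2 b₀)⁻¹ • affForm A (v i))) '' {i | T / L ≤ ‖(v i).2 b₀‖ ∧ ‖(v i).2‖ ≤ T}

/-- Ubiquity of the resonant sets `{A | affForm A (v i) = 0}` along the scales `τ ^ k`: on bounded
sets, the bad matrices have arbitrarily small measure. -/
def IsUbiquitous [MeasurableSpace K] (ν : Measure (Fin m → Fin n → K))
    (v : I → (Fin m → K) × (Fin n → K)) (b₀ : Fin n) (τ : ℝ) : Prop :=
  ∀ R > 0, ∀ ε > 0, ∃ L ≥ (1 : ℝ), ∀ᶠ k : ℕ in atTop,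
    ν (closedBall 0 R ∩ badMatrices v b₀ L (τ ^ k)) ≤ ENNReal.ofReal ε

/-- The indices of the solutions `v i` of the inequality `‖A q + P‖ ^ m ≤ ψ (‖q‖ ^ n)`. -/
def approxSols (v : I → (Fin m → K) × (Fin n → K)) (ψ : ℝ → ℝ) (A : Fin m → Fin n → K) : Set I :=
  {i | ‖affForm A (v i)‖ ^ m ≤ ψ (‖(v i).2‖ ^ n)}

/-- The distance within which every good translation of column `b₀` is approximated by one of
the `columnZeros` of height `T`. -/
noncomputable def coveringRadius (m n : ℕ) (L T : ℝ) : ℝ := L ^ 2 / ((T ^ n) ^ (m : ℝ)⁻¹ * T)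

/-- The distance to one of the `columnZeros` of height `T` within which the corresponding `v i`
solves the inequality `‖A q + P‖ ^ m ≤ ψ (‖q‖ ^ n)`. -/
noncomputable def targetRadius (m n : ℕ) (ψ : ℝ → ℝ) (T : ℝ) : ℝ := ψ (T ^ n) ^ (m : ℝ)⁻¹ / T

theorem coveringRadius_pos (m n : ℕ) {L T : ℝ} (hL : 0 < L) (hT : 0 < T) :
    0 < coveringRadius m n L T := by
  unfold coveringRadius
  positivity

theorem targetRadius_pos (m n : ℕ) {ψ : ℝ → ℝ} (hψ : ∀ t, 0 < ψ t) {T : ℝ} (hT : 0 < T) :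
    0 < targetRadius m n ψ T := by
  have := hψ (T ^ n)
  unfold targetRadius
  positivity

theorem coveringRadius_pow_succ_le (m n : ℕ) (L : ℝ) {τ : ℝ} (hτ : 1 ≤ τ) (k : ℕ) :
    coveringRadius m n L (τ ^ (k + 1)) ≤ coveringRadius m n L (τ ^ k) * τ⁻¹ := by
  have hτk : τ ^ k ≤ τ ^ (k + 1) := pow_le_pow_right₀ hτ (Nat.le_succ k)
  calc L ^ 2 / (((τ ^ (k + 1)) ^ n) ^ (m : ℝ)⁻¹ * τ ^ (k + 1))
      ≤ L ^ 2 / (((τ ^ k) ^ n) ^ (m : ℝ)⁻¹ * τ ^ (k + 1)) := by gcongr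
    _ = L ^ 2 / (((τ ^ k) ^ n) ^ (m : ℝ)⁻¹ * τ ^ k) * τ⁻¹ := by field_simp; ring

theorem targetRadius_div_coveringRadius_pow {m : ℕ} (hm : m ≠ 0) (n : ℕ) {ψ : ℝ → ℝ}
    (hψ : ∀ t, 0 < ψ t) {L T : ℝ} (hT : 0 < T) :
    (targetRadius m n ψ T / coveringRadius m n L T) ^ m =
      T ^ n * ψ (T ^ n) * ((L ^ 2) ^ m)⁻¹ := by
  have hquot : targetRadius m n ψ T / coveringRadius m n L T =
      (T ^ n) ^ (m : ℝ)⁻¹ * ψ (T ^ n) ^ (m : ℝ)⁻¹ / L ^ 2 := by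
    unfold targetRadius coveringRadius
    field_simp
  rw [hquot, div_pow, mul_pow, Real.rpow_inv_natCast_pow (hψ _).le hm,
    Real.rpow_inv_natCast_pow (by positivity) hm, div_eq_mul_inv]

theorem not_summable_min_radius_div_pow {m : ℕ} (hm : m ≠ 0) (n : ℕ) {ψ : ℝ → ℝ}
    (hψ : ∀ t, 0 < ψ t) {L τ : ℝ} (hL : 0 < L) (hτ : 0 < τ)
    (hdiv : ¬ Summable fun k : ℕ => (τ ^ k) ^ n * ψ ((τ ^ k) ^ n)) :
    ¬ Summable fun k : ℕ =>
      min (targetRadius m n ψ (τ ^ k) / coveringRadius m n L (τ ^ k)) 1 ^ m := by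
  have hnonneg : ∀ k : ℕ, 0 ≤ targetRadius m n ψ (τ ^ k) / coveringRadius m n L (τ ^ k) :=
    fun k => (div_pos (targetRadius_pos m n hψ (pow_pos hτ k))
      (coveringRadius_pos m n hL (pow_pos hτ k))).le
  simp only [min_one_pow (hnonneg _), targetRadius_div_coveringRadius_pow hm n hψ (pow_pos hτ _)]
  exact not_summable_min_one fun h => hdiv ((summable_mul_right_iff (by positivity)).1 h)

variable {v : I → (Fin m → K) × (Fin n → K)} {b₀ : Fin n}

theorem measurableSet_badMatrices [MeasurableSpace K] [BorelSpace K] [SecondCountableTopology K]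
    [Countable I] (L T : ℝ) : MeasurableSet (badMatrices v b₀ L T) := by
  simp only [badMatrices, ← compl_ofPred, ofPred_exists]
  exact (MeasurableSet.iUnion fun i =>
    (measurableSet_norm_affForm_le (v i) _).inter (MeasurableSet.const _)).compl

theorem measurableSet_setOf_mem_approxSols [MeasurableSpace K] [BorelSpace K]
    [SecondCountableTopology K] (i : I) (ψ : ℝ → ℝ) :
    MeasurableSet {A | i ∈ approxSols v ψ A} :=
  (isClosed_le ((continuous_affForm (v i)).norm.pow m) continuous_const).measurableSet

theorem measurableSet_setOf_infinite_approxSols [MeasurableSpace K] [BorelSpace K]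
    [SecondCountableTopology K] [Countable I] (ψ : ℝ → ℝ) :
    MeasurableSet {A | (approxSols v ψ A).Infinite} :=
  measurableSet_setOf_infinite fun i => measurableSet_setOf_mem_approxSols i ψ

theorem exists_mem_columnZeros_dist_le {L T : ℝ} (hL : 0 < L) (hT : 0 < T)
    {A : Fin m → Fin n → K} {x : Fin m → K} (h : A + columnEmb b₀ x ∉ badMatrices v b₀ L T) :
    ∃ z ∈ columnZeros v b₀ L T A, dist x z ≤ coveringRadius m n L T := by
  obtain ⟨i, hi, hLi, hTi⟩ := not_not.1 h
  have hpos : 0 < ‖(v i).2 b₀‖ := (div_pos hT hL).trans_le hLi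
  refine ⟨_, ⟨i, ⟨hLi, hTi⟩, rfl⟩, ?_⟩
  calc dist x (-(((v i).2 b₀)⁻¹ • affForm A (v i)))
      ≤ L / (T ^ n) ^ (m : ℝ)⁻¹ / ‖(v i).2 b₀‖ :=
        (norm_affForm_add_columnEmb_le_iff (norm_pos_iff.1 hpos)).1 hi
    _ ≤ L / (T ^ n) ^ (m : ℝ)⁻¹ / (T / L) := by gcongr
    _ = coveringRadius m n L T := by unfold coveringRadius; field_simp

theorem exists_mem_approxSols_of_dist_le {ψ : ℝ → ℝ} (hm : m ≠ 0) (hψ : ∀ t, 0 < ψ t)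
    (hanti : AntitoneOn ψ (Ioi 0)) {L T : ℝ} (hL : 0 < L) (hT : 0 < T)
    {A : Fin m → Fin n → K} {y z : Fin m → K} (hz : z ∈ columnZeros v b₀ L T A)
    (hyz : dist y z ≤ targetRadius m n ψ T) :
    ∃ i ∈ approxSols v ψ (A + columnEmb b₀ y), T / L ≤ ‖(v i).2 b₀‖ := by
  obtain ⟨i, ⟨hLi, hTi⟩, rfl⟩ := hz
  have hpos : 0 < ‖(v i).2 b₀‖ := (div_pos hT hL).trans_le hLi
  have hpos' : 0 < ‖(v i).2‖ := hpos.trans_le (norm_le_pi_norm _ _)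
  have hle : ‖affForm (A + columnEmb b₀ y) (v i)‖ ≤ ψ (T ^ n) ^ (m : ℝ)⁻¹ := by
    refine (norm_affForm_add_columnEmb_le_iff (norm_pos_iff.1 hpos)).2 (hyz.trans ?_)
    have := hψ (T ^ n)
    unfold targetRadius
    gcongr
    exact (norm_le_pi_norm _ _).trans hTi
  refine ⟨i, ?_, hLi⟩
  calc ‖affForm (A + columnEmb b₀ y) (v i)‖ ^ m
      ≤ (ψ (T ^ n) ^ (m : ℝ)⁻¹) ^ m := by gcongr
    _ = ψ (T ^ n) := Real.rpow_inv_natCast_pow (hψ _).le hm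
    _ ≤ ψ (‖(v i).2‖ ^ n) :=
        hanti (mem_Ioi.2 (by positivity)) (mem_Ioi.2 (by positivity)) (by gcongr)

theorem infinite_approxSols_of_frequently {ψ : ℝ → ℝ} (hm : m ≠ 0) (hψ : ∀ t, 0 < ψ t)
    (hanti : AntitoneOn ψ (Ioi 0)) {L τ : ℝ} (hL : 0 < L) (hτ : 1 < τ)
    {A : Fin m → Fin n → K} {y : Fin m → K} (hy : ∃ᶠ k : ℕ in atTop,
      ∃ z ∈ columnZeros v b₀ L (τ ^ k) A, dist y z ≤ targetRadius m n ψ (τ ^ k)) :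
    (approxSols v ψ (A + columnEmb b₀ y)).Infinite := by
  intro hfin
  obtain ⟨B, hB⟩ := (hfin.image fun i => ‖(v i).2 b₀‖).bddAbove
  have hlarge : ∀ᶠ k : ℕ in atTop, B < τ ^ k / L :=
    ((tendsto_pow_atTop_atTop_of_one_lt hτ).atTop_div_const hL).eventually_gt_atTop B
  obtain ⟨k, ⟨z, hz, hyz⟩, hBk⟩ := (hy.and_eventually hlarge).exists
  obtain ⟨i, hi, hLi⟩ := exists_mem_approxSols_of_dist_le hm hψ hanti hL (by positivity) hz hyz
  exact (hBk.trans_le hLi).not_ge (hB (mem_image_of_mem _ hi))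

theorem isFibrewiseUbiquitous_columnEmb [MeasurableSpace K] [BorelSpace K]
    [SecondCountableTopology K] [Countable I] {ψ : ℝ → ℝ} (hm : m ≠ 0) (hψ : ∀ t, 0 < ψ t)
    (hanti : AntitoneOn ψ (Ioi 0)) {L τ : ℝ} (hL : 0 < L) (hτ : 1 < τ) (R : ℝ) :
    IsFibrewiseUbiquitous (columnEmb b₀) (closedBall 0 R) {A | (approxSols v ψ A).Infinite}
      (fun k => closedBall 0 (R + 1) ∩ badMatrices v b₀ L (τ ^ k))
      (fun A k => columnZeros v b₀ L (τ ^ k) A)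
      (fun k => coveringRadius m n L (τ ^ k)) (fun k => targetRadius m n ψ (τ ^ k)) where
  ρ_pos k := coveringRadius_pos m n hL (by positivity)
  δ_pos k := targetRadius_pos m n hψ (by positivity)
  measurableSet_bad k := measurableSet_closedBall.inter (measurableSet_badMatrices L _)
  exists_dist_le A hA x hx k hAx := by
    refine exists_mem_columnZeros_dist_le hL (by positivity) fun hbad => hAx ⟨?_, hbad⟩
    rw [mem_closedBall_zero_iff] at *
    exact (norm_add_le _ _).trans (add_le_add hA ((norm_columnEmb_le _ _).trans hx))
  add_mem A _ x hx := infinite_approxSols_of_frequently hm hψ hanti hL hτ hx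

theorem IsUbiquitous.ae_infinite_approxSols [ProperSpace K] [MeasurableSpace K] [BorelSpace K]
    (hm : m ≠ 0) (ν : Measure (Fin m → Fin n → K)) [ν.IsAddHaarMeasure]
    {lam : Measure (Fin m → K)} [lam.IsAddHaarMeasure] {c C : ℝ}
    (h : IsAhlforsRegular lam m c C) :
    ∃ τ₀ > 1, ∀ τ ≥ τ₀, ∀ {I : Type} [Countable I] {v : I → (Fin m → K) × (Fin n → K)}
      {b₀ : Fin n}, IsUbiquitous ν v b₀ τ → ∀ {ψ : ℝ → ℝ}, (∀ t, 0 < ψ t) →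
      AntitoneOn ψ (Ioi 0) → (¬ Summable fun k : ℕ => (τ ^ k) ^ n * ψ ((τ ^ k) ^ n)) →
      ∀ᵐ A ∂ν, (approxSols v ψ A).Infinite := by
  obtain ⟨D, hD, θ₀, hθ₀, hmeasure⟩ := h.exists_measure_le_of_isFibrewiseUbiquitous (ν := ν) hm
  refine ⟨max 2 θ₀⁻¹, lt_max_of_lt_left one_lt_two, fun τ hτ I _ v b₀ hub ψ hψ hanti hdiv => ?_⟩
  have hτ1 : 1 < τ := one_lt_two.trans_le ((le_max_left _ _).trans hτ)
  have hτθ : τ⁻¹ ≤ θ₀ := inv_le_of_inv_le₀ hθ₀ ((le_max_right _ _).trans hτ)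
  let S : Set (Fin m → Fin n → K) := {A | (approxSols v ψ A).Infinite}
  have hS : MeasurableSet S := measurableSet_setOf_infinite_approxSols ψ
  have hball : ∀ R > 0, ν (closedBall 0 R \ S) = 0 := by
    intro R hR
    have hfin : ν (closedBall 0 R \ S) ≠ ⊤ :=
      measure_ne_top_of_subset sdiff_subset measure_closedBall_lt_top.ne
    have hε : ∀ ε > 0, ν (closedBall 0 R \ S) ≤ ENNReal.ofReal (ε * D) := fun ε hε => by
      obtain ⟨L, hL, hbad⟩ := hub (R + 1) (by positivity) ε hε
      have hL0 : 0 < L := one_pos.trans_le hL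
      exact hmeasure τ⁻¹ (by positivity) hτθ (continuous_columnEmb b₀) (columnEmb_zero b₀)
        (measurableSet_closedBall.diff hS) hS disjoint_sdiff_left hfin
        ((isFibrewiseUbiquitous_columnEmb hm hψ hanti hL0 hτ1 R).mono sdiff_subset)
        (coveringRadius_pow_succ_le m n L hτ1.le)
        (not_summable_min_radius_div_pow hm n hψ hL0 (by positivity) hdiv) ε hε hbad
    refine le_antisymm (ENNReal.le_of_forall_pos_le_add fun ε hε0 _ => ?_) zero_le
    refine (hε (ε / D) (by positivity)).trans_eq ?_
    rw [div_mul_cancel₀ _ hD.ne', zero_add, ENNReal.ofReal_coe_nnreal]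
  refine measure_mono_null (fun A hA => ?_)
    (measure_iUnion_null fun j : ℕ => hball (j + 1) (by positivity))
  obtain ⟨j, hj⟩ := exists_nat_ge ‖A‖
  exact mem_iUnion.2 ⟨j, mem_closedBall_zero_iff.2 (by linarith), hA⟩

end AffineUbiquity

section Regularity

open Metric Set Filter Topology
open scoped Pointwise

theorem IsAhlforsRegular.lintegral_norm_pow_lt_top {X : Type*} [NormedAddCommGroup X]
    [MeasurableSpace X] [BorelSpace X] {μ : Measure X} {n : ℕ} {c C : ℝ}
    (h : IsAhlforsRegular μ n c C) {ψ : ℝ → ℝ} (hψ : ∀ t, 0 < ψ t) (hanti : AntitoneOn ψ (Ioi 0))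
    (hone : ∀ t ≤ 1, ψ t = 1) {τ : ℝ} (hτ : 1 < τ)
    (hs : Summable fun k : ℕ => (τ ^ k) ^ n * ψ ((τ ^ k) ^ n)) :
    ∫⁻ y, ENNReal.ofReal (ψ (‖y‖ ^ n)) ∂μ < ⊤ := by
  let shell (k : ℕ) : X → ENNReal :=
    (closedBall 0 (τ ^ (k + 1))).indicator fun _ => ENNReal.ofReal (ψ ((τ ^ k) ^ n))
  have hle : ∀ y, ENNReal.ofReal (ψ (‖y‖ ^ n)) ≤
      (closedBall 0 1).indicator (fun _ => 1) y + ∑' k, shell k y := fun y => by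
    rcases le_or_gt ‖y‖ 1 with hy | hy
    · rw [indicator_of_mem (mem_closedBall_zero_iff.2 hy),
        hone _ (pow_le_one₀ (norm_nonneg y) hy), ENNReal.ofReal_one]
      exact le_self_add
    · obtain ⟨k, hk, hk'⟩ := exists_nat_pow_near hy.le hτ
      calc ENNReal.ofReal (ψ (‖y‖ ^ n)) ≤ ENNReal.ofReal (ψ ((τ ^ k) ^ n)) :=
            ENNReal.ofReal_le_ofReal (hanti (mem_Ioi.2 (by positivity))
              (mem_Ioi.2 (by positivity)) (by gcongr))
        _ = shell k y := by simp only [shell, indicator_of_mem (mem_closedBall_zero_iff.2 hk'.le)]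
        _ ≤ _ := (ENNReal.le_tsum k).trans le_add_self
  have hshell : ∀ k, ∫⁻ y, shell k y ∂μ ≤
      ENNReal.ofReal (C * τ ^ n * ((τ ^ k) ^ n * ψ ((τ ^ k) ^ n))) := fun k => by
    have hball : μ (closedBall 0 (τ ^ (k + 1))) ≤ ENNReal.ofReal (C * (τ ^ (k + 1)) ^ n) := by
      rw [← ofReal_measureReal (h.ne_top _ _)]
      exact ENNReal.ofReal_le_ofReal (h.upper 0 _ (by positivity))
    rw [lintegral_indicator_const measurableSet_closedBall]
    refine (mul_le_mul_right hball _).trans_eq ?_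
    rw [← ENNReal.ofReal_mul (hψ _).le, pow_succ, mul_pow]
    ring_nf
  calc ∫⁻ y, ENNReal.ofReal (ψ (‖y‖ ^ n)) ∂μ
      ≤ ∫⁻ y, (closedBall 0 1).indicator (fun _ => 1) y + ∑' k, shell k y ∂μ := lintegral_mono hle
    _ = μ (closedBall 0 1) + ∑' k, ∫⁻ y, shell k y ∂μ := by
        rw [lintegral_add_left (measurable_const.indicator measurableSet_closedBall),
          lintegral_indicator_const measurableSet_closedBall, one_mul, lintegral_tsum fun k =>
            (measurable_const.indicator measurableSet_closedBall).aemeasurable]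
    _ < ⊤ := ENNReal.add_lt_top.2 ⟨(h.ne_top _ _).lt_top, (ENNReal.tsum_le_tsum hshell).trans_lt
        (hs.mul_left (C * τ ^ n)).tsum_ofReal_lt_top⟩

theorem isAhlforsRegular_addHaar {E : Type*} [NormedAddCommGroup E] [NormedSpace ℝ E]
    [FiniteDimensional ℝ E] [MeasurableSpace E] [BorelSpace E] (μ : Measure E)
    [μ.IsAddHaarMeasure] :
    IsAhlforsRegular μ (Module.finrank ℝ E) (μ.real (ball 0 1)) (μ.real (ball 0 1)) := by
  have hball : 0 < μ.real (ball (0 : E) 1) :=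
    ENNReal.toReal_pos (measure_ball_pos μ 0 one_pos).ne' measure_ball_lt_top.ne
  have hreal : ∀ (x : E) (r : ℝ), 0 < r →
      μ.real (closedBall x r) = μ.real (ball 0 1) * r ^ Module.finrank ℝ E := fun x r hr => by
    rw [Measure.addHaar_real_closedBall μ x hr.le, mul_comm]
  exact ⟨hball, hball, fun x r => measure_closedBall_lt_top.ne,
    fun x r hr => (hreal x r hr).ge, fun x r hr => (hreal x r hr).le⟩

variable {p : ℕ} [Fact p.Prime] {n : ℕ}

theorem existsUnique_norm_sub_natCast_lt_one {x : ℚ_[p]} (hx : ‖x‖ ≤ 1) :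
    ∃! j : Fin p, ‖x - (j : ℕ)‖ < 1 := by
  have hiff : ∀ j : ℕ, (⟨x, hx⟩ - j : ℤ_[p]) ∈ IsLocalRing.maximalIdeal ℤ_[p] ↔ ‖x - j‖ < 1 :=
    fun j => (IsLocalRing.mem_maximalIdeal _).trans PadicInt.mem_nonunits
  obtain ⟨j, ⟨hjp, hj⟩, huniq⟩ := PadicInt.existsUnique_mem_range ⟨x, hx⟩
  exact ⟨⟨j, hjp⟩, (hiff j).1 hj, fun i hi => Fin.ext (huniq i ⟨i.2, (hiff i).2 hi⟩)⟩

theorem existsUnique_dist_natCast_lt_one {x : Fin n → ℚ_[p]} (hx : ‖x‖ ≤ 1) :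
    ∃! j : Fin n → Fin p, dist x (fun b => ((j b : ℕ) : ℚ_[p])) < 1 := by
  choose j hj huniq using fun b =>
    existsUnique_norm_sub_natCast_lt_one ((norm_le_pi_norm x b).trans hx)
  simp only [dist_pi_lt_iff one_pos]
  exact ⟨j, hj, fun i hi => funext fun b => huniq b _ (hi b)⟩

variable [MeasurableSpace ℚ_[p]] [BorelSpace ℚ_[p]] (μ : Measure (Fin n → ℚ_[p]))
  [μ.IsAddHaarMeasure]

theorem padic_measure_closedBall_one : μ (closedBall 0 1) = p ^ n * μ (ball 0 1) := by
  let z (j : Fin n → Fin p) : Fin n → ℚ_[p] := fun b => ((j b : ℕ) : ℚ_[p])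
  have hz : ∀ j, ‖z j‖ ≤ 1 := fun j => (pi_norm_le_iff_of_nonneg zero_le_one).2 fun b => by
    exact_mod_cast Padic.norm_int_le_one ((j b : ℕ) : ℤ)
  have hsub : ∀ j, ball (z j) 1 ⊆ closedBall 0 1 := fun j => by
    rw [IsUltrametricDist.closedBall_eq_of_mem (mem_closedBall_zero_iff.2 (hz j))]
    exact ball_subset_closedBall
  have hcover : closedBall 0 1 = ⋃ j, ball (z j) 1 := by
    refine Subset.antisymm (fun x hx => ?_) (iUnion_subset hsub)
    exact mem_iUnion.2 (existsUnique_dist_natCast_lt_one (mem_closedBall_zero_iff.1 hx)).exists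
  have hdisj : Pairwise (Function.onFun Disjoint fun j => ball (z j) 1) := fun i j hij =>
    disjoint_left.2 fun x hxi hxj => hij
      ((existsUnique_dist_natCast_lt_one (mem_closedBall_zero_iff.1 (hsub i hxi))).unique hxi hxj)
  rw [hcover, measure_iUnion hdisj fun j => measurableSet_ball, tsum_fintype]
  simp [Measure.addHaar_ball_center]

theorem padic_measureReal_closedBall_zpow (k : ℤ) :
    μ.real (closedBall 0 ((p : ℝ) ^ k)) = ((p : ℝ) ^ k) ^ n * μ.real (closedBall 0 1) := by
  have hp : 0 < p := (Fact.out : p.Prime).pos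
  let u : ℚ_[p]ˣ := Units.mk0 (p : ℚ_[p])⁻¹ (inv_ne_zero (by exact_mod_cast hp.ne'))
  have hu : ∀ l : ℤ, ‖((u ^ l : ℚ_[p]ˣ) : ℚ_[p])‖ = (p : ℝ) ^ l := fun l => by
    simp [u]
  have hclosedBall : closedBall (0 : Fin n → ℚ_[p]) ((p : ℝ) ^ k) = u ^ k • closedBall 0 1 := by
    rw [Units.smul_def, smul_closedBall' (u ^ k).ne_zero, hu, smul_zero, mul_one]
  have hball : u • ball (0 : Fin n → ℚ_[p]) 1 = closedBall 0 1 := by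
    rw [Units.smul_def, ← zpow_one u, _root_.smul_ball (u ^ (1 : ℤ)).ne_zero, hu, smul_zero]
    ext x
    have hcoord : ∀ b, ‖x b‖ ≤ 1 ↔ ‖x b‖ < p := fun b => by
      simpa using Padic.norm_le_pow_iff_norm_lt_pow_add_one (x b) 0
    rw [mul_one, zpow_one, mem_ball_zero_iff, mem_closedBall_zero_iff,
      pi_norm_lt_iff (by positivity), pi_norm_le_iff_of_nonneg zero_le_one]
    simp only [hcoord]
  have hχ : distribHaarChar (Fin n → ℚ_[p]) u = (p : NNReal) ^ n := by
    refine distribHaarChar_eq_of_measure_smul_eq_mul (measure_ball_pos μ 0 one_pos).ne'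
      measure_ball_lt_top.ne ?_
    rw [hball, padic_measure_closedBall_one]
    simp
  rw [measureReal_def, hclosedBall, ← distribHaarChar_mul, map_zpow, hχ, ENNReal.toReal_mul,
    ← measureReal_def, ENNReal.coe_toReal, NNReal.coe_zpow, NNReal.coe_pow, NNReal.coe_natCast,
    ← zpow_natCast, zpow_comm, zpow_natCast]

theorem exists_isAhlforsRegular_padic : ∃ c C : ℝ, IsAhlforsRegular μ n c C := by
  have hp0 : (0 : ℝ) < p := by exact_mod_cast (Fact.out : p.Prime).pos
  have hp1 : (1 : ℝ) < p := by exact_mod_cast (Fact.out : p.Prime).one_lt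
  let M := μ.real (closedBall 0 1)
  have hM : 0 < M :=
    ENNReal.toReal_pos (measure_closedBall_pos μ 0 one_pos).ne' measure_closedBall_lt_top.ne
  refine ⟨M / p ^ n, M * p ^ n, by positivity, by positivity,
    fun x r => measure_closedBall_lt_top.ne, fun x r hr => ?_, fun x r hr => ?_⟩
  all_goals
    obtain ⟨k, hk, hk'⟩ := exists_mem_Ico_zpow hr hp1
    rw [Measure.addHaar_real_closedBall_center]
  · calc M / p ^ n * r ^ n ≤ M / p ^ n * ((p : ℝ) ^ (k + 1)) ^ n := by gcongr
      _ = μ.real (closedBall 0 ((p : ℝ) ^ k)) := by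
          rw [padic_measureReal_closedBall_zpow, zpow_add_one₀ hp0.ne', mul_pow]
          field_simp
          rfl
      _ ≤ _ := measureReal_mono (closedBall_subset_closedBall hk) measure_closedBall_lt_top.ne
  · calc μ.real (closedBall 0 r) ≤ μ.real (closedBall 0 ((p : ℝ) ^ (k + 1))) :=
          measureReal_mono (closedBall_subset_closedBall hk'.le) measure_closedBall_lt_top.ne
      _ = M * p ^ n * ((p : ℝ) ^ k) ^ n := by
          rw [padic_measureReal_closedBall_zpow, zpow_add_one₀ hp0.ne', mul_pow]
          ring
      _ ≤ M * p ^ n * r ^ n := by gcongr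

end Regularity

section Counting

open Metric Set Module

theorem IsAhlforsRegular.exists_card_filter_dist_le {X β : Type*} [PseudoMetricSpace X]
    [MeasurableSpace X] [BorelSpace X] {μ : Measure X} {m : ℕ} {c C : ℝ}
    (h : IsAhlforsRegular μ m c C) {W : Finset β} (hW : W.Nonempty) {f : β → X} {x : X} {R ρ : ℝ}
    (hρ : 0 < ρ) (hR : 0 ≤ R) (hf : ∀ w ∈ W, f w ∈ closedBall x R) :
    ∃ w₀ ∈ W, W.card * (c * (ρ / 2) ^ m) ≤
      (W.filter fun w => dist (f w) (f w₀) ≤ ρ).card * (C * (R + ρ / 2) ^ m) := by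
  classical
  obtain ⟨Y, hYW, hsep, hcover⟩ := h.exists_separated_finset (half_pos hρ) hR
    (image_subset_iff.2 hf : f '' W ⊆ closedBall x R)
  have hYcard := h.card_mul_le_of_separated (half_pos hρ) hR hsep
    (hYW.trans (image_subset_iff.2 hf))
  rw [mul_div_cancel₀ ρ two_ne_zero] at hcover
  have : Nonempty X := ⟨x⟩
  choose! g hgY hg using fun w (hw : w ∈ W) => hcover (f w) (mem_image_of_mem f hw)
  obtain ⟨w, hw⟩ := hW
  have hY : Y.Nonempty := ⟨g w, hgY w hw⟩
  obtain ⟨y, hy, hfiber⟩ := Finset.exists_le_card_fiber_of_nsmul_le_card_of_maps_to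
    (M := ℝ) (b := W.card / Y.card) hgY hY (by
      rw [nsmul_eq_mul, mul_div_cancel₀ _ (Nat.cast_ne_zero.2 hY.card_ne_zero)])
  obtain ⟨w₀, hw₀, rfl⟩ := hYW hy
  refine ⟨w₀, hw₀, ?_⟩
  have hcard : (W.card : ℝ) / Y.card ≤ (W.filter fun w => dist (f w) (f w₀) ≤ ρ).card :=
    hfiber.trans <| Nat.cast_le.2 <| Finset.card_le_card fun w hw => by
      obtain ⟨hwW, hgw⟩ := Finset.mem_filter.1 hw
      exact Finset.mem_filter.2 ⟨hwW, hgw ▸ hg w hwW⟩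
  rw [div_le_iff₀ (Nat.cast_pos.2 hY.card_pos)] at hcard
  have hc := h.c_pos
  calc W.card * (c * (ρ / 2) ^ m)
      ≤ (W.filter fun w => dist (f w) (f w₀) ≤ ρ).card * Y.card * (c * (ρ / 2) ^ m) := by gcongr
    _ ≤ (W.filter fun w => dist (f w) (f w₀) ≤ ρ).card * (C * (R + ρ / 2) ^ m) := by
      rw [mul_assoc]
      gcongr

variable {E : Type*} [NormedAddCommGroup E] [NormedSpace ℝ E] [FiniteDimensional ℝ E]

theorem card_le_pow_finrank_of_separated {Y : Finset E} {δ R : ℝ} (hδ : 0 < δ) (hR : 0 ≤ R)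
    (hsep : (Y : Set E).Pairwise fun y z => δ < dist y z) (hY : ∀ y ∈ Y, ‖y‖ ≤ R) :
    Y.card ≤ (2 * R / δ + 1) ^ finrank ℝ E := by
  borelize E
  have h := isAhlforsRegular_addHaar (Measure.addHaar : Measure E)
  have hcard := h.card_mul_le_of_separated (x := 0) (half_pos hδ) hR
    (by rwa [mul_div_cancel₀ δ two_ne_zero]) fun y hy => mem_closedBall_zero_iff.2 (hY y hy)
  rw [mul_left_comm, mul_le_mul_iff_right₀ h.c_pos, ← le_div_iff₀ (by positivity), ← div_pow]
    at hcard
  convert! hcard using 2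
  field_simp

theorem span_eq_top_of_lt_card {Λ : AddSubgroup E} {δ R : ℝ} (hδ : 0 < δ) (hR : 0 ≤ R)
    (hmin : ∀ v ∈ Λ, ‖v‖ ≤ δ → v = 0) {W : Finset E} (hW : ∀ w ∈ W, w ∈ Λ ∧ ‖w‖ ≤ R)
    (hcard : (2 * R / δ + 1) ^ (finrank ℝ E - 1) < W.card) :
    Submodule.span ℝ (W : Set E) = ⊤ := by
  classical
  by_contra hne
  set V := Submodule.span ℝ (W : Set E)
  have hWV : ∀ w ∈ W, w ∈ V := fun w hw => Submodule.subset_span hw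
  let Y : Finset V := W.subtype (· ∈ V)
  have hY : ∀ y ∈ Y, (y : E) ∈ W := fun y hy => Finset.mem_subtype.1 hy
  have hsep : (Y : Set V).Pairwise fun y z => δ < dist y z := fun y hy z hz hyz => by
    by_contra! hle
    have hsub := hmin _ (Λ.sub_mem (hW y (hY y hy)).1 (hW z (hY z hz)).1)
      ((dist_eq_norm (y : E) z).symm.trans_le hle)
    exact hyz (Subtype.ext (sub_eq_zero.1 hsub))
  refine hcard.not_ge ?_
  calc (W.card : ℝ) = Y.card := by rw [Finset.card_subtype, Finset.filter_true_of_mem hWV]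
    _ ≤ (2 * R / δ + 1) ^ finrank ℝ V :=
      card_le_pow_finrank_of_separated hδ hR hsep fun y hy => (hW y (hY y hy)).2
    _ ≤ (2 * R / δ + 1) ^ (finrank ℝ E - 1) :=
      pow_le_pow_right₀ (le_add_of_nonneg_left (by positivity))
        (Nat.le_sub_one_of_lt (Submodule.finrank_lt hne))

theorem exists_mem_addSubgroup_norm_add_nsmul_sub_le {Λ : AddSubgroup E} {δ R : ℝ} (hδ : 0 < δ)
    (hR : 0 ≤ R) (hmin : ∀ v ∈ Λ, ‖v‖ ≤ δ → v = 0) {W : Finset E}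
    (hW : ∀ w ∈ W, w ∈ Λ ∧ ‖w‖ ≤ R) (hcard : (2 * R / δ + 1) ^ (finrank ℝ E - 1) < W.card)
    (v y : E) {N : ℕ} (hN : N ≠ 0) : ∃ u ∈ Λ, ‖v + N • u - y‖ ≤ N * (finrank ℝ E * R) := by
  have hspan := (span_eq_top_of_lt_card hδ hR hmin hW hcard).ge
  let b := Basis.ofSpan hspan
  have := FiniteDimensional.fintypeBasisIndex b
  have hb : ∀ j, b j ∈ Λ ∧ ‖b j‖ ≤ R := fun j => hW _ (Basis.ofSpan_subset hspan ⟨j, rfl⟩)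
  have hspanΛ : (Submodule.span ℤ (range b)) ≤ Λ.toIntSubmodule :=
    Submodule.span_le.2 (range_subset_iff.2 fun j => (hb j).1)
  let x : E := (N : ℝ)⁻¹ • (y - v)
  refine ⟨ZSpan.floor b x, hspanΛ (ZSpan.floor b x).2, ?_⟩
  calc ‖v + N • (ZSpan.floor b x : E) - y‖ = ‖(N : ℝ) • ZSpan.fract b x‖ := by
        rw [ZSpan.fract_apply, smul_sub, smul_inv_smul₀ (Nat.cast_ne_zero.2 hN), ← norm_neg,
          Nat.cast_smul_eq_nsmul]
        congr 1
        abel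
    _ = N * ‖ZSpan.fract b x‖ := by rw [norm_smul, Real.norm_natCast]
    _ ≤ N * (finrank ℝ E * R) := by
        gcongr
        refine (ZSpan.norm_fract_le b x).trans ?_
        rw [finrank_eq_card_basis b, ← nsmul_eq_mul]
        exact Finset.sum_le_card_nsmul _ _ _ fun j _ => (hb j).2

end Counting

section IntegerBoxes

variable {n : ℕ}

/-- The integer vectors in the closed cube with center `x` and half-side `X`. -/
noncomputable def intCube (x : Fin n → ℝ) (X : ℝ) : Finset (Fin n → ℤ) :=
  Fintype.piFinset fun j => Finset.Icc ⌈x j - X⌉ ⌊x j + X⌋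

theorem mem_intCube {x : Fin n → ℝ} {X : ℝ} (hX : 0 ≤ X) {z : Fin n → ℤ} :
    z ∈ intCube x X ↔ ‖(fun j => (z j : ℝ)) - x‖ ≤ X := by
  rw [intCube, Fintype.mem_piFinset, pi_norm_le_iff_of_nonneg hX]
  refine forall_congr' fun j => ?_
  rw [Finset.mem_Icc, Int.ceil_le, Int.le_floor, Pi.sub_apply, Real.norm_eq_abs, abs_le]
  constructor <;> rintro ⟨h1, h2⟩ <;> constructor <;> linarith

theorem card_intCube (x : Fin n → ℝ) (X : ℝ) :
    ((intCube x X).card : ℝ) = ∏ j, ((Finset.Icc ⌈x j - X⌉ ⌊x j + X⌋).card : ℝ) := by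
  rw [intCube, Fintype.card_piFinset, Nat.cast_prod]

theorem card_intCube_le (x : Fin n → ℝ) {X : ℝ} (hX : 0 ≤ X) :
    (intCube x X).card ≤ (2 * X + 1) ^ n := by
  rw [card_intCube, ← Fin.prod_const n (2 * X + 1)]
  refine Finset.prod_le_prod (fun _ _ => Nat.cast_nonneg _) fun j _ => ?_
  rw [Int.card_Icc, ← Int.cast_natCast, Int.ofNat_toNat, Int.cast_max]
  push_cast
  exact max_le (by linarith [Int.floor_le (x j + X), Int.le_ceil (x j - X)]) (by positivity)

theorem pow_le_card_intCube (x : Fin n → ℝ) {X : ℝ} (hX : 1 ≤ X) :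
    X ^ n ≤ (intCube x X).card := by
  rw [card_intCube, ← Fin.prod_const n X]
  refine Finset.prod_le_prod (fun _ _ => by positivity) fun j _ => ?_
  rw [Int.card_Icc, ← Int.cast_natCast, Int.ofNat_toNat, Int.cast_max]
  push_cast
  exact le_max_of_le_left
    (by linarith [Int.lt_floor_add_one (x j + X), Int.ceil_lt_add_one (x j - X)])

end IntegerBoxes

section FirstMoment

open Set Metric

variable {m n : ℕ} {K : Type*} [NormedField K] [MeasurableSpace K]

theorem measure_exists_norm_affForm_le {α β : Type*} (ν : Measure (Fin m → Fin n → K))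
    {R D ρ B : ℝ} (hD : 0 ≤ D) (hρ : 0 < ρ)
    (hmeas : ∀ v : (Fin m → K) × (Fin n → K), v.2 ≠ 0 → ∀ ρ > 0,
      ν (closedBall 0 R ∩ {A | ‖affForm A v‖ ≤ ρ}) ≤ ENNReal.ofReal (D * (ρ / ‖v.2‖) ^ m))
    (Q : Finset α) (q : α → Fin n → K) (hq : ∀ a ∈ Q, q a ≠ 0)
    (S : α → Finset β) (P : α → β → Fin m → K) (hP : ∀ a ∈ Q, (S a).card ≤ (B * ‖q a‖) ^ m) :
    ν (closedBall 0 R ∩ {A | ∃ a ∈ Q, ∃ b ∈ S a, ‖affForm A (P a b, q a)‖ ≤ ρ}) ≤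
      ENNReal.ofReal (Q.card * (D * (B * ρ) ^ m)) := by
  have hsub : closedBall 0 R ∩ {A | ∃ a ∈ Q, ∃ b ∈ S a, ‖affForm A (P a b, q a)‖ ≤ ρ} ⊆
      ⋃ a ∈ Q, ⋃ b ∈ S a, closedBall 0 R ∩ {A | ‖affForm A (P a b, q a)‖ ≤ ρ} := by
    rintro A ⟨hA, a, ha, b, hb, hle⟩
    exact mem_biUnion ha (mem_biUnion hb ⟨hA, hle⟩)
  have hone : ∀ a ∈ Q, ν (⋃ b ∈ S a, closedBall 0 R ∩ {A | ‖affForm A (P a b, q a)‖ ≤ ρ}) ≤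
      ENNReal.ofReal (D * (B * ρ) ^ m) := fun a ha => by
    have hqa : 0 < ‖q a‖ := norm_pos_iff.2 (hq a ha)
    refine (measure_biUnion_finset_le _ _).trans <|
      (Finset.sum_le_card_nsmul _ _ (ENNReal.ofReal (D * (ρ / ‖q a‖) ^ m))
        fun b _ => hmeas (P a b, q a) (hq a ha) ρ hρ).trans ?_
    rw [← ENNReal.ofReal_nsmul, nsmul_eq_mul]
    refine ENNReal.ofReal_le_ofReal ?_
    calc (S a).card * (D * (ρ / ‖q a‖) ^ m)
        ≤ (B * ‖q a‖) ^ m * (D * (ρ / ‖q a‖) ^ m) :=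
          mul_le_mul_of_nonneg_right (hP a ha) (by positivity)
      _ = D * (B * ρ) ^ m := by
          rw [mul_left_comm, ← mul_pow]
          congr 2
          field_simp
  refine (measure_mono hsub).trans <| (measure_biUnion_finset_le _ _).trans <|
    (Finset.sum_le_card_nsmul _ _ _ hone).trans_eq ?_
  rw [← ENNReal.ofReal_nsmul, nsmul_eq_mul]

end FirstMoment

section FormVector

variable {k m n : ℕ}

/-- The embedding of rational vectors into `K ^ k`. -/
noncomputable def castVec (K : Type*) [DivisionRing K] [CharZero K] {k : ℕ} :
    (Fin k → ℚ) →+ (Fin k → K) :=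
  (Rat.castHom K).toAddMonoidHom.compLeft (Fin k)

theorem castVec_apply (K : Type*) [DivisionRing K] [CharZero K] (x : Fin k → ℚ) (j : Fin k) :
    castVec K x j = x j := rfl

theorem castVec_injective (K : Type*) [DivisionRing K] [CharZero K] :
    Function.Injective (castVec K (k := k)) := fun x y hxy =>
  funext fun j => Rat.cast_injective (congrFun hxy j : (x j : K) = y j)

/-- The embedding of pairs `(P, q)` of rational vectors into `K ^ m × K ^ n`. -/
noncomputable def castPair (K : Type*) [DivisionRing K] [CharZero K] :
    (Fin m → ℚ) × (Fin n → ℚ) →+ (Fin m → K) × (Fin n → K) :=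
  (castVec K).prodMap (castVec K)

/-- The renormalized vector of linear forms `(σ (A q + P), t q)` attached to a pair `(P, q)` of
rational vectors. In it, simultaneous bounds on `A q + P` and `q` become a bound on one vector. -/
noncomputable def formVec (σ t : ℝ) (A : Fin m → Fin n → ℝ) :
    (Fin m → ℚ) × (Fin n → ℚ) →+ (Fin m → ℝ) × (Fin n → ℝ) :=
  ((σ • affForm A).prod (t • LinearMap.snd ℝ _ _)).toAddMonoidHom.comp (castPair ℝ)

variable {σ t : ℝ} (A : Fin m → Fin n → ℝ)

theorem formVec_apply (z : (Fin m → ℚ) × (Fin n → ℚ)) :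
    formVec σ t A z = (σ • affForm A (castPair ℝ z), t • castVec ℝ z.2) := rfl

theorem norm_formVec (hσ : 0 ≤ σ) (ht : 0 ≤ t) (z : (Fin m → ℚ) × (Fin n → ℚ)) :
    ‖formVec σ t A z‖ = max (σ * ‖affForm A (castPair ℝ z)‖) (t * ‖castVec ℝ z.2‖) := by
  rw [formVec_apply, Prod.norm_mk, norm_smul, norm_smul, Real.norm_of_nonneg hσ,
    Real.norm_of_nonneg ht]

theorem formVec_injective (hσ : σ ≠ 0) (ht : t ≠ 0) : Function.Injective (formVec σ t A) := by
  refine (injective_iff_map_eq_zero _).2 fun z hz => ?_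
  rw [formVec_apply, Prod.mk_eq_zero, smul_eq_zero_iff_right hσ, smul_eq_zero_iff_right ht] at hz
  have hP := norm_le_norm_affForm_add A (castPair ℝ z)
  rw [hz.1, show (castPair ℝ z).2 = 0 from hz.2, norm_zero, norm_zero, mul_zero, add_zero,
    norm_le_zero_iff] at hP
  exact Prod.ext (castVec_injective ℝ (hP.trans (map_zero _).symm))
    (castVec_injective ℝ (hz.2.trans (map_zero _).symm))

theorem exists_mem_norm_formVec_sub_le {δ R : ℝ} (hσ : σ ≠ 0) (ht : t ≠ 0) (hδ : 0 < δ)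
    (hR : 0 ≤ R) {G : AddSubgroup ((Fin m → ℚ) × (Fin n → ℚ))}
    (hmin : ∀ z ∈ G, ‖formVec σ t A z‖ ≤ δ → z = 0) {W : Finset ((Fin m → ℚ) × (Fin n → ℚ))}
    (hW : ∀ w ∈ W, w ∈ G ∧ ‖formVec σ t A w‖ ≤ R)
    (hcard : (2 * R / δ + 1) ^ (m + n - 1) < W.card) (z : (Fin m → ℚ) × (Fin n → ℚ))
    (y : (Fin m → ℝ) × (Fin n → ℝ)) {N : ℕ} (hN : N ≠ 0) :
    ∃ u ∈ G, ‖formVec σ t A (z + N • u) - y‖ ≤ N * ((m + n) * R) := by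
  classical
  have hdim : Module.finrank ℝ ((Fin m → ℝ) × (Fin n → ℝ)) = m + n := by
    rw [Module.finrank_prod, Module.finrank_fin_fun, Module.finrank_fin_fun]
  have hcov := exists_mem_addSubgroup_norm_add_nsmul_sub_le (Λ := G.map (formVec σ t A)) hδ hR
    (W := W.image (formVec σ t A)) ?_ ?_ ?_ (formVec σ t A z) y hN
  · obtain ⟨_, ⟨u, hu, rfl⟩, hle⟩ := hcov
    refine ⟨u, hu, ?_⟩
    rwa [map_add, map_nsmul, ← Nat.cast_add, ← hdim]
  · rintro _ ⟨w, hw, rfl⟩ hle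
    rw [hmin w hw hle, map_zero]
  · exact Finset.forall_mem_image.2 fun w hw => ⟨⟨w, (hW w hw).1, rfl⟩, (hW w hw).2⟩
  · rwa [hdim, Finset.card_image_of_injective _ (formVec_injective A hσ ht)]

end FormVector

section RealPlace

open Set Metric Filter

variable {k m n : ℕ}

/-- The embedding of integer vectors into rational vectors. -/
def intVec {k : ℕ} : (Fin k → ℤ) →+ (Fin k → ℚ) := (Int.castAddHom ℚ).compLeft (Fin k)

/-- The embedding of pairs of integer vectors into pairs of rational vectors. -/
def intPair : (Fin m → ℤ) × (Fin n → ℤ) →+ (Fin m → ℚ) × (Fin n → ℚ) := intVec.prodMap intVec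

theorem castVec_intVec (K : Type*) [DivisionRing K] [CharZero K] (q : Fin k → ℤ) :
    castVec K (intVec q) = fun j => (q j : K) :=
  funext fun j => Rat.cast_intCast (q j)

theorem intVec_injective : Function.Injective (intVec (k := k)) := fun _ _ h =>
  funext fun j => Int.cast_injective (congrFun h j)

theorem intPair_injective : Function.Injective (intPair (m := m) (n := n)) :=
  intVec_injective.prodMap intVec_injective

theorem one_le_norm_castVec_intVec {q : Fin k → ℤ} (hq : q ≠ 0) :
    1 ≤ ‖castVec ℝ (intVec q)‖ := by
  obtain ⟨j, hj⟩ := Function.ne_iff.1 hq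
  refine le_trans ?_ (norm_le_pi_norm _ j)
  rw [castVec_intVec, Int.norm_cast_real, Int.norm_eq_abs]
  exact mod_cast Int.one_le_abs hj

theorem mem_intCube_zero {X : ℝ} (hX : 0 ≤ X) {q : Fin k → ℤ} :
    q ∈ intCube 0 X ↔ ‖castVec ℝ (intVec q)‖ ≤ X := by
  rw [mem_intCube hX, sub_zero, castVec_intVec]

theorem card_erase_zero_intCube_le {X : ℝ} (hX : 0 ≤ X) :
    (((intCube (n := k) 0 X).erase 0).card : ℝ) ≤ (3 * X) ^ k := by
  rcases lt_or_ge X 1 with hX1 | hX1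
  · have hempty : (intCube (n := k) 0 X).erase 0 = ∅ :=
      Finset.eq_empty_of_forall_notMem fun q hq =>
        ((one_le_norm_castVec_intVec (Finset.ne_of_mem_erase hq)).trans
          ((mem_intCube_zero hX).1 (Finset.mem_of_mem_erase hq))).not_gt hX1
    rw [hempty, Finset.card_empty, Nat.cast_zero]
    positivity
  · calc (((intCube (n := k) 0 X).erase 0).card : ℝ)
        ≤ (intCube (n := k) 0 X).card := by exact_mod_cast Finset.card_erase_le
      _ ≤ (2 * X + 1) ^ k := card_intCube_le _ hX
      _ ≤ (3 * X) ^ k := by gcongr; linarith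

theorem isAhlforsRegular_volume_fin_fun (k : ℕ) :
    IsAhlforsRegular (volume : Measure (Fin k → ℝ)) k (volume.real (ball (0 : Fin k → ℝ) 1))
      (volume.real (ball (0 : Fin k → ℝ) 1)) := by
  simpa only [Module.finrank_fin_fun] using
    isAhlforsRegular_addHaar (volume : Measure (Fin k → ℝ))

/-- The pair `(P, q)` of integer vectors for which `A q + P` has entries in `[0, 1)`. -/
noncomputable def fractPair (A : Fin m → Fin n → ℝ) (q : Fin n → ℤ) :
    (Fin m → ℤ) × (Fin n → ℤ) :=
  (fun a => -⌊affForm A (0, castVec ℝ (intVec q)) a⌋, q)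

theorem affForm_fractPair (A : Fin m → Fin n → ℝ) (q : Fin n → ℤ) :
    affForm A (castPair ℝ (intPair (fractPair A q))) =
      fun a => Int.fract (affForm A (0, castVec ℝ (intVec q)) a) := by
  funext a
  change (∑ b, A a b * castVec ℝ (intVec q) b) + ((-⌊_⌋ : ℤ) : ℚ) = _ - (_ : ℝ)
  rw [Rat.cast_intCast, Int.cast_neg, ← sub_eq_add_neg]
  congr 1
  exact (add_zero _).symm

theorem norm_affForm_fractPair_le (A : Fin m → Fin n → ℝ) (q : Fin n → ℤ) :
    ‖affForm A (castPair ℝ (intPair (fractPair A q)))‖ ≤ 1 := by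
  rw [affForm_fractPair]
  refine (pi_norm_le_iff_of_nonneg zero_le_one).2 fun a => ?_
  rw [Real.norm_of_nonneg (Int.fract_nonneg _)]
  exact (Int.fract_lt_one _).le

theorem exists_card_filter_dist_fractPair_le {R T σ : ℝ} (hR : 2 ≤ R) (hT : 1 ≤ T) (hRσ : R ≤ σ)
    (hσT : σ ^ m = T ^ n) (A : Fin m → Fin n → ℝ) :
    ∃ q₀ ∈ intCube (n := n) 0 (R * T / 2), (R / 4) ^ (m + n) ≤
      ((intCube 0 (R * T / 2)).filter fun q =>
        dist (affForm A (castPair ℝ (intPair (fractPair A q))))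
          (affForm A (castPair ℝ (intPair (fractPair A q₀)))) ≤ R / σ).card := by
  have hσ : 0 < σ := by linarith
  have hRT : 1 ≤ R * T / 2 := by nlinarith
  have hreg := isAhlforsRegular_volume_fin_fun m
  have hQ := pow_le_card_intCube (n := n) 0 hRT
  obtain ⟨q₀, hq₀, hcard⟩ := hreg.exists_card_filter_dist_le
    (Finset.card_pos.1 (Nat.cast_pos.1 (lt_of_lt_of_le (by positivity) hQ)))
    (f := fun q => affForm A (castPair ℝ (intPair (fractPair A q)))) (x := 0) (ρ := R / σ)
    (by positivity) zero_le_one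
    fun q _ => mem_closedBall_zero_iff.2 (norm_affForm_fractPair_le A q)
  refine ⟨q₀, hq₀, ?_⟩
  rw [mul_left_comm, mul_left_comm _ (volume.real _), mul_le_mul_iff_right₀ hreg.c_pos] at hcard
  have hone : 1 + R / σ / 2 ≤ 2 := by linarith [(div_le_one hσ).2 hRσ]
  refine le_of_mul_le_mul_right ?_ (by positivity : (0 : ℝ) < 2 ^ (m + n))
  calc (R / 4) ^ (m + n) * 2 ^ (m + n) = (R * T / 2) ^ n * (R / σ / 2) ^ m := by
        rw [← mul_pow, mul_div_right_comm R, div_right_comm R, mul_pow (R / 2), div_pow (R / 2),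
          hσT, show R / 4 * 2 = R / 2 by ring, pow_add]
        field_simp
    _ ≤ _ := (mul_le_mul_of_nonneg_right hQ (by positivity)).trans hcard
    _ ≤ _ * 2 ^ (m + n) := by
        gcongr
        exact (pow_le_pow_left₀ (by positivity) hone m).trans
          (pow_le_pow_right₀ one_le_two (Nat.le_add_right m n))

theorem exists_card_intPair_norm_formVec_le {R T σ : ℝ} (hR : 2 ≤ R) (hT : 1 ≤ T) (hRσ : R ≤ σ)
    (hσT : σ ^ m = T ^ n) (A : Fin m → Fin n → ℝ) :
    ∃ W : Finset ((Fin m → ℚ) × (Fin n → ℚ)),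
      (∀ w ∈ W, w ∈ intPair.range ∧ ‖formVec σ T⁻¹ A w‖ ≤ R) ∧ (R / 4) ^ (m + n) ≤ W.card := by
  classical
  have hσ : 0 < σ := by linarith
  have hRT : 0 ≤ R * T / 2 := by positivity
  obtain ⟨q₀, hq₀, hcard⟩ := exists_card_filter_dist_fractPair_le hR hT hRσ hσT A
  let z (q : Fin n → ℤ) : (Fin m → ℚ) × (Fin n → ℚ) := intPair (fractPair A q - fractPair A q₀)
  have hz : Function.Injective z := fun q q' h =>
    congrArg Prod.snd (sub_left_injective (intPair_injective h))
  refine ⟨Finset.image z _, Finset.forall_mem_image.2 fun q hq => ⟨⟨_, rfl⟩, ?_⟩,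
    hcard.trans_eq (by rw [Finset.card_image_of_injective _ hz])⟩
  obtain ⟨hqQ, hdist⟩ := Finset.mem_filter.1 hq
  rw [mem_intCube_zero hRT] at hqQ hq₀
  simp only [z]
  rw [norm_formVec A hσ.le (by positivity), map_sub, map_sub, map_sub, ← dist_eq_norm,
    Prod.snd_sub, map_sub, max_le_iff, ← le_div_iff₀' hσ, inv_mul_le_iff₀ (by positivity)]
  exact ⟨hdist, (norm_sub_le _ _).trans ((add_le_add hqQ hq₀).trans_eq (by ring))⟩

theorem exists_add_one_pow_pred_lt_div_pow {d : ℕ} (hd : d ≠ 0) {δ : ℝ} (hδ : 0 < δ) :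
    ∃ R : ℝ, 2 ≤ R ∧ (2 * R / δ + 1) ^ (d - 1) < (R / 4) ^ d := by
  let R : ℝ := 4 ^ d * (2 / δ + 1) ^ (d - 1) + 2
  have hR : 2 ≤ R := le_add_of_nonneg_left (by positivity)
  refine ⟨R, hR, ?_⟩
  calc (2 * R / δ + 1) ^ (d - 1) ≤ (R * (2 / δ + 1)) ^ (d - 1) := by
        gcongr
        linarith [show R * (2 / δ + 1) = 2 * R / δ + R by ring]
    _ = R ^ (d - 1) * (2 / δ + 1) ^ (d - 1) := mul_pow _ _ _
    _ < R ^ (d - 1) * (R / 4 ^ d) := by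
        gcongr
        rw [lt_div_iff₀' (by positivity)]
        exact lt_add_of_pos_right _ two_pos
    _ = (R / 4) ^ d := by
        rw [div_pow, mul_div_assoc', pow_sub_one_mul hd]

theorem exists_norm_formVec_intPair_sub_le (hm : m ≠ 0) (hn : n ≠ 0) {δ : ℝ} (hδ : 0 < δ) {N : ℕ}
    (hN : N ≠ 0) :
    ∃ H > (0 : ℝ), ∃ T₀ ≥ (1 : ℝ), ∀ T ≥ T₀, ∀ σ > 0, σ ^ m = T ^ n →
      ∀ A : Fin m → Fin n → ℝ, (∀ z ≠ 0, δ < ‖formVec σ T⁻¹ A (intPair z)‖) →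
      ∀ v y, ∃ u, ‖formVec σ T⁻¹ A (intPair (v + N • u)) - y‖ ≤ H := by
  obtain ⟨R, hR, hcount⟩ := exists_add_one_pow_pred_lt_div_pow (d := m + n) (by omega) hδ
  refine ⟨N * ((m + n) * R), by positivity, R ^ m, one_le_pow₀ (by linarith),
    fun T hT σ hσ hσT A hmin v y => ?_⟩
  have hT1 : 1 ≤ T := (one_le_pow₀ (by linarith)).trans hT
  have hRσ : R ≤ σ := by
    rw [← pow_le_pow_iff_left₀ (by positivity) hσ.le hm, hσT]
    exact hT.trans (le_self_pow₀ hT1 hn)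
  obtain ⟨W, hW, hWcard⟩ := exists_card_intPair_norm_formVec_le hR hT1 hRσ hσT A
  obtain ⟨_, ⟨u, rfl⟩, hu⟩ := exists_mem_norm_formVec_sub_le A hσ.ne'
    (inv_ne_zero (by positivity)) hδ (by positivity) (G := intPair.range)
    (by
      rintro _ ⟨z, rfl⟩ hz
      by_contra hz0
      exact (hmin z (fun h => hz0 (by rw [h, map_zero]))).not_ge hz)
    hW (hcount.trans_le hWcard) (intPair v) y hN
  exact ⟨u, by rwa [map_add, map_nsmul]⟩

instance isAddHaarMeasure_volume_pi_pi :
    (volume : Measure (Fin m → Fin n → ℝ)).IsAddHaarMeasure :=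
  Measure.pi.isAddHaarMeasure fun _ : Fin m => (volume : Measure (Fin n → ℝ))

theorem mem_intCube_of_norm_formVec_le {R T σ δ : ℝ} (hT : 0 < T) (hσ : 1 ≤ σ) (hδ : 0 ≤ δ)
    (hδ1 : δ < 1) {A : Fin m → Fin n → ℝ} (hA : ‖A‖ ≤ R) {z : (Fin m → ℤ) × (Fin n → ℤ)}
    (hz : z ≠ 0) (hle : ‖formVec σ T⁻¹ A (intPair z)‖ ≤ δ) :
    z.2 ∈ (intCube 0 (δ * T)).erase 0 ∧
      z.1 ∈ intCube 0 ((n * R + 1) * ‖castVec ℝ (intVec z.2)‖) ∧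
      ‖affForm A (castVec ℝ (intVec z.1), castVec ℝ (intVec z.2))‖ ≤ δ / σ := by
  have hR : 0 ≤ R := (norm_nonneg A).trans hA
  rw [norm_formVec A (by positivity) (by positivity), max_le_iff, ← le_div_iff₀' (by positivity),
    inv_mul_le_iff₀' hT] at hle
  obtain ⟨hform, hq⟩ := hle
  change ‖affForm A (castVec ℝ (intVec z.1), castVec ℝ (intVec z.2))‖ ≤ δ / σ at hform
  have hδσ : δ / σ < 1 := (div_le_self hδ hσ).trans_lt hδ1
  have hP : ‖castVec ℝ (intVec z.1)‖ ≤ δ / σ + n * R * ‖castVec ℝ (intVec z.2)‖ :=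
    (norm_le_norm_affForm_add A (castVec ℝ (intVec z.1), castVec ℝ (intVec z.2))).trans
      (add_le_add hform (by gcongr))
  have hz2 : z.2 ≠ 0 := fun h0 => by
    rw [h0, map_zero, map_zero, norm_zero, mul_zero, add_zero] at hP
    refine hz (Prod.ext (by_contra fun h1 => ?_) h0)
    exact (one_le_norm_castVec_intVec h1).not_gt (hP.trans_lt hδσ)
  refine ⟨Finset.mem_erase.2 ⟨hz2, (mem_intCube_zero (by positivity)).2 hq⟩,
    (mem_intCube_zero (by positivity)).2 ?_, hform⟩
  linarith [one_le_norm_castVec_intVec hz2]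

theorem measure_intPair_norm_formVec_le {R D : ℝ} (hR : 0 ≤ R) (hD : 0 ≤ D)
    (hmeas : ∀ v : (Fin m → ℝ) × (Fin n → ℝ), v.2 ≠ 0 → ∀ ρ > 0,
      volume (closedBall 0 R ∩ {A : Fin m → Fin n → ℝ | ‖affForm A v‖ ≤ ρ}) ≤
        ENNReal.ofReal (D * (ρ / ‖v.2‖) ^ m))
    {T σ δ : ℝ} (hT : 0 < T) (hσ : 1 ≤ σ) (hδ : 0 < δ) (hδ1 : δ < 1) :
    volume (closedBall 0 R ∩
      {A : Fin m → Fin n → ℝ | ∃ z ≠ 0, ‖formVec σ T⁻¹ A (intPair z)‖ ≤ δ}) ≤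
      ENNReal.ofReal ((3 * (δ * T)) ^ n * (D * ((2 * (n * R + 1) + 1) * (δ / σ)) ^ m)) := by
  have hne : ∀ q ∈ (intCube (n := n) 0 (δ * T)).erase 0, 1 ≤ ‖castVec ℝ (intVec q)‖ :=
    fun q hq => one_le_norm_castVec_intVec (Finset.ne_of_mem_erase hq)
  have hunion := measure_exists_norm_affForm_le volume hD (ρ := δ / σ)
    (B := 2 * (n * R + 1) + 1) (by positivity) hmeas ((intCube (n := n) 0 (δ * T)).erase 0)
    (fun q => castVec ℝ (intVec q))
    (fun q hq => norm_pos_iff.1 (one_pos.trans_le (hne q hq)))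
    (fun q => intCube (n := m) 0 ((n * R + 1) * ‖castVec ℝ (intVec q)‖))
    (fun _ P => castVec ℝ (intVec P))
    (fun q hq => (card_intCube_le _ (by positivity)).trans
      (pow_le_pow_left₀ (by positivity) (by linarith [hne q hq]) m))
  refine (measure_mono ?_).trans (hunion.trans (ENNReal.ofReal_le_ofReal ?_))
  · rintro A ⟨hA, z, hz, hle⟩
    obtain ⟨hq, hP, hform⟩ := mem_intCube_of_norm_formVec_le hT hσ hδ.le hδ1
      (mem_closedBall_zero_iff.1 hA) hz hle
    exact ⟨hA, z.2, hq, z.1, hP, hform⟩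
  · exact mul_le_mul_of_nonneg_right (card_erase_zero_intCube_le (by positivity)) (by positivity)

theorem exists_measure_intPair_norm_formVec_le (hm : m ≠ 0) {R : ℝ} (hR : 0 ≤ R) {ε : ℝ}
    (hε : 0 < ε) :
    ∃ δ > 0, ∀ T ≥ 1, ∀ σ > 0, σ ^ m = T ^ n →
      volume (closedBall 0 R ∩
        {A : Fin m → Fin n → ℝ | ∃ z ≠ 0, ‖formVec σ T⁻¹ A (intPair z)‖ ≤ δ}) ≤
        ENNReal.ofReal ε := by
  obtain ⟨D, hD, hmeas⟩ := exists_measure_norm_affForm_le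
    (volume : Measure (Fin m → Fin n → ℝ)) (isAhlforsRegular_volume_fin_fun m) hR
  let M : ℝ := 3 ^ n * (D * (2 * (n * R + 1) + 1) ^ m)
  have hM : 0 < M := by positivity
  let δ : ℝ := min (1 / 2) (ε / M)
  have hδ : 0 < δ := by positivity
  have hδ1 : δ < 1 := (min_le_left _ _).trans_lt one_half_lt_one
  refine ⟨δ, hδ, fun T hT σ hσ hσT => ?_⟩
  have hσ1 : 1 ≤ σ := (one_le_pow_iff_of_nonneg hσ.le hm).1 (hσT ▸ one_le_pow₀ hT)
  refine (measure_intPair_norm_formVec_le hR hD.le hmeas (by positivity) hσ1 hδ hδ1).trans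
    (ENNReal.ofReal_le_ofReal ?_)
  calc (3 * (δ * T)) ^ n * (D * ((2 * (n * R + 1) + 1) * (δ / σ)) ^ m) = M * δ ^ (m + n) := by
        rw [mul_pow, mul_pow, mul_pow, div_pow, hσT, pow_add]
        simp only [M]
        field_simp
    _ ≤ M * δ := by
        gcongr
        exact pow_le_of_le_one hδ.le hδ1.le (by omega)
    _ ≤ M * (ε / M) := by
        gcongr
        exact min_le_right _ _
    _ = ε := mul_div_cancel₀ ε hM.ne'

theorem bounds_of_norm_formVec_sub_single_le {σ t H : ℝ} (hσ : 0 ≤ σ) (ht : 0 ≤ t) (hH : 0 ≤ H)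
    {A : Fin m → Fin n → ℝ} {z : (Fin m → ℚ) × (Fin n → ℚ)} {b₀ : Fin n}
    (hz : ‖formVec σ t A z - (0, Pi.single b₀ (2 * H))‖ ≤ H) :
    σ * ‖affForm A (castPair ℝ z)‖ ≤ H ∧ H ≤ t * ‖castVec ℝ z.2 b₀‖ ∧
      t * ‖castVec ℝ z.2‖ ≤ 3 * H := by
  rw [formVec_apply, Prod.mk_sub_mk, sub_zero, Prod.norm_mk, max_le_iff, norm_smul,
    Real.norm_of_nonneg hσ] at hz
  obtain ⟨hform, hq⟩ := hz
  refine ⟨hform, ?_, ?_⟩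
  · have hcoord := (norm_le_pi_norm _ b₀).trans hq
    rw [Pi.sub_apply, Pi.single_eq_same, norm_sub_rev] at hcoord
    have htri := (norm_sub_norm_le (2 * H) ((t • castVec ℝ z.2) b₀)).trans hcoord
    rw [Pi.smul_apply, norm_smul, Real.norm_of_nonneg ht,
      Real.norm_of_nonneg (by positivity : 0 ≤ 2 * H)] at htri
    linarith
  · have htri := (norm_sub_norm_le (t • castVec ℝ z.2) (Pi.single b₀ (2 * H))).trans hq
    rw [norm_smul, Real.norm_of_nonneg ht, Pi.norm_single,
      Real.norm_of_nonneg (by positivity : 0 ≤ 2 * H)] at htri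
    linarith

theorem isUbiquitous_intPair (hm : m ≠ 0) (b₀ : Fin n) {τ : ℝ} (hτ : 1 < τ) {N : ℕ} (hN : N ≠ 0)
    (v : (Fin m → ℤ) × (Fin n → ℤ)) :
    IsUbiquitous volume (fun u => castPair ℝ (intPair (v + N • u))) b₀ τ := by
  intro R hR ε hε
  obtain ⟨δ, hδ, hshort⟩ := exists_measure_intPair_norm_formVec_le (n := n) hm hR.le hε
  obtain ⟨H, hH, T₀, hT₀, hnear⟩ :=
    exists_norm_formVec_intPair_sub_le hm b₀.pos.ne' hδ hN
  let κ : ℝ := ((3 * H) ^ n) ^ (m : ℝ)⁻¹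
  refine ⟨max 3 (H * κ), le_max_of_le_left (by norm_num), ?_⟩
  filter_upwards [tendsto_atTop.1 (tendsto_pow_atTop_atTop_of_one_lt hτ) (3 * H * T₀)] with k hk
  let T : ℝ := τ ^ k / (3 * H)
  have hTk : τ ^ k = 3 * H * T := (mul_div_cancel₀ _ (by positivity)).symm
  have hT : T₀ ≤ T := (le_div_iff₀' (by positivity)).2 hk
  have hT0 : 0 < T := by linarith
  let σ : ℝ := (T ^ n) ^ (m : ℝ)⁻¹
  have hσ : 0 < σ := by positivity
  have hσT : σ ^ m = T ^ n := Real.rpow_inv_natCast_pow (by positivity) hm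
  have hσk : ((τ ^ k) ^ n) ^ (m : ℝ)⁻¹ = κ * σ := by
    rw [hTk, mul_pow, Real.mul_rpow (by positivity) (by positivity)]
  refine (measure_mono (inter_subset_inter_right _ fun A hbad => ?_)).trans
    (hshort T (hT₀.trans hT) σ hσ hσT)
  by_contra! hmin
  simp only [mem_ofPred_eq, not_exists, not_and, not_le] at hmin
  obtain ⟨u, hu⟩ := hnear T hT σ hσ hσT A hmin v (0, Pi.single b₀ (2 * H))
  obtain ⟨hform, hlow, hupp⟩ :=
    bounds_of_norm_formVec_sub_single_le hσ.le (inv_nonneg.2 hT0.le) hH.le hu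
  rw [le_inv_mul_iff₀ hT0] at hlow
  rw [inv_mul_le_iff₀ hT0] at hupp
  refine hbad ⟨u, ?_, ?_, hupp.trans_eq (by rw [hTk]; ring)⟩
  · rw [hσk, le_div_iff₀ (by positivity)]
    calc _ = σ * ‖affForm A (castPair ℝ (intPair (v + N • u)))‖ * κ := by ring
      _ ≤ H * κ := by gcongr
      _ ≤ _ := le_max_right _ _
  · refine (div_le_div_of_nonneg_left (by positivity) three_pos (le_max_left _ _)).trans ?_
    refine le_trans ?_ hlow
    rw [hTk]
    linarith

theorem ae_infinite_approxSols_intPair (hm : m ≠ 0) (hn : n ≠ 0) {ψ : ℝ → ℝ} (hψ : ∀ t, 0 < ψ t)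
    (hanti : AntitoneOn ψ (Ioi 0)) (hone : ∀ t ≤ 1, ψ t = 1)
    (hint : ∫⁻ y : Fin n → ℝ, ENNReal.ofReal (ψ (‖y‖ ^ n)) = ⊤)
    {N : ℕ} (hN : N ≠ 0) (v : (Fin m → ℤ) × (Fin n → ℤ)) :
    ∀ᵐ A : Fin m → Fin n → ℝ,
      (approxSols (fun u => castPair ℝ (intPair (v + N • u))) ψ A).Infinite := by
  obtain ⟨τ, hτ, hub⟩ := IsUbiquitous.ae_infinite_approxSols hm
    (volume : Measure (Fin m → Fin n → ℝ)) (isAhlforsRegular_volume_fin_fun m)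
  exact hub τ le_rfl (isUbiquitous_intPair hm ⟨0, Nat.pos_of_ne_zero hn⟩ hτ hN v) hψ hanti
    fun hs =>
      ((isAhlforsRegular_volume_fin_fun n).lintegral_norm_pow_lt_top hψ hanti hone hτ hs).ne hint

end RealPlace

section SIntegers

variable {P Q : ℕ} {m n : ℕ} {x : ℚ}

/-- The ring `ℤ[1/P]`, with membership predicate `IsZS P`. -/
def sIntegers (P : ℕ) [NeZero P] : Subring ℚ where
  carrier := {x | IsZS P x}
  zero_mem' := ⟨0, 0, by simp⟩
  one_mem' := ⟨1, 0, by simp⟩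
  add_mem' := by
    rintro _ _ ⟨a, k, rfl⟩ ⟨b, l, rfl⟩
    have hP : (P : ℚ) ≠ 0 := NeZero.ne _
    exact ⟨a * P ^ l + b * P ^ k, k + l, by push_cast; rw [pow_add]; field_simp⟩
  mul_mem' := by
    rintro _ _ ⟨a, k, rfl⟩ ⟨b, l, rfl⟩
    exact ⟨a * b, k + l, by push_cast; rw [pow_add, div_mul_div_comm]⟩
  neg_mem' := by
    rintro _ ⟨a, k, rfl⟩
    exact ⟨-a, k, by push_cast; rw [neg_div]⟩

theorem IsZS.of_dvd [NeZero Q] (hx : IsZS P x) (hPQ : P ∣ Q) : IsZS Q x := by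
  obtain ⟨a, k, rfl⟩ := hx
  obtain ⟨c, rfl⟩ := hPQ
  obtain ⟨hP, hc⟩ := mul_ne_zero_iff.1 (NeZero.ne (P * c))
  refine ⟨a * c ^ k, k, ?_⟩
  push_cast
  rw [mul_pow]
  field_simp

theorem IsZS.exists_int_add_mul_eq [NeZero P] {N : ℕ} (hNP : N.Coprime P) (hx : IsZS P x) :
    ∃ (u : ℤ) (y : ℚ), IsZS P y ∧ u + N * y = x := by
  obtain ⟨a, k, rfl⟩ := hx
  obtain ⟨c, d, hcd⟩ := Nat.isCoprime_iff_coprime.2 (hNP.pow_right k)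
  have hP : (P : ℚ) ≠ 0 := NeZero.ne _
  refine ⟨a * d, _, ⟨a * c, k, rfl⟩, ?_⟩
  have hcdQ : (c : ℚ) * N + d * P ^ k = 1 := by exact_mod_cast hcd
  field_simp
  push_cast
  linear_combination (a : ℚ) * hcdQ

variable (P m n) in
/-- The group `ℤ[1/P]^m × ℤ[1/P]^n`. -/
def sIntegerPairs [NeZero P] : AddSubgroup ((Fin m → ℚ) × (Fin n → ℚ)) where
  carrier := {z | (∀ a, IsZS P (z.1 a)) ∧ ∀ b, IsZS P (z.2 b)}
  zero_mem' := ⟨fun _ => zero_mem (sIntegers P), fun _ => zero_mem (sIntegers P)⟩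
  add_mem' h h' := ⟨fun a => (sIntegers P).add_mem (h.1 a) (h'.1 a),
    fun b => (sIntegers P).add_mem (h.2 b) (h'.2 b)⟩
  neg_mem' h := ⟨fun a => (sIntegers P).neg_mem (h.1 a), fun b => (sIntegers P).neg_mem (h.2 b)⟩

theorem mem_sIntegerPairs [NeZero P] {z : (Fin m → ℚ) × (Fin n → ℚ)} :
    z ∈ sIntegerPairs P m n ↔ (∀ a, IsZS P (z.1 a)) ∧ ∀ b, IsZS P (z.2 b) :=
  Iff.rfl

theorem intPair_mem_sIntegerPairs [NeZero P] (z : (Fin m → ℤ) × (Fin n → ℤ)) :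
    intPair z ∈ sIntegerPairs P m n :=
  mem_sIntegerPairs.2
    ⟨fun a => intCast_mem (sIntegers P) (z.1 a), fun b => intCast_mem (sIntegers P) (z.2 b)⟩

theorem sIntegerPairs_mono [NeZero P] [NeZero Q] (hPQ : P ∣ Q) :
    sIntegerPairs P m n ≤ sIntegerPairs Q m n :=
  fun _ hz => mem_sIntegerPairs.2
    ⟨fun a => (hz.1 a).of_dvd hPQ, fun b => (hz.2 b).of_dvd hPQ⟩

variable {N : ℕ} {v z : (Fin m → ℚ) × (Fin n → ℚ)}

/-- The class of `v` modulo `N` times `ℤ[1/P]^m × ℤ[1/P]^n`. -/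
def congrClass (P : ℕ) [NeZero P] (N : ℕ) (v : (Fin m → ℚ) × (Fin n → ℚ)) :
    Set ((Fin m → ℚ) × (Fin n → ℚ)) :=
  {z | ∃ u ∈ sIntegerPairs P m n, v + N • u = z}

theorem congrClass_mono [NeZero P] [NeZero Q] (hPQ : P ∣ Q) :
    congrClass P N v ⊆ congrClass Q N v :=
  fun _ ⟨u, hu, h⟩ => ⟨u, sIntegerPairs_mono hPQ hu, h⟩

theorem mem_sIntegerPairs_of_mem_congrClass [NeZero P] (hv : v ∈ sIntegerPairs P m n)
    (hz : z ∈ congrClass P N v) : z ∈ sIntegerPairs P m n := by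
  obtain ⟨u, hu, rfl⟩ := hz
  exact add_mem hv (nsmul_mem hu N)

theorem forall_isZS_sub_div_of_mem_congrClass [NeZero P] (hN : N ≠ 0)
    (hz : z ∈ congrClass P N v) :
    (∀ a, IsZS P ((z.1 a - v.1 a) / N)) ∧ ∀ b, IsZS P ((z.2 b - v.2 b) / N) := by
  obtain ⟨u, hu, rfl⟩ := hz
  have hdiv : ∀ x y : ℚ, (x + N • y - x) / N = y := fun x y => by
    rw [add_sub_cancel_left, nsmul_eq_mul, mul_div_cancel_left₀ _ (Nat.cast_ne_zero.2 hN)]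
  exact ⟨fun a => (hdiv (v.1 a) (u.1 a)).symm ▸ hu.1 a,
    fun b => (hdiv (v.2 b) (u.2 b)).symm ▸ hu.2 b⟩

theorem exists_intPair_add_nsmul_eq [NeZero P] (hNP : N.Coprime P)
    (hv : v ∈ sIntegerPairs P m n) :
    ∃ (u : (Fin m → ℤ) × (Fin n → ℤ)), ∃ y ∈ sIntegerPairs P m n, intPair u + N • y = v := by
  choose u₁ y₁ hy₁ h₁ using fun a => (hv.1 a).exists_int_add_mul_eq hNP
  choose u₂ y₂ hy₂ h₂ using fun b => (hv.2 b).exists_int_add_mul_eq hNP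
  refine ⟨(u₁, u₂), (y₁, y₂), ⟨hy₁, hy₂⟩, Prod.ext (funext fun a => ?_) (funext fun b => ?_)⟩
  · exact (congrArg _ (nsmul_eq_mul N (y₁ a))).trans (h₁ a)
  · exact (congrArg _ (nsmul_eq_mul N (y₂ b))).trans (h₂ b)

end SIntegers

section PadicNorm

variable {p : ℕ} [hp : Fact p.Prime] {x : ℚ}

theorem norm_intCast_div_pow (a : ℤ) (k : ℕ) :
    ‖((a / (p : ℚ) ^ k : ℚ) : ℚ_[p])‖ = ‖(a : ℚ_[p])‖ * (p : ℝ) ^ k := by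
  push_cast
  rw [norm_div, norm_pow, Padic.norm_p, inv_pow, div_inv_eq_mul]

theorem one_le_abs_mul_norm_intCast {a : ℤ} (ha : a ≠ 0) : 1 ≤ |(a : ℝ)| * ‖(a : ℚ_[p])‖ := by
  have hp0 : (0 : ℝ) < p := by exact_mod_cast hp.1.pos
  have hle : (p : ℤ) ^ padicValInt p a ≤ |a| :=
    Int.le_of_dvd (abs_pos.2 ha) ((dvd_abs _ _).2 (padicValInt_dvd a))
  have hleR : (p : ℝ) ^ padicValInt p a ≤ |(a : ℝ)| := by exact_mod_cast hle
  rw [Padic.norm_eq_zpow_neg_valuation (Int.cast_ne_zero.2 ha), Padic.valuation_intCast,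
    _root_.zpow_neg, zpow_natCast]
  exact (le_mul_inv_iff₀ (by positivity)).2 ((one_mul _).trans_le hleR)

theorem IsZS.one_le_abs_mul_norm (hx : IsZS p x) (hx0 : x ≠ 0) :
    1 ≤ |(x : ℝ)| * ‖(x : ℚ_[p])‖ := by
  obtain ⟨a, k, rfl⟩ := hx
  have hpk : (0 : ℝ) < (p : ℝ) ^ k := pow_pos (by exact_mod_cast hp.1.pos) k
  have ha : a ≠ 0 := by
    rintro rfl
    simp only [Int.cast_zero, zero_div, ne_eq, not_true_eq_false] at hx0
  rw [norm_intCast_div_pow]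
  push_cast
  rw [abs_div, abs_of_pos hpk, mul_comm ‖_‖, ← mul_assoc, div_mul_cancel₀ _ hpk.ne']
  exact one_le_abs_mul_norm_intCast ha

theorem IsZS.norm_le_one {P : ℕ} (hx : IsZS P x) (hP : P.Coprime p) : ‖(x : ℚ_[p])‖ ≤ 1 := by
  obtain ⟨a, k, rfl⟩ := hx
  push_cast
  rw [norm_div, norm_pow, Padic.norm_natCast_eq_one_iff.2 hP.symm, one_pow, div_one]
  exact Padic.norm_int_le_one a

theorem IsZS.exists_eq_div_pow (hx : IsZS p x) {k : ℕ} (hk : ‖(x : ℚ_[p])‖ ≤ (p : ℝ) ^ k) :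
    ∃ a : ℤ, x = a / (p : ℚ) ^ k := by
  obtain ⟨a, j, rfl⟩ := hx
  have hp0 : (0 : ℝ) < p := by exact_mod_cast hp.1.pos
  have hpQ : (p : ℚ) ≠ 0 := by exact_mod_cast hp.1.ne_zero
  have hnorm : ‖((a * (p : ℤ) ^ k : ℤ) : ℚ_[p])‖ ≤ (p : ℝ) ^ (-j : ℤ) := by
    push_cast
    rwa [norm_mul, norm_pow, Padic.norm_p, inv_pow, _root_.zpow_neg, zpow_natCast,
      mul_inv_le_iff₀ (by positivity), inv_mul_eq_div, le_div_iff₀ (by positivity),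
      ← norm_intCast_div_pow]
  obtain ⟨c, hc⟩ := (Padic.norm_int_le_pow_iff_dvd _ j).1 hnorm
  refine ⟨c, ?_⟩
  rw [div_eq_div_iff (by positivity) (by positivity), mul_comm (c : ℚ)]
  exact_mod_cast hc

theorem exists_isZS_norm_sub_le (x : ℚ_[p]) {ρ : ℝ} (hρ : 0 < ρ) :
    ∃ r : ℚ, IsZS p r ∧ ‖x - r‖ ≤ ρ := by
  have hp1 : (1 : ℝ) < p := by exact_mod_cast hp.1.one_lt
  have hp0 : (p : ℚ_[p]) ≠ 0 := by exact_mod_cast hp.1.ne_zero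
  obtain ⟨k, hk⟩ := pow_unbounded_of_one_lt ‖x‖ hp1
  let y : ℤ_[p] := ⟨x * (p : ℚ_[p]) ^ k, by
    rw [norm_mul, norm_pow, Padic.norm_p, inv_pow, mul_inv_le_iff₀ (by positivity), one_mul]
    exact hk.le⟩
  obtain ⟨a, ha⟩ := PadicInt.denseRange_intCast.exists_dist_lt y
    (ε := ρ / p ^ k) (by positivity)
  have hxa : ‖x * (p : ℚ_[p]) ^ k - a‖ ≤ ρ / p ^ k := by
    rw [dist_eq_norm, PadicInt.norm_def, PadicInt.coe_sub, PadicInt.coe_intCast] at ha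
    exact ha.le
  refine ⟨a / (p : ℚ) ^ k, ⟨a, k, rfl⟩, ?_⟩
  have hsub : x - ((a / (p : ℚ) ^ k : ℚ) : ℚ_[p]) =
      (x * (p : ℚ_[p]) ^ k - a) / (p : ℚ_[p]) ^ k := by
    push_cast
    field_simp
  rwa [hsub, norm_div, norm_pow, Padic.norm_p, inv_pow, div_inv_eq_mul,
    ← le_div_iff₀ (by positivity)]

theorem exists_norm_eq_prime_pow {k : ℕ} {x : Fin k → ℚ_[p]} (hx : 1 ≤ ‖x‖) :
    ∃ l : ℕ, ‖x‖ = (p : ℝ) ^ l := by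
  have hp1 : (1 : ℝ) < p := by exact_mod_cast hp.1.one_lt
  obtain ⟨b, hb⟩ := exists_norm_apply_eq_norm (norm_pos_iff.1 (one_pos.trans_le hx))
  have hval := Padic.norm_eq_zpow_neg_valuation (norm_pos_iff.1 (hb ▸ one_pos.trans_le hx))
  rw [hb] at hval
  obtain ⟨l, hl⟩ := Int.eq_ofNat_of_zero_le ((one_le_zpow_iff_right₀ hp1).1 (hval ▸ hx))
  exact ⟨l, by rw [hval, hl, zpow_natCast]⟩

end PadicNorm

section UltrametricForms

variable {m n : ℕ} {K : Type*} [NormedField K] [IsUltrametricDist K]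

theorem norm_sum_mul_le (A : Fin m → Fin n → K) (q : Fin n → K) (a : Fin m) :
    ‖∑ b, A a b * q b‖ ≤ ‖A‖ * ‖q‖ := by
  refine IsUltrametricDist.norm_sum_le_of_forall_le_of_nonneg (by positivity) fun b _ => ?_
  rw [norm_mul]
  exact mul_le_mul ((norm_le_pi_norm (A a) b).trans (norm_le_pi_norm A a))
    (norm_le_pi_norm q b) (norm_nonneg _) (norm_nonneg _)

theorem norm_affForm_le_max (A : Fin m → Fin n → K) (v : (Fin m → K) × (Fin n → K)) :
    ‖affForm A v‖ ≤ max (‖A‖ * ‖v.2‖) ‖v.1‖ :=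
  (pi_norm_le_iff_of_nonneg (le_max_of_le_right (norm_nonneg _))).2 fun a =>
    (IsUltrametricDist.norm_add_le_max _ _).trans
      (max_le_max (norm_sum_mul_le A v.2 a) (norm_le_pi_norm v.1 a))

theorem norm_fst_le_max_norm_affForm (A : Fin m → Fin n → K) (v : (Fin m → K) × (Fin n → K)) :
    ‖v.1‖ ≤ max ‖affForm A v‖ (‖A‖ * ‖v.2‖) := by
  refine (pi_norm_le_iff_of_nonneg (le_max_of_le_left (norm_nonneg _))).2 fun a => ?_
  rw [← add_sub_cancel_left (∑ b, A a b * v.2 b) (v.1 a), ← affForm_apply]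
  rw [sub_eq_add_neg]
  refine (IsUltrametricDist.norm_add_le_max _ _).trans ?_
  rw [norm_neg]
  exact max_le_max (norm_le_pi_norm (affForm A v) a) (norm_sum_mul_le A v.2 a)

end UltrametricForms

section PadicLattice

open Set Metric

variable {p : ℕ} {m n l : ℕ}

variable (p) in
/-- The rational vector `x / p ^ k`. -/
def divVec (k : ℕ) : (Fin l → ℤ) →+ (Fin l → ℚ) :=
  (DistribSMul.toAddMonoidHom (Fin l → ℚ) ((p : ℚ) ^ k)⁻¹).comp intVec

theorem divVec_apply (k : ℕ) (x : Fin l → ℤ) (j : Fin l) : divVec p k x j = x j / (p : ℚ) ^ k :=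
  inv_mul_eq_div _ _

theorem isZS_divVec (k : ℕ) (x : Fin l → ℤ) (j : Fin l) : IsZS p (divVec p k x j) :=
  ⟨x j, k, divVec_apply k x j⟩

variable (p) in
/-- The pair of rational vectors `(P / p ^ k, q / p ^ k)`. -/
def divPair (k : ℕ) : (Fin m → ℤ) × (Fin n → ℤ) →+ (Fin m → ℚ) × (Fin n → ℚ) :=
  (divVec p k).prodMap (divVec p k)

variable [hp : Fact p.Prime]

/-- The group of pairs `(P, q)` of `ℤ[1/p]`-vectors with `‖q‖_p ≤ p ^ k` and `‖A q + P‖_p ≤ ρ`. -/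
noncomputable def padicLattice (A : Fin m → Fin n → ℚ_[p]) (k : ℕ) {ρ : ℝ} (hρ : 0 < ρ) :
    AddSubgroup ((Fin m → ℚ) × (Fin n → ℚ)) :=
  sIntegerPairs p m n ⊓
    ((IsUltrametricDist.closedBall_openAddSubgroup (Fin n → ℚ_[p])
        (pow_pos (Nat.cast_pos.2 hp.1.pos : (0 : ℝ) < p) k)).toAddSubgroup.comap
        ((castVec ℚ_[p]).comp (AddMonoidHom.snd _ _)) ⊓
      (IsUltrametricDist.closedBall_openAddSubgroup (Fin m → ℚ_[p]) hρ).toAddSubgroup.comap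
        ((affForm A).toAddMonoidHom.comp (castPair ℚ_[p])))

theorem mem_padicLattice {A : Fin m → Fin n → ℚ_[p]} {k : ℕ} {ρ : ℝ} {hρ : 0 < ρ}
    {z : (Fin m → ℚ) × (Fin n → ℚ)} :
    z ∈ padicLattice A k hρ ↔ z ∈ sIntegerPairs p m n ∧
      ‖castVec ℚ_[p] z.2‖ ≤ (p : ℝ) ^ k ∧ ‖affForm A (castPair ℚ_[p] z)‖ ≤ ρ := by
  rw [← mem_closedBall_zero_iff, ← mem_closedBall_zero_iff]
  rfl

theorem pow_nsmul_divVec (k : ℕ) (x : Fin l → ℤ) : p ^ k • divVec p k x = intVec x := by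
  have hpk : (p : ℚ) ^ k ≠ 0 := pow_ne_zero _ (Nat.cast_ne_zero.2 hp.1.ne_zero)
  rw [← Nat.cast_smul_eq_nsmul ℚ, Nat.cast_pow]
  exact smul_inv_smul₀ hpk _

theorem pow_nsmul_divPair (k : ℕ) (w : (Fin m → ℤ) × (Fin n → ℤ)) :
    p ^ k • divPair p k w = intPair w :=
  Prod.ext (pow_nsmul_divVec k w.1) (pow_nsmul_divVec k w.2)

theorem divVec_injective (k : ℕ) : Function.Injective (divVec p k (l := l)) := fun x y h =>
  intVec_injective (by rw [← pow_nsmul_divVec (p := p) k, h, pow_nsmul_divVec])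

theorem divPair_injective (k : ℕ) : Function.Injective (divPair p k (m := m) (n := n)) :=
  (divVec_injective k).prodMap (divVec_injective k)

theorem divPair_mem_sIntegerPairs (k : ℕ) (w : (Fin m → ℤ) × (Fin n → ℤ)) :
    divPair p k w ∈ sIntegerPairs p m n :=
  mem_sIntegerPairs.2 ⟨isZS_divVec k w.1, isZS_divVec k w.2⟩

theorem norm_castVec_divVec_le (k : ℕ) (x : Fin l → ℤ) :
    ‖castVec ℚ_[p] (divVec p k x)‖ ≤ (p : ℝ) ^ k := by
  refine (pi_norm_le_iff_of_nonneg (by positivity)).2 fun j => ?_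
  rw [castVec_apply, divVec_apply, norm_intCast_div_pow]
  exact mul_le_of_le_one_left (by positivity) (Padic.norm_int_le_one _)

theorem exists_mem_intCube_divVec_eq {x : Fin l → ℚ} (hx : ∀ j, IsZS p (x j)) {k : ℕ}
    (hk : ‖castVec ℚ_[p] x‖ ≤ (p : ℝ) ^ k) {c : Fin l → ℝ} {δ : ℝ} (hδ : 0 ≤ δ)
    (hc : ‖castVec ℝ x - c‖ ≤ δ) :
    ∃ y ∈ intCube ((p : ℝ) ^ k • c) ((p : ℝ) ^ k * δ), divVec p k y = x := by
  choose y hy using fun j =>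
    (hx j).exists_eq_div_pow ((norm_le_pi_norm (castVec ℚ_[p] x) j).trans hk)
  have hyx : divVec p k y = x := funext fun j => (divVec_apply k y j).trans (hy j).symm
  refine ⟨y, (mem_intCube (by positivity)).2 ?_, hyx⟩
  have hy' : (fun j => (y j : ℝ)) = (p : ℝ) ^ k • castVec ℝ x := by
    rw [← castVec_intVec, ← pow_nsmul_divVec (p := p) k, hyx, map_nsmul, ← Nat.cast_smul_eq_nsmul ℝ,
      Nat.cast_pow]
  rw [hy', ← smul_sub, norm_smul, Real.norm_of_nonneg (by positivity)]
  gcongr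

theorem norm_affForm_divPair_le (A : Fin m → Fin n → ℚ_[p]) (k : ℕ)
    (w : (Fin m → ℤ) × (Fin n → ℤ)) :
    ‖affForm A (castPair ℚ_[p] (divPair p k w))‖ ≤ max ‖A‖ 1 * (p : ℝ) ^ k := by
  rw [max_mul_of_nonneg _ _ (by positivity), one_mul]
  exact (norm_affForm_le_max _ _).trans (max_le_max
    (mul_le_mul_of_nonneg_left (norm_castVec_divVec_le k w.2) (norm_nonneg A))
    (norm_castVec_divVec_le k w.1))

theorem norm_castVec_divVec (k : ℕ) (x : Fin l → ℤ) :
    ‖castVec ℝ (divVec p k x)‖ = ‖castVec ℝ (intVec x)‖ / (p : ℝ) ^ k := by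
  have hpk : (p : ℝ) ^ k ≠ 0 := pow_ne_zero _ (Nat.cast_ne_zero.2 hp.1.ne_zero)
  rw [eq_div_iff hpk, ← pow_nsmul_divVec (p := p) k, map_nsmul, ← Nat.cast_smul_eq_nsmul ℝ,
    norm_smul, Real.norm_natCast, Nat.cast_pow, mul_comm]

theorem norm_formVec_divPair (σ t : ℝ) (E : Fin m → Fin n → ℝ) (k : ℕ)
    (w : (Fin m → ℤ) × (Fin n → ℤ)) :
    ‖formVec σ t E (divPair p k w)‖ = ‖formVec σ t E (intPair w)‖ / (p : ℝ) ^ k := by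
  have hpk : (p : ℝ) ^ k ≠ 0 := pow_ne_zero _ (Nat.cast_ne_zero.2 hp.1.ne_zero)
  rw [eq_div_iff hpk, ← pow_nsmul_divPair (p := p) k, map_nsmul, ← Nat.cast_smul_eq_nsmul ℝ,
    norm_smul, Real.norm_natCast, Nat.cast_pow, mul_comm]

end PadicLattice

section PadicLatticePoints

open Set Metric

variable {p : ℕ} [hp : Fact p.Prime] {m n : ℕ}

theorem norm_formVec_one_one_le_iff {E : Fin m → Fin n → ℝ} {z : (Fin m → ℚ) × (Fin n → ℚ)}
    {δ : ℝ} : ‖formVec 1 1 E z‖ ≤ δ ↔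
      ‖affForm E (castPair ℝ z)‖ ≤ δ ∧ ‖castVec ℝ z.2‖ ≤ δ := by
  rw [norm_formVec E zero_le_one zero_le_one, one_mul, one_mul, max_le_iff]

theorem affForm_eq_fst_sub {K : Type*} [NormedField K] (A : Fin m → Fin n → K)
    (v : (Fin m → K) × (Fin n → K)) : affForm A v = v.1 - -affForm A (0, v.2) := by
  funext a
  simp only [affForm_apply, Pi.sub_apply, Pi.neg_apply, Pi.zero_apply, add_zero]
  ring

theorem exists_card_norm_formVec_intPair_le (E : Fin m → Fin n → ℝ) {X : ℝ} (hX : 1 ≤ X) :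
    ∃ F : Finset ((Fin m → ℤ) × (Fin n → ℤ)),
      (∀ w ∈ F, ‖formVec 1 1 E (intPair w)‖ ≤ X) ∧ X ^ (m + n) ≤ F.card := by
  classical
  have hX0 : 0 ≤ X := zero_le_one.trans hX
  let S (x : Fin n → ℤ) : Finset (Fin m → ℤ) :=
    intCube (-affForm E (0, castVec ℝ (intVec x))) X
  have hswap : Function.Injective fun w : Σ _ : Fin n → ℤ, Fin m → ℤ => (w.2, w.1) := by
    rintro ⟨x, y⟩ ⟨x', y'⟩ h
    cases h
    rfl
  refine ⟨((intCube 0 X).sigma S).image fun w => (w.2, w.1),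
    Finset.forall_mem_image.2 fun w hw => ?_, ?_⟩
  · obtain ⟨hx, hy⟩ := Finset.mem_sigma.1 hw
    refine norm_formVec_one_one_le_iff.2 ⟨?_, (mem_intCube_zero hX0).1 hx⟩
    rw [affForm_eq_fst_sub]
    have hy' := (mem_intCube hX0).1 hy
    rw [← castVec_intVec] at hy'
    exact hy'
  · rw [Finset.card_image_of_injective _ hswap, Finset.card_sigma, Nat.cast_sum, add_comm m,
      pow_add]
    calc X ^ n * X ^ m ≤ (intCube (0 : Fin n → ℝ) X).card * X ^ m := by
          gcongr
          exact pow_le_card_intCube 0 hX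
      _ ≤ ∑ x ∈ intCube 0 X, ((S x).card : ℝ) := by
          rw [← nsmul_eq_mul]
          exact Finset.card_nsmul_le_sum _ _ _ fun x _ => pow_le_card_intCube _ hX

theorem exists_card_padicLattice_formVec_le [MeasurableSpace ℚ_[p]] [BorelSpace ℚ_[p]]
    {lam : Measure (Fin m → ℚ_[p])} {c C : ℝ} (h : IsAhlforsRegular lam m c C) {R R₀ ρ : ℝ} {k : ℕ}
    (hR : 2 ≤ R * (p : ℝ) ^ k) (hR₀ : 1 ≤ R₀) (hρ : 0 < ρ) (hρR : ρ ≤ R₀ * (p : ℝ) ^ k)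
    (E : Fin m → Fin n → ℝ) {A : Fin m → Fin n → ℚ_[p]} (hA : ‖A‖ ≤ R₀) :
    ∃ W : Finset ((Fin m → ℚ) × (Fin n → ℚ)),
      (∀ w ∈ W, w ∈ padicLattice A k hρ ∧ ‖formVec 1 1 E w‖ ≤ R) ∧
      (R * (p : ℝ) ^ k / 2) ^ (m + n) * (c * (ρ / 2) ^ m) ≤
        W.card * (C * (2 * (R₀ * (p : ℝ) ^ k)) ^ m) := by
  classical
  have hc := h.c_pos
  have hC := h.C_pos
  have hpk : (0 : ℝ) < (p : ℝ) ^ k := pow_pos (Nat.cast_pos.2 hp.1.pos) k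
  obtain ⟨F, hFE, hFcard⟩ := exists_card_norm_formVec_intPair_le (m := m) E (by linarith :
    1 ≤ R * (p : ℝ) ^ k / 2)
  have hF (w) (hw : w ∈ F) : ‖formVec 1 1 E (divPair p k w)‖ ≤ R / 2 := by
    rw [norm_formVec_divPair, div_le_iff₀ hpk, div_mul_eq_mul_div]
    exact hFE w hw
  let f (w : (Fin m → ℤ) × (Fin n → ℤ)) : Fin m → ℚ_[p] :=
    affForm A (castPair ℚ_[p] (divPair p k w))
  obtain ⟨w₀, hw₀, hcard⟩ := h.exists_card_filter_dist_le
    (Finset.card_pos.1 (Nat.cast_pos.1 (lt_of_lt_of_le (by positivity) hFcard)))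
    (f := f) (x := 0) (R := R₀ * (p : ℝ) ^ k)
    hρ (by positivity) fun w _ => mem_closedBall_zero_iff.2
      ((norm_affForm_divPair_le A k w).trans (by gcongr; exact max_le hA hR₀))
  refine ⟨(F.filter fun w => dist (f w) (f w₀) ≤ ρ).image fun w => divPair p k (w - w₀),
    Finset.forall_mem_image.2 fun w hw => ?_, ?_⟩
  · obtain ⟨hwF, hdist⟩ := Finset.mem_filter.1 hw
    refine ⟨mem_padicLattice.2 ⟨divPair_mem_sIntegerPairs k _, norm_castVec_divVec_le k _, ?_⟩, ?_⟩
    · rwa [map_sub, map_sub, map_sub, ← dist_eq_norm]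
    · rw [map_sub, map_sub]
      exact (norm_sub_le _ _).trans ((add_le_add (hF w hwF) (hF w₀ hw₀)).trans_eq (add_halves R))
  · have hinj : Function.Injective fun w => divPair p k (w - w₀) :=
      (divPair_injective k).comp sub_left_injective
    rw [Finset.card_image_of_injective _ hinj]
    calc (R * (p : ℝ) ^ k / 2) ^ (m + n) * (c * (ρ / 2) ^ m)
        ≤ F.card * (c * (ρ / 2) ^ m) := by gcongr
      _ ≤ _ := hcard
      _ ≤ _ := by gcongr; linarith

theorem inv_le_norm_castVec {x : Fin n → ℚ} (hx : ∀ j, IsZS p (x j)) (hx0 : x ≠ 0) {δ : ℝ}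
    (hδ : 0 < δ) (hxδ : ‖castVec ℝ x‖ ≤ δ) : δ⁻¹ ≤ ‖castVec ℚ_[p] x‖ := by
  obtain ⟨j, hj⟩ := Function.ne_iff.1 hx0
  refine le_trans ?_ (norm_le_pi_norm _ j)
  rw [inv_le_iff_one_le_mul₀' hδ]
  exact ((hx j).one_le_abs_mul_norm hj).trans
    (mul_le_mul_of_nonneg_right ((norm_le_pi_norm _ j).trans hxδ) (norm_nonneg _))

theorem snd_ne_zero_of_mem_padicLattice {A : Fin m → Fin n → ℚ_[p]} {k : ℕ} {ρ : ℝ} {hρ : 0 < ρ}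
    {E : Fin m → Fin n → ℝ} {z : (Fin m → ℚ) × (Fin n → ℚ)} {δ : ℝ} (hρ1 : ρ ≤ 1) (hδ : 0 < δ)
    (hδ1 : δ < 1) (hz : z ∈ padicLattice A k hρ) (hz0 : z ≠ 0) (hzδ : ‖formVec 1 1 E z‖ ≤ δ) :
    z.2 ≠ 0 := fun h0 => by
  obtain ⟨hzS, -, hzρ⟩ := mem_padicLattice.1 hz
  have hzδ' := (norm_formVec_one_one_le_iff.1 hzδ).1
  have haff {K : Type} [NormedField K] [CharZero K] (A : Fin m → Fin n → K) :
      affForm A (castPair K z) = castVec K z.1 := by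
    have hsnd : (castPair K z).2 = 0 := (congrArg (castVec K) h0).trans (map_zero _)
    rw [affForm_eq_fst_sub, hsnd, ← Prod.zero_eq_mk, map_zero, neg_zero, sub_zero]
    rfl
  rw [haff] at hzρ hzδ'
  exact ((inv_le_norm_castVec (mem_sIntegerPairs.1 hzS).1 (fun h1 => hz0 (Prod.ext h1 h0)) hδ
    hzδ').trans (hzρ.trans hρ1)).not_gt ((one_lt_inv₀ hδ).2 hδ1)

theorem exists_mem_intCube_of_mem_padicLattice {A : Fin m → Fin n → ℚ_[p]} {k l r : ℕ} {ρ : ℝ}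
    {hρ : 0 < ρ} {E : Fin m → Fin n → ℝ} {z : (Fin m → ℚ) × (Fin n → ℚ)} {δ : ℝ} (hρ1 : ρ ≤ 1)
    (hδ : 0 ≤ δ) (hA : ‖A‖ ≤ (p : ℝ) ^ r) (hz : z ∈ padicLattice A k hρ)
    (hl : ‖castVec ℚ_[p] z.2‖ = (p : ℝ) ^ l) (hzδ : ‖formVec 1 1 E z‖ ≤ δ) :
    ∃ y ∈ intCube ((p : ℝ) ^ (l + r) • -affForm E (0, castVec ℝ z.2)) ((p : ℝ) ^ (l + r) * δ),
      divVec p (l + r) y = z.1 := by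
  obtain ⟨hzS, -, hzρ⟩ := mem_padicLattice.1 hz
  have hp1 : (1 : ℝ) ≤ p := by exact_mod_cast hp.1.one_le
  refine exists_mem_intCube_divVec_eq (mem_sIntegerPairs.1 hzS).1 ?_ hδ ?_
  · refine (norm_fst_le_max_norm_affForm A (castPair ℚ_[p] z)).trans (max_le
      ((hzρ.trans hρ1).trans (one_le_pow₀ hp1)) ?_)
    rw [pow_add, mul_comm, ← hl]
    exact mul_le_mul_of_nonneg_left hA (norm_nonneg _)
  · exact (congrArg _ (affForm_eq_fst_sub E (castPair ℝ z))).symm.trans_le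
      (norm_formVec_one_one_le_iff.1 hzδ).1

theorem measure_padicLattice_short_le [MeasurableSpace ℚ_[p]]
    (ν : Measure (Fin m → Fin n → ℚ_[p])) {r k : ℕ} {D ρ δ : ℝ} (hD : 0 ≤ D)
    (hmeas : ∀ v : (Fin m → ℚ_[p]) × (Fin n → ℚ_[p]), v.2 ≠ 0 → ∀ ρ > 0,
      ν (closedBall 0 ((p : ℝ) ^ r) ∩ {A | ‖affForm A v‖ ≤ ρ}) ≤
        ENNReal.ofReal (D * (ρ / ‖v.2‖) ^ m))
    (hρ : 0 < ρ) (hρ1 : ρ ≤ 1) (hδ : 0 < δ) (hδ1 : δ < 1) (E : Fin m → Fin n → ℝ) :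
    ν (closedBall 0 ((p : ℝ) ^ r) ∩
        {A | ∃ z ∈ padicLattice A k hρ, z ≠ 0 ∧ ‖formVec 1 1 E z‖ ≤ δ}) ≤
      ENNReal.ofReal ((3 * ((p : ℝ) ^ k * δ)) ^ n * (D * (3 * δ * (p : ℝ) ^ r * ρ) ^ m)) := by
  classical
  let q (x : Fin n → ℤ) : Fin n → ℚ := divVec p k x
  let Q : Finset (Fin n → ℤ) := (intCube 0 ((p : ℝ) ^ k * δ)).erase 0
  have hQ (x) (hx : x ∈ Q) : δ⁻¹ ≤ ‖castVec ℚ_[p] (q x)‖ := by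
    obtain ⟨hx0, hx⟩ := Finset.mem_erase.1 hx
    refine inv_le_norm_castVec (isZS_divVec k x)
      ((map_ne_zero_iff _ (divVec_injective k)).2 hx0) hδ ?_
    rw [norm_castVec_divVec, div_le_iff₀' (pow_pos (Nat.cast_pos.2 hp.1.pos) k)]
    exact (mem_intCube_zero (by positivity)).1 hx
  have hδinv : 1 < δ⁻¹ := (one_lt_inv₀ hδ).2 hδ1
  choose! lev hlev using fun x (hx : x ∈ Q) => exists_norm_eq_prime_pow (hδinv.le.trans (hQ x hx))
  let S (x : Fin n → ℤ) : Finset (Fin m → ℤ) :=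
    intCube ((p : ℝ) ^ (lev x + r) • -affForm E (0, castVec ℝ (q x))) ((p : ℝ) ^ (lev x + r) * δ)
  have hS (x) (hx : x ∈ Q) : (S x).card ≤ (3 * δ * (p : ℝ) ^ r * ‖castVec ℚ_[p] (q x)‖) ^ m := by
    have hr1 : 1 ≤ (p : ℝ) ^ r := one_le_pow₀ (by exact_mod_cast hp.1.one_le)
    have hδq := (inv_le_iff_one_le_mul₀' hδ).1 (hQ x hx)
    refine (card_intCube_le _ (by positivity)).trans (pow_le_pow_left₀ (by positivity) ?_ m)
    rw [pow_add, ← hlev x hx]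
    nlinarith
  refine (measure_mono ?_).trans ((measure_exists_norm_affForm_le ν hD hρ hmeas Q
    (fun x => castVec ℚ_[p] (q x)) (fun x hx => norm_pos_iff.1 ((inv_pos.2 hδ).trans_le (hQ x hx)))
    S (fun x y => castVec ℚ_[p] (divVec p (lev x + r) y)) hS).trans (ENNReal.ofReal_le_ofReal ?_))
  · rintro A ⟨hA, z, hz, hz0, hzδ⟩
    obtain ⟨hzS, hzk, hzρ⟩ := mem_padicLattice.1 hz
    obtain ⟨x, hx, hxz⟩ := exists_mem_intCube_divVec_eq (mem_sIntegerPairs.1 hzS).2 hzk hδ.le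
      (c := 0) (by rw [sub_zero]; exact (norm_formVec_one_one_le_iff.1 hzδ).2)
    have hxQ : x ∈ Q := Finset.mem_erase.2 ⟨fun hx0 =>
      snd_ne_zero_of_mem_padicLattice hρ1 hδ hδ1 hz hz0 hzδ (by rw [← hxz, hx0, map_zero]),
      by rwa [smul_zero] at hx⟩
    obtain ⟨y, hy, hyz⟩ := exists_mem_intCube_of_mem_padicLattice hρ1 hδ.le
      (mem_closedBall_zero_iff.1 hA) hz (by rw [← hlev x hxQ, ← hxz]) hzδ
    refine ⟨hA, x, hxQ, y, by rwa [← hxz] at hy, ?_⟩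
    rw [hyz, show q x = z.2 from hxz]
    exact hzρ
  · exact mul_le_mul_of_nonneg_right (card_erase_zero_intCube_le (by positivity)) (by positivity)

end PadicLatticePoints

section PadicClass

open Set Metric

theorem exists_pow_eq_one_add_mul {a N : ℕ} (ha : a ≠ 0) (hN : N ≠ 0) (haN : a.Coprime N) (j : ℕ) :
    ∃ e ≥ j, ∃ c : ℕ, a ^ e = 1 + N * c := by
  refine ⟨N.totient * j, Nat.le_mul_of_pos_left _ (Nat.totient_pos.2 (Nat.pos_of_ne_zero hN)), ?_⟩
  have hmod : a ^ (N.totient * j) ≡ 1 [MOD N] := by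
    rw [pow_mul, ← one_pow j]
    exact (Nat.ModEq.pow_totient haN).pow j
  have hone := Nat.one_le_pow (N.totient * j) _ (Nat.pos_of_ne_zero ha)
  obtain ⟨c, hc⟩ := (Nat.modEq_iff_dvd' hone).1 hmod.symm
  exact ⟨c, by rw [← hc, Nat.add_sub_cancel' hone]⟩

variable {p : ℕ} [hp : Fact p.Prime] {m n : ℕ}

theorem exists_pow_nsmul_intPair_mem_padicLattice (A : Fin m → Fin n → ℚ_[p]) (k : ℕ) {ρ : ℝ}
    (hρ : 0 < ρ) (v : (Fin m → ℤ) × (Fin n → ℤ)) :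
    ∃ j, ∀ e ≥ j, p ^ e • intPair v ∈ padicLattice A k hρ := by
  have hp1 : (1 : ℝ) < p := mod_cast hp.1.one_lt
  have hnorm {l : ℕ} (x : Fin l → ℚ_[p]) (e : ℕ) : ‖p ^ e • x‖ = ‖x‖ / (p : ℝ) ^ e := by
    rw [← Nat.cast_smul_eq_nsmul ℚ_[p], norm_smul, Nat.cast_pow, norm_pow, Padic.norm_p, inv_pow,
      inv_mul_eq_div]
  have hint : ‖castVec ℚ_[p] (intVec v.2)‖ ≤ 1 :=
    (pi_norm_le_iff_of_nonneg zero_le_one).2 fun b => by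
      rw [castVec_intVec]
      exact Padic.norm_int_le_one _
  obtain ⟨j, hj⟩ := pow_unbounded_of_one_lt (‖affForm A (castPair ℚ_[p] (intPair v))‖ / ρ) hp1
  refine ⟨j, fun e he => mem_padicLattice.2
    ⟨nsmul_mem (intPair_mem_sIntegerPairs v) _, ?_, ?_⟩⟩
  · rw [Prod.smul_snd, map_nsmul, hnorm]
    exact (div_le_self (norm_nonneg _) (one_le_pow₀ hp1.le)).trans
      (hint.trans (one_le_pow₀ hp1.le))
  · rw [map_nsmul, map_nsmul, hnorm, div_le_comm₀ (by positivity) hρ]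
    exact hj.le.trans (pow_le_pow_right₀ hp1.le he)

theorem exists_mem_padicLattice_norm_apply_eq (A : Fin m → Fin n → ℚ_[p]) (b₀ : Fin n) (k : ℕ)
    {ρ : ℝ} (hρ : 0 < ρ) :
    ∃ u ∈ padicLattice A k hρ, ‖castVec ℚ_[p] u.2 b₀‖ = (p : ℝ) ^ k := by
  let q : Fin n → ℚ := divVec p k (Pi.single b₀ 1)
  choose r hr hrA using fun a => exists_isZS_norm_sub_le (-affForm A (0, castVec ℚ_[p] q) a) hρ
  refine ⟨(r, q), mem_padicLattice.2 ⟨mem_sIntegerPairs.2 ⟨hr, isZS_divVec k _⟩,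
    norm_castVec_divVec_le k _, ?_⟩, ?_⟩
  · rw [affForm_eq_fst_sub]
    refine (pi_norm_le_iff_of_nonneg hρ.le).2 fun a => ?_
    rw [← norm_neg, Pi.sub_apply, neg_sub]
    exact hrA a
  · change ‖((divVec p k (Pi.single b₀ 1) b₀ : ℚ) : ℚ_[p])‖ = _
    rw [divVec_apply, Pi.single_eq_same, norm_intCast_div_pow, Int.cast_one,
      norm_one, one_mul]

theorem exists_add_nsmul_mem_padicLattice {N : ℕ} (hN : N ≠ 0) (hNp : N.Coprime p)
    (v : (Fin m → ℤ) × (Fin n → ℤ)) (A : Fin m → Fin n → ℚ_[p]) (b₀ : Fin n) {k : ℕ} (hk : k ≠ 0)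
    {ρ : ℝ} (hρ : 0 < ρ) :
    ∃ u ∈ sIntegerPairs p m n, intPair v + N • u ∈ padicLattice A k hρ ∧
      ‖castVec ℚ_[p] (intPair v + N • u).2 b₀‖ = (p : ℝ) ^ k := by
  have hp1 : (1 : ℝ) < p := mod_cast hp.1.one_lt
  obtain ⟨j, hj⟩ := exists_pow_nsmul_intPair_mem_padicLattice A k hρ v
  obtain ⟨e, he, c, hc⟩ := exists_pow_eq_one_add_mul hp.1.ne_zero hN hNp.symm j
  obtain ⟨w, hw, hwk⟩ := exists_mem_padicLattice_norm_apply_eq A b₀ k hρ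
  have hz : intPair v + N • (c • intPair v + w) = p ^ e • intPair v + N • w := by
    rw [hc, add_smul, one_smul, smul_add, mul_smul, add_assoc]
  refine ⟨c • intPair v + w, add_mem (nsmul_mem (intPair_mem_sIntegerPairs v) c)
    (mem_padicLattice.1 hw).1, ?_, ?_⟩
  · rw [hz]
    exact add_mem (hj e he) (nsmul_mem hw N)
  · have hNw : ‖N • castVec ℚ_[p] w.2 b₀‖ = (p : ℝ) ^ k := by
      rw [nsmul_eq_mul, norm_mul, Padic.norm_natCast_eq_one_iff.2 hNp.symm, one_mul, hwk]
    have hv : ‖p ^ e • (v.2 b₀ : ℚ_[p])‖ < (p : ℝ) ^ k := by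
      rw [nsmul_eq_mul]
      exact_mod_cast (Padic.norm_int_le_one ((p ^ e : ℕ) * v.2 b₀)).trans_lt (one_lt_pow₀ hp1 hk)
    have hzb : castVec ℚ_[p] (p ^ e • intPair v + N • w).2 b₀ =
        p ^ e • (v.2 b₀ : ℚ_[p]) + N • castVec ℚ_[p] w.2 b₀ := by
      rw [Prod.snd_add, map_add, Prod.smul_snd, Prod.smul_snd, map_nsmul, map_nsmul,
        ← congrFun (castVec_intVec ℚ_[p] v.2) b₀]
      rfl
    rw [hz, hzb, Padic.add_eq_max_of_ne (hNw.symm ▸ hv.ne), hNw, max_eq_right hv.le]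

/-- The pairs `(P, q)` of `ℤ[1/p]`-vectors congruent to `v` modulo `N` whose real form `E q + P` and
real denominator `q` are bounded by one. -/
def boundedClass (P : ℕ) [NeZero P] (N : ℕ) (v : (Fin m → ℤ) × (Fin n → ℤ))
    (E : Fin m → Fin n → ℝ) : Set ((Fin m → ℚ) × (Fin n → ℚ)) :=
  {z ∈ congrClass P N (intPair v) | ‖formVec 1 1 E z‖ ≤ 1}

theorem exists_mem_boundedClass_of_lt_card {N : ℕ} (hN : N ≠ 0) (hNp : N.Coprime p)
    (v : (Fin m → ℤ) × (Fin n → ℤ)) (A : Fin m → Fin n → ℚ_[p]) (E : Fin m → Fin n → ℝ)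
    (b₀ : Fin n) {k : ℕ} (hk : k ≠ 0) {ρ δ R : ℝ} (hρ : 0 < ρ) (hδ : 0 < δ) (hR : 0 ≤ R)
    (hR1 : (p * N : ℕ) * ((m + n) * R) ≤ 1)
    (hmin : ∀ z ∈ padicLattice A k hρ, ‖formVec 1 1 E z‖ ≤ δ → z = 0)
    {W : Finset ((Fin m → ℚ) × (Fin n → ℚ))}
    (hW : ∀ w ∈ W, w ∈ padicLattice A k hρ ∧ ‖formVec 1 1 E w‖ ≤ R)
    (hcard : (2 * R / δ + 1) ^ (m + n - 1) < W.card) :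
    ∃ z ∈ boundedClass p N v E, z ∈ padicLattice A k hρ ∧
      ‖castVec ℚ_[p] z.2 b₀‖ = (p : ℝ) ^ k := by
  obtain ⟨w, hw, hwA, hwk⟩ := exists_add_nsmul_mem_padicLattice hN hNp v A b₀ hk hρ
  obtain ⟨u, hu, hle⟩ := exists_mem_norm_formVec_sub_le E one_ne_zero one_ne_zero hδ hR hmin hW
    hcard (intPair v + N • w) 0 (mul_ne_zero hp.1.ne_zero hN)
  obtain ⟨huS, huk, -⟩ := mem_padicLattice.1 hu
  rw [sub_zero] at hle
  refine ⟨intPair v + N • w + (p * N) • u, ⟨⟨w + p • u, add_mem hw (nsmul_mem huS p), ?_⟩,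
    hle.trans hR1⟩, add_mem hwA (nsmul_mem hu _), ?_⟩
  · rw [smul_add, ← mul_smul, mul_comm p, add_assoc]
  · have hub : ‖(p * N) • castVec ℚ_[p] u.2 b₀‖ < (p : ℝ) ^ k := by
      have hp1 : (1 : ℝ) < p := mod_cast hp.1.one_lt
      rw [nsmul_eq_mul, norm_mul, Nat.cast_mul, norm_mul, Padic.norm_p,
        Padic.norm_natCast_eq_one_iff.2 hNp.symm, mul_one, inv_mul_lt_iff₀ (by positivity)]
      exact ((norm_le_pi_norm _ b₀).trans huk).trans_lt (lt_mul_of_one_lt_left (by positivity) hp1)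
    rw [Prod.snd_add, map_add, Prod.smul_snd, map_nsmul, Pi.add_apply, Pi.smul_apply,
      Padic.add_eq_max_of_ne (hwk.symm ▸ hub.ne'), hwk, max_eq_left hub.le]

end PadicClass

section PadicUbiquity

open Set Metric Filter

variable {p : ℕ} [hp : Fact p.Prime] {m n : ℕ} [MeasurableSpace ℚ_[p]] [BorelSpace ℚ_[p]]

theorem exists_measure_padicLattice_short_le (ν : Measure (Fin m → Fin n → ℚ_[p]))
    [ν.IsAddHaarMeasure] (r : ℕ) :
    ∃ κ > 0, ∀ (k : ℕ) (ρ : ℝ) (hρ : 0 < ρ), ρ ≤ 1 → ∀ δ > 0, δ < 1 →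
      ∀ E : Fin m → Fin n → ℝ, ν (closedBall 0 ((p : ℝ) ^ r) ∩
          {A | ∃ z ∈ padicLattice A k hρ, z ≠ 0 ∧ ‖formVec 1 1 E z‖ ≤ δ}) ≤
        ENNReal.ofReal (κ * δ ^ (m + n) * (ρ ^ m * ((p : ℝ) ^ k) ^ n)) := by
  have hp0 : (0 : ℝ) < p := Nat.cast_pos.2 hp.1.pos
  obtain ⟨c, C, h⟩ := exists_isAhlforsRegular_padic (Measure.addHaar : Measure (Fin m → ℚ_[p]))
  obtain ⟨D, hD, hmeas⟩ := exists_measure_norm_affForm_le ν h (R := (p : ℝ) ^ r) (by positivity)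
  refine ⟨D * 3 ^ (m + n) * ((p : ℝ) ^ r) ^ m, by positivity, fun k ρ hρ hρ1 δ hδ hδ1 E =>
    (measure_padicLattice_short_le ν hD.le hmeas hρ hρ1 hδ hδ1 E).trans_eq ?_⟩
  congr 1
  simp only [mul_pow, pow_add]
  ring

theorem exists_le_card_padicLattice (m n r : ℕ) {R : ℝ} (hR : 0 < R) :
    ∃ ι > 0, ∀ (k : ℕ) (ρ : ℝ) (hρ : 0 < ρ), ρ ≤ 1 → 2 ≤ R * (p : ℝ) ^ k →
      ∀ (E : Fin m → Fin n → ℝ) (A : Fin m → Fin n → ℚ_[p]), ‖A‖ ≤ (p : ℝ) ^ r →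
        ∃ W : Finset ((Fin m → ℚ) × (Fin n → ℚ)),
          (∀ w ∈ W, w ∈ padicLattice A k hρ ∧ ‖formVec 1 1 E w‖ ≤ R) ∧
          ι * (ρ ^ m * ((p : ℝ) ^ k) ^ n) ≤ W.card := by
  have hp1 : (1 : ℝ) < p := mod_cast hp.1.one_lt
  obtain ⟨c, C, h⟩ := exists_isAhlforsRegular_padic (Measure.addHaar : Measure (Fin m → ℚ_[p]))
  have hc := h.c_pos
  have hC := h.C_pos
  refine ⟨(R / 2) ^ (m + n) * c / (C * (4 * (p : ℝ) ^ r) ^ m), by positivity,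
    fun k ρ hρ hρ1 hRk E A hA => ?_⟩
  have hr1 : 1 ≤ (p : ℝ) ^ r := one_le_pow₀ hp1.le
  obtain ⟨W, hW, hcard⟩ := exists_card_padicLattice_formVec_le h hRk hr1 hρ
    (hρ1.trans (one_le_mul_of_one_le_of_one_le hr1 (one_le_pow₀ hp1.le))) E hA
  refine ⟨W, hW, le_of_mul_le_mul_right (hcard.trans' (le_of_eq ?_))
    (by positivity : 0 < C * (2 * ((p : ℝ) ^ r * (p : ℝ) ^ k)) ^ m)⟩
  have hfour : (4 : ℝ) ^ m = 2 ^ m * 2 ^ m := by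
    rw [← mul_pow]
    norm_num
  simp only [mul_pow, div_pow, hfour, pow_add (_ : ℝ) m n]
  field_simp

theorem exists_pow_div_lt {κ ι ε : ℝ} (hκ : 0 < κ) (hι : 0 < ι) (hε : 0 < ε) {d : ℕ}
    (hd : d ≠ 0) :
    ∃ δ > 0, δ < 1 ∧ (3 / δ) ^ (d - 1) < ι * (ε / (κ * δ ^ d)) := by
  obtain ⟨d, rfl⟩ := Nat.exists_eq_add_one_of_ne_zero hd
  obtain ⟨δ, hδ, hδlt⟩ := exists_between (by positivity : 0 < min 1 (ι * ε / (κ * 3 ^ d)))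
  obtain ⟨hδ1, hδε⟩ := lt_min_iff.1 hδlt
  refine ⟨δ, hδ, hδ1, ?_⟩
  rw [lt_div_iff₀ (by positivity)] at hδε
  rw [Nat.add_sub_cancel, div_pow, mul_div_assoc', div_lt_div_iff₀ (by positivity) (by positivity)]
  calc 3 ^ d * (κ * δ ^ (d + 1)) = δ * (κ * 3 ^ d) * δ ^ d := by ring
    _ < ι * ε * δ ^ d := mul_lt_mul_of_pos_right hδε (by positivity)

theorem exists_eventually_measure_padicLattice_boundedClass_le
    (ν : Measure (Fin m → Fin n → ℚ_[p])) [ν.IsAddHaarMeasure] {N : ℕ} (hN : N ≠ 0)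
    (hNp : N.Coprime p) (v : (Fin m → ℤ) × (Fin n → ℤ)) (E : Fin m → Fin n → ℝ) (b₀ : Fin n)
    (hm : m ≠ 0) (r : ℕ) {ε : ℝ} (hε : 0 < ε) :
    ∃ Q > 0, ∀ᶠ k in atTop, ∀ (ρ : ℝ) (hρ : 0 < ρ), ρ ^ m * ((p : ℝ) ^ k) ^ n = Q →
      ν (closedBall 0 ((p : ℝ) ^ r) ∩ {A | ¬∃ z ∈ boundedClass p N v E, z ∈ padicLattice A k hρ ∧
        ‖castVec ℚ_[p] z.2 b₀‖ = (p : ℝ) ^ k}) ≤ ENNReal.ofReal ε := by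
  have hp1 : (1 : ℝ) < p := mod_cast hp.1.one_lt
  have hn : n ≠ 0 := b₀.pos.ne'
  have hpN : (1 : ℝ) ≤ (p * N : ℕ) :=
    mod_cast Nat.one_le_iff_ne_zero.2 (mul_ne_zero hp.1.ne_zero hN)
  have hmn : (1 : ℝ) ≤ m + n := mod_cast (by omega : 1 ≤ m + n)
  let R : ℝ := ((p * N : ℕ) * (m + n))⁻¹
  have hR : 0 < R := by positivity
  have hR1 : R ≤ 1 := inv_le_one_of_one_le₀ (one_le_mul_of_one_le_of_one_le hpN hmn)
  obtain ⟨κ, hκ, hshort⟩ := exists_measure_padicLattice_short_le ν r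
  obtain ⟨ι, hι, hcount⟩ := exists_le_card_padicLattice (p := p) m n r hR
  obtain ⟨δ, hδ, hδ1, hlt⟩ := exists_pow_div_lt hκ hι hε (by omega : m + n ≠ 0)
  let Q : ℝ := ε / (κ * δ ^ (m + n))
  refine ⟨Q, by positivity, ?_⟩
  filter_upwards [eventually_ne_atTop 0, tendsto_atTop.1 (tendsto_pow_atTop_atTop_of_one_lt hp1)
    (max Q (2 / R))] with k hk hkQR ρ hρ hρQ
  obtain ⟨hkQ, hkR⟩ := max_le_iff.1 hkQR
  rw [div_le_iff₀' hR] at hkR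
  have hρ1 : ρ ≤ 1 := by
    refine (pow_le_one_iff_of_nonneg hρ.le hm).1 (le_of_mul_le_mul_right ?_
      (by positivity : 0 < ((p : ℝ) ^ k) ^ n))
    rw [hρQ, one_mul]
    exact hkQ.trans (le_self_pow₀ (one_le_pow₀ hp1.le) hn)
  have hmeas := hshort k ρ hρ hρ1 δ hδ hδ1 E
  rw [hρQ, mul_div_cancel₀ ε (by positivity)] at hmeas
  refine le_trans (measure_mono ?_) hmeas
  rintro A ⟨hA, hbad⟩
  refine ⟨hA, by_contra fun hmin => hbad ?_⟩
  simp only [mem_ofPred_eq, not_exists, not_and, not_imp_not] at hmin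
  obtain ⟨W, hW, hcard⟩ := hcount k ρ hρ hρ1 hkR E A (mem_closedBall_zero_iff.1 hA)
  have hRδ : 2 * R / δ + 1 ≤ 3 / δ := by
    rw [div_add_one hδ.ne']
    gcongr
    linarith
  refine exists_mem_boundedClass_of_lt_card hN hNp v A E b₀ hk hρ hδ hR.le ?_ hmin hW ?_
  · rw [← mul_assoc]
    exact (mul_inv_cancel₀ (by positivity)).le
  · calc (2 * R / δ + 1) ^ (m + n - 1) ≤ (3 / δ) ^ (m + n - 1) := by gcongr
      _ < ι * Q := hlt
      _ ≤ W.card := hρQ ▸ hcard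

theorem isUbiquitous_boundedClass (hm : m ≠ 0) (ν : Measure (Fin m → Fin n → ℚ_[p]))
    [ν.IsAddHaarMeasure] {N : ℕ} (hN : N ≠ 0) (hNp : N.Coprime p)
    (v : (Fin m → ℤ) × (Fin n → ℤ)) (E : Fin m → Fin n → ℝ) (b₀ : Fin n) {j : ℕ} (hj : j ≠ 0) :
    IsUbiquitous ν (fun z : boundedClass p N v E => castPair ℚ_[p] z.1) b₀ ((p : ℝ) ^ j) := by
  intro R _ ε hε
  have hp1 : (1 : ℝ) < p := mod_cast hp.1.one_lt
  obtain ⟨r, hr⟩ := pow_unbounded_of_one_lt R hp1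
  obtain ⟨Q, hQ, hbad⟩ :=
    exists_eventually_measure_padicLattice_boundedClass_le ν hN hNp v E b₀ hm r hε
  let η : ℝ := Q ^ (m : ℝ)⁻¹
  have hηm : η ^ m = Q := Real.rpow_inv_natCast_pow hQ.le hm
  refine ⟨max 1 η, le_max_left _ _, ?_⟩
  have hjk : Tendsto (fun k => j * k) atTop atTop :=
    tendsto_atTop_mono (fun k => Nat.le_mul_of_pos_left k (Nat.pos_of_ne_zero hj)) tendsto_id
  filter_upwards [hjk.eventually hbad] with k hk
  rw [← pow_mul]
  let σ : ℝ := (((p : ℝ) ^ (j * k)) ^ n) ^ (m : ℝ)⁻¹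
  have hσm : σ ^ m = ((p : ℝ) ^ (j * k)) ^ n := Real.rpow_inv_natCast_pow (by positivity) hm
  have hρ : 0 < η / σ := by positivity
  refine le_trans (measure_mono (inter_subset_inter (closedBall_subset_closedBall hr.le) ?_))
    (hk (η / σ) hρ ?_)
  · rintro A hA ⟨z, hz, hzA, hzb⟩
    refine hA ?_
    obtain ⟨-, hzk, hzρ⟩ := mem_padicLattice.1 hzA
    refine ⟨⟨z, hz⟩, hzρ.trans (by gcongr; exact le_max_right _ _), ?_, hzk⟩
    exact (div_le_self (by positivity) (le_max_left _ _)).trans_eq hzb.symm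
  · rw [div_pow, hηm, hσm, div_mul_cancel₀ _ (by positivity)]

theorem ae_infinite_approxSols_boundedClass (hm : m ≠ 0) (hn : n ≠ 0)
    (ν : Measure (Fin m → Fin n → ℚ_[p])) [ν.IsAddHaarMeasure] (μ : Measure (Fin n → ℚ_[p]))
    [μ.IsAddHaarMeasure] {ψ : ℝ → ℝ} (hψ : ∀ t, 0 < ψ t) (hanti : AntitoneOn ψ (Ioi 0))
    (hone : ∀ t ≤ 1, ψ t = 1) (hint : ∫⁻ y, ENNReal.ofReal (ψ (‖y‖ ^ n)) ∂μ = ⊤)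
    {N : ℕ} (hN : N ≠ 0) (hNp : N.Coprime p) (v : (Fin m → ℤ) × (Fin n → ℤ))
    (E : Fin m → Fin n → ℝ) :
    ∀ᵐ A ∂ν, (approxSols (fun z : boundedClass p N v E => castPair ℚ_[p] z.1) ψ A).Infinite := by
  have hp1 : (1 : ℝ) < p := mod_cast hp.1.one_lt
  obtain ⟨c, C, h⟩ := exists_isAhlforsRegular_padic (Measure.addHaar : Measure (Fin m → ℚ_[p]))
  obtain ⟨c', C', h'⟩ := exists_isAhlforsRegular_padic μ
  obtain ⟨τ₀, hτ₀, hub⟩ := IsUbiquitous.ae_infinite_approxSols hm ν h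
  obtain ⟨j, hj⟩ := pow_unbounded_of_one_lt τ₀ hp1
  have hj0 : j ≠ 0 := by
    rintro rfl
    rw [pow_zero] at hj
    exact hj.not_gt hτ₀
  exact hub _ hj.le
    (isUbiquitous_boundedClass hm ν hN hNp v E ⟨0, Nat.pos_of_ne_zero hn⟩ hj0) hψ hanti
    fun hs => (h'.lintegral_norm_pow_lt_top hψ hanti hone (hτ₀.trans hj) hs).ne hint

end PadicUbiquity

section Divergence

theorem antitone_of_antitoneOn_Ioi {ψ : ℝ → ℝ} (hanti : AntitoneOn ψ (Set.Ioi 0))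
    (hone : ∀ t ≤ 1, ψ t = 1) : Antitone ψ := by
  intro t₁ t₂ h
  rcases le_total t₂ 1 with h₂ | h₂
  · rw [hone t₁ (h.trans h₂), hone t₂ h₂]
  rcases lt_or_ge 0 t₁ with h₁ | h₁
  · exact hanti h₁ (h₁.trans_le h) h
  · rw [hone t₁ (h₁.trans zero_le_one), ← hone 1 le_rfl]
    exact hanti (Set.mem_Ioi.2 one_pos) (Set.mem_Ioi.2 (one_pos.trans_le h₂)) h₂

theorem integrable_comp_norm_pow {X : Type*} [NormedAddCommGroup X] [MeasurableSpace X]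
    [OpensMeasurableSpace X] {μ : Measure X} {ψ : ℝ → ℝ} (hψ : ∀ t, 0 < ψ t) (hanti : Antitone ψ)
    {n : ℕ} (hint : ∫⁻ y, ENNReal.ofReal (ψ (‖y‖ ^ n)) ∂μ ≠ ⊤) :
    Integrable (fun y => ψ (‖y‖ ^ n)) μ :=
  (lintegral_ofReal_ne_top_iff_integrable
    (hanti.measurable.comp (measurable_norm.pow_const n)).aestronglyMeasurable
    (Filter.Eventually.of_forall fun _ => (hψ _).le)).1 hint

theorem exists_lintegral_eq_top_of_lintegral_mul_prod_eq_top {X ι : Type*} {Y : ι → Type*}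
    [Fintype ι] [MeasurableSpace X] [∀ i, MeasurableSpace (Y i)] [NormedAddCommGroup X]
    [∀ i, NormedAddCommGroup (Y i)] [OpensMeasurableSpace X] [∀ i, OpensMeasurableSpace (Y i)]
    (μ₀ : Measure X) (μ : ∀ i, Measure (Y i)) [∀ i, SigmaFinite (μ i)]
    {ψ₀ : ℝ → ℝ} {ψ : ι → ℝ → ℝ} (hψ₀ : ∀ t, 0 < ψ₀ t) (hanti₀ : Antitone ψ₀)
    (hψ : ∀ i t, 0 < ψ i t) (hanti : ∀ i, Antitone (ψ i)) {n : ℕ}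
    (hint : ∫⁻ y : X × ∀ i, Y i, ENNReal.ofReal (ψ₀ (‖y.1‖ ^ n) * ∏ i, ψ i (‖y.2 i‖ ^ n))
      ∂μ₀.prod (Measure.pi μ) = ⊤) :
    (∫⁻ y, ENNReal.ofReal (ψ₀ (‖y‖ ^ n)) ∂μ₀ = ⊤) ∨
      ∃ i, ∫⁻ y, ENNReal.ofReal (ψ i (‖y‖ ^ n)) ∂μ i = ⊤ := by
  by_contra! h
  have hint₀ := integrable_comp_norm_pow hψ₀ hanti₀ h.1
  have hintP := fun i => integrable_comp_norm_pow (hψ i) (hanti i) (h.2 i)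
  exact (hint₀.mul_prod (Integrable.fintype_prod_dep hintP)).lintegral_lt_top.ne hint

end Divergence

section RationalTranslation

variable {m n : ℕ}

/-- The image in `Mat_{m,n}(K)` of a rational matrix. -/
noncomputable def castMat (K : Type*) [DivisionRing K] [CharZero K] (B : Fin m → Fin n → ℚ) :
    Fin m → Fin n → K :=
  fun a => castVec K (B a)

/-- The map `(P, q) ↦ (P - B q, q)`, which turns solutions for the matrix `A - B` into solutions
for `A`. -/
def shear (B : Fin m → Fin n → ℚ) :
    (Fin m → ℚ) × (Fin n → ℚ) →+ (Fin m → ℚ) × (Fin n → ℚ) :=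
  ((affForm (-B)).prod (LinearMap.snd ℚ _ _)).toAddMonoidHom

theorem shear_shear_neg (B : Fin m → Fin n → ℚ) (z : (Fin m → ℚ) × (Fin n → ℚ)) :
    shear B (shear (-B) z) = z := by
  refine Prod.ext (funext fun a => ?_) rfl
  change ∑ b, (-B) a b * z.2 b + (∑ b, (- -B) a b * z.2 b + z.1 a) = z.1 a
  simp only [neg_neg, Pi.neg_apply, neg_mul, Finset.sum_neg_distrib, neg_add_cancel_left]

theorem shear_injective (B : Fin m → Fin n → ℚ) : Function.Injective (shear B) :=
  Function.LeftInverse.injective fun z => by simpa only [neg_neg] using shear_shear_neg (-B) z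

theorem affForm_castPair_shear {K : Type*} [NormedField K] [CharZero K] (A : Fin m → Fin n → K)
    (B : Fin m → Fin n → ℚ) (z : (Fin m → ℚ) × (Fin n → ℚ)) :
    affForm A (castPair K (shear B z)) = affForm (A - castMat K B) (castPair K z) := by
  funext a
  change ∑ b, A a b * (z.2 b : K) + ((∑ b, (-B) a b * z.2 b + z.1 a : ℚ) : K) =
    ∑ b, (A a b - (B a b : K)) * (z.2 b : K) + (z.1 a : K)
  push_cast
  simp only [Pi.neg_apply, Rat.cast_neg, neg_mul, sub_mul, Finset.sum_neg_distrib,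
    Finset.sum_sub_distrib]
  ring

theorem shear_mem_approxSols_iff {K : Type*} [NormedField K] [CharZero K] {ψ : ℝ → ℝ}
    {A : Fin m → Fin n → K} {B : Fin m → Fin n → ℚ} {z : (Fin m → ℚ) × (Fin n → ℚ)} :
    shear B z ∈ approxSols (castPair K) ψ A ↔ z ∈ approxSols (castPair K) ψ (A - castMat K B) :=
  iff_of_eq (congrArg (fun x => ‖x‖ ^ m ≤ _) (affForm_castPair_shear A B z))

variable {P N : ℕ} [NeZero P] {B : Fin m → Fin n → ℚ} {v : (Fin m → ℚ) × (Fin n → ℚ)}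

theorem shear_mem_sIntegerPairs (hB : ∀ a b, IsZS P (B a b)) (hv : v ∈ sIntegerPairs P m n) :
    shear B v ∈ sIntegerPairs P m n := by
  refine ⟨fun a => ?_, hv.2⟩
  change (∑ b, (-B) a b * v.2 b) + v.1 a ∈ sIntegers P
  exact add_mem (sum_mem fun b _ => mul_mem (neg_mem (hB a b)) (hv.2 b)) (hv.1 a)

theorem exists_forall_shear_mem_congrClass (hNP : N.Coprime P) (hB : ∀ a b, IsZS P (B a b))
    (hv : v ∈ sIntegerPairs P m n) :
    ∃ u : (Fin m → ℤ) × (Fin n → ℤ),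
      ∀ z ∈ congrClass P N (intPair u), shear B z ∈ congrClass P N v := by
  obtain ⟨u, y, hy, hu⟩ := exists_intPair_add_nsmul_eq hNP
    (shear_mem_sIntegerPairs (B := -B) (fun a b => (sIntegers P).neg_mem (hB a b)) hv)
  refine ⟨u, ?_⟩
  rintro _ ⟨w, hw, rfl⟩
  refine ⟨shear B (w - y), shear_mem_sIntegerPairs hB (sub_mem hw hy), ?_⟩
  rw [← shear_shear_neg B v, ← hu, ← map_nsmul, ← map_add, smul_sub, add_add_sub_cancel]

end RationalTranslation

section AllPlaces

variable {m n s : ℕ} {p : Fin s → ℕ} [hp : ∀ i, Fact (p i).Prime]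

instance neZero_prod_primes : NeZero (∏ i, p i) :=
  ⟨Finset.prod_ne_zero_iff.2 fun i _ => (hp i).1.ne_zero⟩

theorem exists_isZS_norm_sub_le_one (hpinj : Function.Injective p) (x : ∀ i, ℚ_[p i]) :
    ∃ r : ℚ, IsZS (∏ i, p i) r ∧ ∀ i, ‖x i - r‖ ≤ 1 := by
  choose r hr hrx using fun i => exists_isZS_norm_sub_le (x i) one_pos
  refine ⟨∑ i, r i, (sIntegers _).sum_mem fun i _ =>
    (hr i).of_dvd (Finset.dvd_prod_of_mem p (Finset.mem_univ i)), fun i => ?_⟩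
  have hsplit : x i - ((∑ j, r j : ℚ) : ℚ_[p i]) =
      (x i - r i) + -∑ j ∈ Finset.univ.erase i, (r j : ℚ_[p i]) := by
    rw [Rat.cast_sum, ← Finset.add_sum_erase _ _ (Finset.mem_univ i), sub_add_eq_sub_sub,
      sub_eq_add_neg]
  rw [hsplit]
  refine (Padic.nonarchimedean _ _).trans (max_le (hrx i) ?_)
  rw [norm_neg]
  refine IsUltrametricDist.norm_sum_le_of_forall_le_of_nonneg zero_le_one fun j hj =>
    (hr j).norm_le_one ((Nat.coprime_primes (hp j).1 (hp i).1).2 ?_)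
  exact hpinj.ne (Finset.ne_of_mem_erase hj)

/-- The diagonal embedding of a rational matrix into `Mat_{m,n}(ℚ_S)`. -/
noncomputable def diagMat (p : Fin s → ℕ) [∀ i, Fact (p i).Prime] (B : Fin m → Fin n → ℚ) :
    (Fin m → Fin n → ℝ) × ∀ i, Fin m → Fin n → ℚ_[p i] :=
  (castMat ℝ B, fun i => castMat ℚ_[p i] B)

theorem exists_isZS_norm_sub_diagMat_le_one (hpinj : Function.Injective p)
    (A : (Fin m → Fin n → ℝ) × ∀ i, Fin m → Fin n → ℚ_[p i]) :
    ∃ B : Fin m → Fin n → ℚ, (∀ a b, IsZS (∏ i, p i) (B a b)) ∧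
      ∀ i, ‖(A - diagMat p B).2 i‖ ≤ 1 := by
  choose B hB hAB using fun a b => exists_isZS_norm_sub_le_one hpinj fun i => A.2 i a b
  exact ⟨B, hB, fun i => (pi_norm_le_iff_of_nonneg zero_le_one).2 fun a =>
    (pi_norm_le_iff_of_nonneg zero_le_one).2 fun b => hAB a b i⟩

/-- The pairs `(P, q)` of `S`-integral vectors congruent to `v` modulo `N` which satisfy the
inequality `‖A q + P‖ ^ m ≤ ψ (‖q‖ ^ n)` at every place of `S`. -/
def solSet (ψR : ℝ → ℝ) (ψP : Fin s → ℝ → ℝ) (N : ℕ) (v : (Fin m → ℚ) × (Fin n → ℚ))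
    (A : (Fin m → Fin n → ℝ) × ∀ i, Fin m → Fin n → ℚ_[p i]) : Set ((Fin m → ℚ) × (Fin n → ℚ)) :=
  {z ∈ congrClass (∏ i, p i) N v | z ∈ approxSols (castPair ℝ) ψR A.1 ∧
    ∀ i, z ∈ approxSols (castPair ℚ_[p i]) (ψP i) (A.2 i)}

variable {ψR : ℝ → ℝ} {ψP : Fin s → ℝ → ℝ} {N : ℕ}

theorem isZS_and_norm_le_of_mem_solSet (hN : N ≠ 0) {v z : (Fin m → ℚ) × (Fin n → ℚ)}
    (hv : v ∈ sIntegerPairs (∏ i, p i) m n)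
    {A : (Fin m → Fin n → ℝ) × ∀ i, Fin m → Fin n → ℚ_[p i]} (hz : z ∈ solSet ψR ψP N v A) :
    (∀ a, IsZS (∏ i, p i) (z.1 a)) ∧ (∀ b, IsZS (∏ i, p i) (z.2 b)) ∧
      (∀ a, IsZS (∏ i, p i) ((z.1 a - v.1 a) / N)) ∧
      (∀ b, IsZS (∏ i, p i) ((z.2 b - v.2 b) / N)) ∧
      ‖fun a => (∑ b, A.1 a b * (z.2 b : ℝ)) + (z.1 a : ℝ)‖ ^ m ≤ ψR (‖ratR z.2‖ ^ n) ∧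
      ∀ i, ‖fun a => (∑ b, A.2 i a b * (z.2 b : ℚ_[p i])) + (z.1 a : ℚ_[p i])‖ ^ m
        ≤ ψP i (‖ratP p i z.2‖ ^ n) := by
  obtain ⟨hclass, hR, hP⟩ := hz
  obtain ⟨hz₁, hz₂⟩ := mem_sIntegerPairs_of_mem_congrClass hv hclass
  obtain ⟨hv₁, hv₂⟩ := forall_isZS_sub_div_of_mem_congrClass hN hclass
  exact ⟨hz₁, hz₂, hv₁, hv₂, hR, hP⟩

theorem exists_infinite_solSet_of_sub_diagMat (hNS : N.Coprime (∏ i, p i))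
    {v : (Fin m → ℚ) × (Fin n → ℚ)} (hv : v ∈ sIntegerPairs (∏ i, p i) m n)
    {B : Fin m → Fin n → ℚ} (hB : ∀ a b, IsZS (∏ i, p i) (B a b)) :
    ∃ u : (Fin m → ℤ) × (Fin n → ℤ),
      ∀ A : (Fin m → Fin n → ℝ) × ∀ i, Fin m → Fin n → ℚ_[p i],
        (solSet ψR ψP N (intPair u) (A - diagMat p B)).Infinite →
          (solSet ψR ψP N v A).Infinite := by
  obtain ⟨u, hu⟩ := exists_forall_shear_mem_congrClass hNS hB hv
  refine ⟨u, fun A => Set.infinite_of_injOn_mapsTo (shear_injective B).injOn fun z hz => ?_⟩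
  exact ⟨hu z hz.1, shear_mem_approxSols_iff.2 hz.2.1,
    fun i => shear_mem_approxSols_iff.2 (hz.2.2 i)⟩

theorem mem_approxSols_of_norm_le_one {K I : Type*} [NormedField K] [IsUltrametricDist K]
    {ψ : ℝ → ℝ} (hone : ∀ t ≤ 1, ψ t = 1) {A : Fin m → Fin n → K} (hA : ‖A‖ ≤ 1)
    {v : I → (Fin m → K) × (Fin n → K)} {i : I} (hv : ‖v i‖ ≤ 1) : i ∈ approxSols v ψ A := by
  have hq : ‖(v i).2‖ ≤ 1 := (norm_snd_le _).trans hv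
  refine (pow_le_one₀ (norm_nonneg _) ((norm_affForm_le_max A (v i)).trans (max_le ?_ ?_))).trans_eq
    (hone _ (pow_le_one₀ (norm_nonneg _) hq)).symm
  · exact mul_le_one₀ hA (norm_nonneg _) hq
  · exact (norm_fst_le _).trans hv

theorem norm_castPair_le_one {P l : ℕ} [NeZero P] [Fact l.Prime] (hPl : P.Coprime l)
    {z : (Fin m → ℚ) × (Fin n → ℚ)} (hz : z ∈ sIntegerPairs P m n) : ‖castPair ℚ_[l] z‖ ≤ 1 :=
  norm_prod_le_iff.2
    ⟨(pi_norm_le_iff_of_nonneg zero_le_one).2 fun a => (hz.1 a).norm_le_one hPl,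
      (pi_norm_le_iff_of_nonneg zero_le_one).2 fun b => (hz.2 b).norm_le_one hPl⟩

theorem mem_approxSols_of_mem_congrClass {P l : ℕ} [NeZero P] [Fact l.Prime] (hPl : P.Coprime l)
    {ψ : ℝ → ℝ} (hone : ∀ t ≤ 1, ψ t = 1) {A : Fin m → Fin n → ℚ_[l]} (hA : ‖A‖ ≤ 1)
    {u : (Fin m → ℤ) × (Fin n → ℤ)} {z : (Fin m → ℚ) × (Fin n → ℚ)}
    (hz : z ∈ congrClass P N (intPair u)) : z ∈ approxSols (castPair ℚ_[l]) ψ A :=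
  mem_approxSols_of_norm_le_one hone hA (norm_castPair_le_one hPl
    (mem_sIntegerPairs_of_mem_congrClass (intPair_mem_sIntegerPairs u) hz))

variable [∀ i, MeasurableSpace ℚ_[p i]]

theorem ae_infinite_solSet_of_real (hm : m ≠ 0) (hn : n ≠ 0) (hψ : ∀ t, 0 < ψR t)
    (hanti : AntitoneOn ψR (Set.Ioi 0)) (honeR : ∀ t ≤ 1, ψR t = 1)
    (honeP : ∀ i, ∀ t ≤ 1, ψP i t = 1) (hN : N ≠ 0)
    (hint : ∫⁻ y : Fin n → ℝ, ENNReal.ofReal (ψR (‖y‖ ^ n)) = ⊤)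
    (ν : ∀ i, Measure (Fin m → Fin n → ℚ_[p i]))
    (u : (Fin m → ℤ) × (Fin n → ℤ)) :
    ∀ᵐ A ∂((volume : Measure (Fin m → Fin n → ℝ)).prod (Measure.pi ν)),
      (∀ i, ‖A.2 i‖ ≤ 1) → (solSet ψR ψP N (intPair u) A).Infinite := by
  have hinj : Function.Injective fun w : (Fin m → ℤ) × (Fin n → ℤ) => intPair (u + N • w) :=
    intPair_injective.comp ((add_right_injective u).comp (smul_right_injective _ hN))
  filter_upwards [Measure.quasiMeasurePreserving_fst.ae
    (ae_infinite_approxSols_intPair hm hn hψ hanti honeR hint hN u)] with A hA hA1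
  refine Set.infinite_of_injOn_mapsTo hinj.injOn (fun w hw => ?_) hA
  have hclass : intPair (u + N • w) ∈ congrClass 1 N (intPair u) :=
    ⟨intPair w, intPair_mem_sIntegerPairs w, by rw [map_add, map_nsmul]⟩
  exact ⟨congrClass_mono (one_dvd _) hclass, hw, fun i =>
    mem_approxSols_of_mem_congrClass (Nat.coprime_one_left _) (honeP i) (hA1 i) hclass⟩

variable [∀ i, BorelSpace ℚ_[p i]]

theorem measurableSet_setOf_infinite_boundedClass (i : Fin s) (ψ : ℝ → ℝ)
    (u : (Fin m → ℤ) × (Fin n → ℤ)) :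
    MeasurableSet {A : (Fin m → Fin n → ℝ) × ∀ i, Fin m → Fin n → ℚ_[p i] |
      (boundedClass (p i) N u A.1 ∩ approxSols (castPair ℚ_[p i]) ψ (A.2 i)).Infinite} := by
  refine measurableSet_setOf_infinite (B := fun z =>
    {A : (Fin m → Fin n → ℝ) × ∀ i, Fin m → Fin n → ℚ_[p i] | z ∈ boundedClass (p i) N u A.1 ∧
      z ∈ approxSols (castPair ℚ_[p i]) ψ (A.2 i)}) fun z => ?_
  simp only [boundedClass, Set.mem_ofPred_eq, norm_formVec_one_one_le_iff]
  refine ((MeasurableSet.const _).inter (MeasurableSet.inter ?_ (MeasurableSet.const _))).inter ?_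
  · exact measurable_fst (measurableSet_norm_affForm_le (castPair ℝ z) 1)
  · have hi : Measurable fun A : (Fin m → Fin n → ℝ) × ∀ i, Fin m → Fin n → ℚ_[p i] => A.2 i :=
      (measurable_pi_apply i).comp measurable_snd
    exact hi (measurableSet_setOf_mem_approxSols z ψ)

theorem ae_infinite_solSet_of_padic (hm : m ≠ 0) (hn : n ≠ 0) (hpinj : Function.Injective p)
    {i : Fin s} (hψ : ∀ t, 0 < ψP i t) (hanti : AntitoneOn (ψP i) (Set.Ioi 0))
    (honeR : ∀ t ≤ 1, ψR t = 1) (honeP : ∀ i, ∀ t ≤ 1, ψP i t = 1) (hN : N ≠ 0)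
    (hNp : N.Coprime (p i)) (μ : Measure (Fin n → ℚ_[p i])) [μ.IsAddHaarMeasure]
    (hint : ∫⁻ y, ENNReal.ofReal (ψP i (‖y‖ ^ n)) ∂μ = ⊤)
    (ν : ∀ i, Measure (Fin m → Fin n → ℚ_[p i])) [∀ i, (ν i).IsAddHaarMeasure]
    (u : (Fin m → ℤ) × (Fin n → ℤ)) :
    ∀ᵐ A ∂((volume : Measure (Fin m → Fin n → ℝ)).prod (Measure.pi ν)),
      (∀ i, ‖A.2 i‖ ≤ 1) → (solSet ψR ψP N (intPair u) A).Infinite := by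
  have hinf : ∀ᵐ A ∂((volume : Measure (Fin m → Fin n → ℝ)).prod (Measure.pi ν)),
      (boundedClass (p i) N u A.1 ∩ approxSols (castPair ℚ_[p i]) (ψP i) (A.2 i)).Infinite := by
    refine (Measure.ae_prod_iff_ae_ae (measurableSet_setOf_infinite_boundedClass i _ u)).2
      (Filter.Eventually.of_forall fun E => (Measure.quasiMeasurePreserving_eval ν i).ae
        (p := fun A => (boundedClass (p i) N u E ∩
          approxSols (castPair ℚ_[p i]) (ψP i) A).Infinite) ?_)
    filter_upwards [ae_infinite_approxSols_boundedClass hm hn (ν i) μ hψ hanti (honeP i) hint hN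
      hNp u E] with A hA
    exact Set.infinite_of_injOn_mapsTo Subtype.val_injective.injOn (fun z hz => ⟨z.2, hz⟩) hA
  filter_upwards [hinf] with A hA hA1
  refine hA.mono ?_
  rintro z ⟨⟨hclass, hz⟩, hzi⟩
  obtain ⟨hform, hq⟩ := norm_formVec_one_one_le_iff.1 hz
  refine ⟨congrClass_mono (Finset.dvd_prod_of_mem p (Finset.mem_univ i)) hclass,
    (pow_le_one₀ (norm_nonneg _) hform).trans_eq (honeR _ (pow_le_one₀ (norm_nonneg _) hq)).symm,
    fun j => ?_⟩
  rcases eq_or_ne i j with rfl | hij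
  · exact hzi
  · exact mem_approxSols_of_mem_congrClass ((Nat.coprime_primes (hp i).1 (hp j).1).2
      (hpinj.ne hij)) (honeP j) (hA1 j) hclass

theorem ae_infinite_solSet_of_forall_intPair (hpinj : Function.Injective p)
    (hNS : N.Coprime (∏ i, p i)) (ν : ∀ i, Measure (Fin m → Fin n → ℚ_[p i]))
    [∀ i, (ν i).IsAddHaarMeasure]
    (h : ∀ u : (Fin m → ℤ) × (Fin n → ℤ),
      ∀ᵐ A ∂((volume : Measure (Fin m → Fin n → ℝ)).prod (Measure.pi ν)),
        (∀ i, ‖A.2 i‖ ≤ 1) → (solSet ψR ψP N (intPair u) A).Infinite)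
    {v : (Fin m → ℚ) × (Fin n → ℚ)} (hv : v ∈ sIntegerPairs (∏ i, p i) m n) :
    ∀ᵐ A ∂((volume : Measure (Fin m → Fin n → ℝ)).prod (Measure.pi ν)),
      (solSet ψR ψP N v A).Infinite := by
  have hall : ∀ᵐ A ∂((volume : Measure (Fin m → Fin n → ℝ)).prod (Measure.pi ν)),
      ∀ (u : (Fin m → ℤ) × (Fin n → ℤ)) (B : Fin m → Fin n → ℚ),
        (∀ i, ‖(A - diagMat p B).2 i‖ ≤ 1) →
          (solSet ψR ψP N (intPair u) (A - diagMat p B)).Infinite := by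
    refine ae_all_iff.2 fun u => ae_all_iff.2 fun B => ?_
    have hpres := (measurePreserving_sub_right volume (diagMat p B).1).prod
      (measurePreserving_pi ν ν fun i => measurePreserving_sub_right (ν i) ((diagMat p B).2 i))
    exact hpres.quasiMeasurePreserving.ae (h u)
  filter_upwards [hall] with A hA
  obtain ⟨B, hB, hAB⟩ := exists_isZS_norm_sub_diagMat_le_one hpinj A
  obtain ⟨u, hu⟩ := exists_infinite_solSet_of_sub_diagMat hNS hv hB
  exact hu A (hA u B hAB)

theorem s_arithmetic_khintchine_groshev_divergence_general (hm : m ≠ 0) (hn : n ≠ 0)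
    (hpinj : Function.Injective p) (hψR : ∀ t, 0 < ψR t) (hantiR : AntitoneOn ψR (Set.Ioi 0))
    (honeR : ∀ t ≤ 1, ψR t = 1) (hψP : ∀ i t, 0 < ψP i t)
    (hantiP : ∀ i, AntitoneOn (ψP i) (Set.Ioi 0)) (honeP : ∀ i, ∀ t ≤ 1, ψP i t = 1) (hN : N ≠ 0)
    (hNS : N.Coprime (∏ i, p i)) {v : (Fin m → ℚ) × (Fin n → ℚ)}
    (hv : v ∈ sIntegerPairs (∏ i, p i) m n)
    (μ : ∀ i, Measure (Fin n → ℚ_[p i])) [∀ i, (μ i).IsAddHaarMeasure]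
    (ν : ∀ i, Measure (Fin m → Fin n → ℚ_[p i])) [∀ i, (ν i).IsAddHaarMeasure]
    (hint : ∫⁻ y : (Fin n → ℝ) × (∀ i, Fin n → ℚ_[p i]),
      ENNReal.ofReal (ψR (‖y.1‖ ^ n) * ∏ i, ψP i (‖y.2 i‖ ^ n))
      ∂((volume : Measure (Fin n → ℝ)).prod (Measure.pi μ)) = ⊤) :
    ∀ᵐ A ∂((volume : Measure (Fin m → Fin n → ℝ)).prod (Measure.pi ν)),
      (solSet ψR ψP N v A).Infinite := by
  refine ae_infinite_solSet_of_forall_intPair hpinj hNS ν (fun u => ?_) hv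
  rcases exists_lintegral_eq_top_of_lintegral_mul_prod_eq_top volume μ hψR
    (antitone_of_antitoneOn_Ioi hantiR honeR) hψP
    (fun i => antitone_of_antitoneOn_Ioi (hantiP i) (honeP i)) hint with h | ⟨i, h⟩
  · exact ae_infinite_solSet_of_real hm hn hψR hantiR honeR honeP hN h ν u
  · exact ae_infinite_solSet_of_padic hm hn hpinj (hψP i) (hantiP i) honeR honeP hN
      (hNS.of_dvd_right (Finset.dvd_prod_of_mem p (Finset.mem_univ i))) (μ i) h ν u

end AllPlaces

/-- **Divergence case of the S-arithmetic Khintchine–Groshev theorem with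
congruence conditions.** Assume `d = m + n ≥ 2`. If
`∫_{ℚ_S^n} ∏_{p ∈ S} ψ_p(‖y‖_p^n) dy = ∞`, then for Haar-almost every
`A ∈ Mat_{m,n}(ℚ_S)` there are infinitely many `(p⃗, q⃗) ∈ ℤ_S^m × ℤ_S^n` with
`(p⃗, q⃗) ≡ (v_m, v_n) mod N` and `‖A_p q⃗ + p⃗‖_p^m ≤ ψ_p(‖q⃗‖_p^n)` for all `p ∈ S`. -/
theorem s_arithmetic_khintchine_groshev_divergence
    (m n : ℕ) (hm : 0 < m) (hn : 0 < n) (hd : 2 ≤ m + n)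
    (s : ℕ) (p : Fin s → ℕ) [∀ i, Fact (p i).Prime] (hpinj : Function.Injective p)
    [∀ i, MeasurableSpace ℚ_[p i]] [∀ i, BorelSpace ℚ_[p i]]
    (ψ : ApproxFamily m n s p)
    (N : ℕ) (hN : 0 < N) (hNS : Nat.Coprime N (∏ i, p i))
    (vm : Fin m → ℚ) (hvm : ∀ a, IsZS (∏ i, p i) (vm a))
    (vn : Fin n → ℚ) (hvn : ∀ b, IsZS (∏ i, p i) (vn b))
    -- Haar measure on `ℚ_S^n`, normalized so that `ℤ_p^n` has measure one at each
    -- finite place: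
    (μ : ∀ i, Measure (Fin n → ℚ_[p i])) [∀ i, (μ i).IsAddHaarMeasure]
    (hμ : ∀ i, μ i {y | ∀ j, ‖y j‖ ≤ 1} = 1)
    -- Haar measure on `Mat_{m,n}(ℚ_S)`, normalized likewise:
    (ν : ∀ i, Measure (Fin m → Fin n → ℚ_[p i])) [∀ i, (ν i).IsAddHaarMeasure]
    (hν : ∀ i, ν i {A | ∀ a b, ‖A a b‖ ≤ 1} = 1)
    -- divergence of the integral `∫_{ℚ_S^n} ∏_{p ∈ S} ψ_p(‖y‖_p^n) dy`:
    (hint : ∫⁻ y : (Fin n → ℝ) × (∀ i, Fin n → ℚ_[p i]),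
        ENNReal.ofReal (ψ.psiR (‖y.1‖ ^ n) * ∏ i, ψ.psiP i (‖y.2 i‖ ^ n))
        ∂((volume : Measure (Fin n → ℝ)).prod (Measure.pi μ)) = ⊤) :
    ∀ᵐ A ∂((volume : Measure (Fin m → Fin n → ℝ)).prod (Measure.pi ν)),
      {pq : (Fin m → ℚ) × (Fin n → ℚ) |
        (∀ a, IsZS (∏ i, p i) (pq.1 a)) ∧ (∀ b, IsZS (∏ i, p i) (pq.2 b)) ∧
        (∀ a, IsZS (∏ i, p i) ((pq.1 a - vm a) / N)) ∧
        (∀ b, IsZS (∏ i, p i) ((pq.2 b - vn b) / N)) ∧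
        ‖fun a => (∑ b, A.1 a b * (pq.2 b : ℝ)) + (pq.1 a : ℝ)‖ ^ m
          ≤ ψ.psiR (‖ratR pq.2‖ ^ n) ∧
        ∀ i, ‖fun a => (∑ b, A.2 i a b * ((pq.2 b : ℚ) : ℚ_[p i])) + ((pq.1 a : ℚ) : ℚ_[p i])‖ ^ m
          ≤ ψ.psiP i (‖ratP p i pq.2‖ ^ n)}.Infinite := by
  filter_upwards [s_arithmetic_khintchine_groshev_divergence_general hm.ne' hn.ne' hpinj ψ.posR
    (fun _ h _ _ hle => ψ.antiR h hle) (fun _ => @ψ.oneR _) ψ.posP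
    (fun i _ h _ _ hle => ψ.antiP i h hle) (fun i _ => @ψ.oneP i _) hN.ne' hNS
    (v := (vm, vn)) ⟨hvm, hvn⟩ μ ν hint] with A hA
  exact hA.mono fun _ => isZS_and_norm_le_of_mem_solSet hN.ne' ⟨hvm, hvn⟩
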